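/- Let p be a prime with p ≡ 1 (mod 40) and p ≡ 2 (mod 3). Then m_I(PSL(2,p)) = 3 and m(PSL(2,p)) = 3, where PSL(2,p) is the quotient of the special linear group SL(2, 𝔽_p) of 2×2 matrices of determinant 1 over the field with p elements by its center. -/

import Mathlib

/-!
The group `SL₂(p)` acts by conjugation on the three-dimensional space of traceless matrices, which
carries the invariant form `D X Y = -tr (X Y)`. A noncentral element has an axis, the traceless part
of its matrix. Everything is done in `SL₂(p)` with subgroups containing `-1`. The congruences on `p`
say that `-1`, `2`, `5` are squares, that elements of order five are diagonalisable, and that `-3` is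
not a square (`exists_consts`).

*Subgroups.* A proper subgroup containing `-1` fixes a line of traceless matrices (Borel subgroups
and normalisers of tori) or has the order and the traces of a binary tetrahedral, octahedral or
icosahedral group (`dickson`). With a unipotent element this follows from the generation of `SL₂(p)`
by two opposite transvections; without one, the centralizers of noncentral elements partition them,
and the resulting class equation has the classical solutions.

*`m ≤ 3`.* In a minimal generating set with at least four elements, four of them with the subgroups
`H i` generated by all elements but one form a `Quad`. At most two of the `H i` fix a line
(`three_red`), and in a small `H i` an element of order greater than three is impossible, so all four
elements have order two or three in `PSL₂(p)`. Any two or three of them lie in a proper subgroup, so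
the inner products of their axes lie in a finite list of elements of `ℤ[√2, (1 + √5)/2]`, with
conditions on each triple. Four vectors in dimension three have a singular Gram matrix. A finite
computation in that ring (`check0`, …, `check3`, evaluated by the kernel) shows that whenever the Gram
determinant vanishes, one of the four elements is visibly in the group generated by the other three;
nonzero values stay nonzero modulo `p`, because their norms have only prime factors below `41`. This
contradicts independence (`Quad.no_quad`). Three explicit involutions give `m ≥ 3`.

*`m_I ≤ 3`.* A set generates invariably if no proper subgroup meets the conjugacy classes of all its
elements. The maximal candidates fall into four families: stabilisers of split or singular lines,
stabilisers of nonsplit lines, binary tetrahedral or octahedral groups, binary icosahedral groups.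
Within a family, the unions of conjugates form a chain (`Cl.nested`), so a minimal set has at most one
element per family. If all four families occurred, the element omitted by the icosahedral one would be
both split and nonsplit, or of order at most two in `PSL₂(p)`, hence not omitted (`no_inv_quad`).

*`m_I ≥ 3`.* Take elements of orders three, four and five in `PSL₂(p)`. The pairs `(3, 4)`, `(3, 5)`,
`(4, 5)` lie, up to conjugacy, in an octahedral group, an icosahedral group and a Borel subgroup. No
small group contains elements of orders four and five, and no stabiliser of a line contains both an
element of order three, which is nonsplit, and one of order four, which is split.
-/

/-- A subset `S` invariably generates `G` if for every choice of conjugators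
(one for each element), the conjugated set generates `G`. -/
def InvGen {G : Type*} [Group G] (S : Set G) : Prop :=
  ∀ σ : G → G, Subgroup.closure ((fun g => (σ g)⁻¹ * g * σ g) '' S) = ⊤

/-- `S` is a minimal invariable generating set of `G`. -/
def MinInvGen {G : Type*} [Group G] (S : Set G) : Prop :=
  InvGen S ∧ ∀ T : Set G, T ⊂ S → ¬ InvGen T

/-- `S` is a minimal generating set of `G`. -/
def MinGen {G : Type*} [Group G] (S : Set G) : Prop :=
  Subgroup.closure S = ⊤ ∧ ∀ T : Set G, T ⊂ S → Subgroup.closure T ≠ ⊤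

/-- `m(G)`: largest cardinality of a minimal generating set of `G`. -/
noncomputable def mGen (G : Type*) [Group G] : ℕ :=
  sSup {n : ℕ | ∃ S : Set G, MinGen S ∧ S.ncard = n}

/-- `m_I(G)`: largest cardinality of a minimal invariable generating set of `G`. -/
noncomputable def mInv (G : Type*) [Group G] : ℕ :=
  sSup {n : ℕ | ∃ S : Set G, MinInvGen S ∧ S.ncard = n}

/-- `d_I(G)`: smallest cardinality of a minimal invariable generating set of `G`. -/
noncomputable def dInv (G : Type*) [Group G] : ℕ :=
  sInf {n : ℕ | ∃ S : Set G, MinInvGen S ∧ S.ncard = n}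

/-- The union of all conjugates of a subgroup `M`, as a set. -/
def conjUnion {G : Type*} [Group G] (M : Subgroup G) : Set G :=
  ⋃ g : G, (fun m => g⁻¹ * m * g) '' (M : Set G)

open Matrix
namespace PSLGen
set_option linter.unusedSectionVars false

/-! ### Matrices acting on lines of traceless matrices -/

section Field
variable {F : Type*} [Field F]

/-- Two by two matrices. -/
abbrev Mat (F : Type*) := Matrix (Fin 2) (Fin 2) F
/-- The group `SL₂`. -/
abbrev SL (F : Type*) [CommRing F] := Matrix.SpecialLinearGroup (Fin 2) F

/-- Conjugation by the invertible matrix `A` maps the line spanned by `X` to itself. -/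
def Fixes (A X : Mat F) : Prop := ∃ c : F, A * X = c • (X * A)

theorem ext2 {F : Type*} {A B : Mat F} (h00 : A 0 0 = B 0 0) (h01 : A 0 1 = B 0 1) (h10 : A 1 0 = B 1 0)
    (h11 : A 1 1 = B 1 1) : A = B := by
  ext i j; fin_cases i <;> fin_cases j <;> assumption

theorem cayley (A : Mat F) : A * A = A.trace • A - A.det • 1 := by
  apply ext2 <;> simp [Matrix.mul_apply, Fin.sum_univ_two, trace_fin_two, det_fin_two] <;> ring

theorem anticomm (A X : Mat F) (hX : X.trace = 0) :
    A * X + X * A = A.trace • X + (A * X).trace • (1 : Mat F) := by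
  have h : X 1 1 = - X 0 0 := by rw [trace_fin_two] at hX; linear_combination hX
  apply ext2 <;> simp [Matrix.mul_apply, Fin.sum_univ_two, trace_fin_two, h] <;> ring

theorem det_sq_zero {X : Mat F} (hX : X.trace = 0) : X * X = (- X.det) • (1 : Mat F) := by
  rw [cayley, hX]; simp

theorem smul_one_inj {a b : F} (h : a • (1 : Mat F) = b • 1) : a = b := by
  have := congrFun (congrFun h 0) 0
  simpa using this

theorem smul_one_eq_zero {a : F} (h : a • (1 : Mat F) = 0) : a = 0 := by
  have := congrFun (congrFun h 0) 0
  simpa using this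

/-- Scalar matrices. -/
def Scal (A : Mat F) : Prop := ∃ a : F, A = a • (1 : Mat F)

theorem commute_span {A X : Mat F} (hA : ¬ Scal A) (h : A * X = X * A) :
    ∃ a b : F, X = a • (1 : Mat F) + b • A := by
  have e := fun i j => congrFun (congrFun h i) j
  simp only [Matrix.mul_apply, Fin.sum_univ_two] at e
  have e00 := e 0 0
  have e01 := e 0 1
  have e10 := e 1 0
  by_cases hb : A 0 1 = 0
  · by_cases hc : A 1 0 = 0
    · have hd : A 0 0 - A 1 1 ≠ 0 := by
        intro h0
        apply hA
        refine ⟨A 0 0, ext2 ?_ ?_ ?_ ?_⟩ <;> simp [hb, hc]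
        linear_combination -h0
      have x01 : X 0 1 = 0 := by
        apply mul_left_cancel₀ hd; rw [hb] at e01; linear_combination e01
      have x10 : X 1 0 = 0 := by
        apply mul_left_cancel₀ hd; rw [hc] at e10; linear_combination -e10
      refine ⟨X 0 0 - (X 0 0 - X 1 1) / (A 0 0 - A 1 1) * A 0 0,
        (X 0 0 - X 1 1) / (A 0 0 - A 1 1), ext2 ?_ ?_ ?_ ?_⟩ <;> simp [hb, hc, x01, x10]
      field_simp
      ring
    · refine ⟨X 0 0 - X 1 0 / A 1 0 * A 0 0, X 1 0 / A 1 0, ext2 ?_ ?_ ?_ ?_⟩ <;> simp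
      · field_simp; linear_combination -e00
      · field_simp
      · field_simp; linear_combination -e10
  · refine ⟨X 0 0 - X 0 1 / A 0 1 * A 0 0, X 0 1 / A 0 1, ext2 ?_ ?_ ?_ ?_⟩ <;> simp
    · field_simp
    · field_simp; linear_combination e00
    · field_simp; linear_combination e01

theorem commute_trans {A B C : Mat F} (hB : ¬ Scal B) (h1 : A * B = B * A) (h2 : B * C = C * B) :
    A * C = C * A := by
  obtain ⟨a, b, rfl⟩ := commute_span hB h1.symm
  obtain ⟨c, d, rfl⟩ := commute_span hB h2
  simp only [add_mul, mul_add, smul_mul_assoc, mul_smul_comm, one_mul, mul_one]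
  module

theorem trace_comm_zero {A X : Mat F} {c : F} (h : A * X = c • (X * A)) (hc : c ≠ 1) :
    (A * X).trace = 0 := by
  have : (A * X).trace = c * (A * X).trace := by
    conv_lhs => rw [h]
    rw [trace_smul, trace_mul_comm X A, smul_eq_mul]
  have h2 : (1 - c) * (A * X).trace = 0 := by linear_combination this
  rcases mul_eq_zero.1 h2 with h3 | h3
  · exact absurd (by linear_combination -h3) hc
  · exact h3

/-- The lines fixed by a noncentral element of nonzero trace. -/
theorem fix_cases [NeZero (2 : F)] {A X : Mat F} (hA : ¬ Scal A) (hX0 : X ≠ 0) (hX : X.trace = 0)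
    (ht : A.trace ≠ 0) (h : Fixes A X) :
    (∃ b : F, X = b • ((2 : F) • A - A.trace • (1 : Mat F))) ∨
    (X.det = 0 ∧ ∃ k : F, k ≠ 0 ∧ k * k = A.trace ^ 2 - 4 * A.det ∧
      ((2 : F) • A - A.trace • (1 : Mat F)) * X = k • X) := by
  obtain ⟨c, hc⟩ := h
  by_cases h1 : c = 1
  · left
    rw [h1, one_smul] at hc
    obtain ⟨a, b, e⟩ := commute_span hA hc
    have h2 : (2 : F) ≠ 0 := two_ne_zero
    refine ⟨b / 2, ?_⟩
    have : 2 * a + b * A.trace = 0 := by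
      rw [e] at hX; simp at hX; linear_combination hX
    have ha : a = - (b / 2) * A.trace := by field_simp; linear_combination this
    rw [e, ha, smul_sub, smul_smul, smul_smul, add_comm, div_mul_cancel₀ _ h2]
    rw [neg_mul, neg_smul, sub_eq_add_neg]
  · right
    have tr0 := trace_comm_zero hc h1
    have e := anticomm A X hX
    rw [tr0, zero_smul, add_zero, hc] at e
    have e2 : (c + 1) • (X * A) = A.trace • X := by rw [← e, add_smul, one_smul]
    have hc1 : c + 1 ≠ 0 := by
      intro h0
      rw [h0, zero_smul] at e2
      rcases smul_eq_zero.1 e2.symm with h | h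
      · exact ht h
      · exact hX0 h
    have e3 : X * A = (A.trace / (c + 1)) • X := by
      rw [div_eq_inv_mul, ← smul_smul, ← e2, smul_smul, inv_mul_cancel₀ hc1, one_smul]
    have e4 : A * X = (c * (A.trace / (c + 1))) • X := by rw [hc, e3, smul_smul]
    have hdet : X.det = 0 := by
      by_contra hd
      apply hA
      refine ⟨A.trace / (c + 1), ?_⟩
      have hX2 := det_sq_zero hX
      have : X * (X * A) = X * ((A.trace / (c + 1)) • X) := by rw [e3]
      rw [← Matrix.mul_assoc, Matrix.mul_smul, hX2, smul_mul_assoc, smul_comm, one_mul] at this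
      exact smul_right_injective _ (neg_ne_zero.2 hd) this
    have e5 : ((2 : F) • A - A.trace • (1 : Mat F)) * X =
        (A.trace * (c - 1) / (c + 1)) • X := by
      rw [sub_mul, smul_mul_assoc, smul_mul_assoc, one_mul, e4, smul_smul, ← sub_smul]
      congr 1
      field_simp
      ring
    refine ⟨hdet, _, ?_, ?_, e5⟩
    · exact div_ne_zero (mul_ne_zero ht (sub_ne_zero.2 h1)) hc1
    · have e6 : ((2 : F) • A - A.trace • (1 : Mat F)) * ((2 : F) • A - A.trace • (1 : Mat F)) =
          (A.trace ^ 2 - 4 * A.det) • (1 : Mat F) := by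
        apply ext2 <;> simp [Matrix.mul_apply, Fin.sum_univ_two, trace_fin_two, det_fin_two] <;> ring
      have e7 : (((2 : F) • A - A.trace • (1 : Mat F)) *
          ((2 : F) • A - A.trace • (1 : Mat F))) * X = (A.trace ^ 2 - 4 * A.det) • X := by
        rw [e6, smul_mul_assoc, one_mul]
      rw [Matrix.mul_assoc, e5, mul_smul_comm, e5, smul_smul] at e7
      by_contra hne
      have := sub_eq_zero.2 e7
      rw [← sub_smul] at this
      rcases smul_eq_zero.1 this with h | h
      · exact hne (by linear_combination h)
      · exact hX0 h

/-- Lines fixed by a half-turn. -/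
theorem fix_inv {A X : Mat F} (hA : A.trace = 0) (hd : A.det = 1) (hX : X.trace = 0)
    (h : Fixes A X) : (A * X).trace = 0 ∨ ∃ b : F, X = b • A := by
  obtain ⟨c, hc⟩ := h
  by_cases h0 : (A * X).trace = 0
  · exact Or.inl h0
  right
  have h1 : c = 1 := by
    by_contra h1
    exact h0 (trace_comm_zero hc h1)
  rw [h1, one_smul] at hc
  have e := anticomm A X hX
  rw [hA, zero_smul, zero_add, hc] at e
  have hA2 : A * A = -1 := by rw [det_sq_zero hA, hd]; simp
  have e2 : (2 : F) • X = (-(A * X).trace) • A := by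
    have : (X * A + X * A) * A = ((A * X).trace • (1 : Mat F)) * A := by rw [hc, e]
    rw [add_mul, Matrix.mul_assoc, hA2, smul_mul_assoc, one_mul] at this
    rw [neg_smul, ← this]
    simp [two_smul]
  by_cases h2 : (2 : F) = 0
  · rw [h2, zero_smul] at e2
    have hA0 : A ≠ 0 := by rintro rfl; simp at hd
    rcases smul_eq_zero.1 e2.symm with h | h
    · exact absurd (neg_eq_zero.1 h) h0
    · exact absurd h hA0
  · refine ⟨(2 : F)⁻¹ * (-(A * X).trace), ?_⟩
    rw [← smul_smul, ← e2, smul_smul, inv_mul_cancel₀ h2, one_smul]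

theorem fixes_of_perp {A X : Mat F} (hA : A.trace = 0) (hX : X.trace = 0)
    (h : (A * X).trace = 0) : Fixes A X := by
  refine ⟨-1, ?_⟩
  have e := anticomm A X hX
  rw [hA, h, zero_smul, zero_smul, zero_add] at e
  rw [neg_one_smul]; exact eq_neg_of_add_eq_zero_left e

theorem fixes_smul {A X : Mat F} (b : F) (h : Fixes A X) : Fixes A (b • X) := by
  obtain ⟨c, hc⟩ := h
  refine ⟨c, ?_⟩
  rw [mul_smul_comm, hc, smul_mul_assoc, smul_comm]

theorem fixes_self (A : Mat F) : Fixes A A := ⟨1, by rw [one_smul]⟩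

theorem fixes_comm {A X : Mat F} (h : A * X = X * A) : Fixes A X := ⟨1, by rw [one_smul, h]⟩

/-- The matrix of an element of `SL₂`. -/
def mat (A : SL F) : Mat F := A.1

theorem mat_mul (A B : SL F) : mat (A * B) = mat A * mat B := rfl
theorem mat_one : mat (1 : SL F) = 1 := rfl
theorem mat_neg (A : SL F) : mat (-A) = - mat A := rfl
theorem mat_det (A : SL F) : (mat A).det = 1 := A.2
/-- The element of `SL₂` with a given matrix. -/
def mk (A : Mat F) (h : A.det = 1) : SL F := ⟨A, h⟩

theorem mat_mk (A : Mat F) (h : A.det = 1) : mat (mk A h) = A := rfl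
theorem mat_inj {A B : SL F} (h : mat A = mat B) : A = B := Subtype.ext h
theorem mat_inv_mul (A : SL F) : mat A⁻¹ * mat A = 1 := by
  rw [← mat_mul, inv_mul_cancel, mat_one]
theorem mat_mul_inv (A : SL F) : mat A * mat A⁻¹ = 1 := by
  rw [← mat_mul, mul_inv_cancel, mat_one]

/-- The subgroup of `SL₂` stabilising the line spanned by `X`. -/
def Stab (X : Mat F) : Subgroup (SL F) where
  carrier := {A | Fixes (mat A) X}
  one_mem' := ⟨1, by simp [mat_one]⟩
  mul_mem' := by
    rintro A B ⟨c, hc⟩ ⟨d, hd⟩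
    refine ⟨c * d, ?_⟩
    rw [mat_mul, Matrix.mul_assoc, hd, mul_smul_comm, ← Matrix.mul_assoc, hc, smul_mul_assoc, smul_smul,
      Matrix.mul_assoc, mul_comm]
  inv_mem' := by
    rintro A ⟨c, hc⟩
    have h1 := mat_inv_mul A
    have h2 := mat_mul_inv A
    have e : X * mat A⁻¹ = c • (mat A⁻¹ * X) := by
      have : mat A⁻¹ * (mat A * X) * mat A⁻¹ = mat A⁻¹ * (c • (X * mat A)) * mat A⁻¹ := by rw [hc]
      rw [← Matrix.mul_assoc, h1, one_mul, mul_smul_comm, smul_mul_assoc, Matrix.mul_assoc,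
        Matrix.mul_assoc, h2, mul_one] at this
      exact this
    by_cases h0 : c = 0
    · rw [h0, zero_smul] at hc
      have : X = 0 := by rw [← one_mul X, ← h1, Matrix.mul_assoc, hc, mul_zero]
      exact ⟨1, by simp [this]⟩
    · refine ⟨c⁻¹, ?_⟩
      rw [e, smul_smul, inv_mul_cancel₀ h0, one_smul]

theorem mem_Stab {X : Mat F} {A : SL F} : A ∈ Stab X ↔ Fixes (mat A) X := Iff.rfl

/-- A subgroup of `SL₂` is reducible if it stabilises a line of traceless matrices. -/
def Red (H : Subgroup (SL F)) : Prop := ∃ X : Mat F, X ≠ 0 ∧ X.trace = 0 ∧ H ≤ Stab X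

theorem Red.mono {H K : Subgroup (SL F)} (h : Red K) (hHK : H ≤ K) : Red H := by
  obtain ⟨X, h0, ht, h⟩ := h
  exact ⟨X, h0, ht, hHK.trans h⟩

theorem not_red_top [NeZero (2 : F)] : ¬ Red (⊤ : Subgroup (SL F)) := by
  rintro ⟨X, h0, ht, h⟩
  have h2 : (2 : F) ≠ 0 := two_ne_zero
  obtain ⟨k, hk⟩ := mem_Stab.1 (h (Subgroup.mem_top (mk !![(1 : F), 1; 0, 1] (by simp))))
  obtain ⟨l, hl⟩ := mem_Stab.1 (h (Subgroup.mem_top (mk !![(1 : F), 0; 1, 1] (by simp))))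
  have e := fun i j => congrFun (congrFun hk i) j
  have e' := fun i j => congrFun (congrFun hl i) j
  simp only [Matrix.smul_apply, Matrix.mul_apply, Fin.sum_univ_two, Matrix.smul_apply, mat_mk, smul_eq_mul] at e e'
  have a1 := e 0 0
  have a2 := e 0 1
  have a3 := e 1 0
  have a4 := e 1 1
  have b1 := e' 0 0
  have b2 := e' 0 1
  have b3 := e' 1 0
  have b4 := e' 1 1
  rw [trace_fin_two] at ht
  have hd : X 1 1 = - X 0 0 := by linear_combination ht
  simp [hd] at a1 a2 a3 a4 b1 b2 b3 b4
  have c0 : X 1 0 = 0 := by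
    by_contra hc
    have : k = 1 := by
      apply mul_right_cancel₀ hc; linear_combination -a3
    subst this
    exact hc (by linear_combination a1)
  have b0 : X 0 1 = 0 := by
    by_contra hc
    have : l = 1 := by
      apply mul_right_cancel₀ hc; linear_combination -b2
    subst this
    exact hc (by linear_combination -b1)
  have a0 : X 0 0 = 0 := by
    by_contra ha
    have : k = 1 := by
      apply mul_right_cancel₀ ha; rw [c0] at a1; linear_combination -a1
    subst this
    exact mul_ne_zero h2 ha (by linear_combination -a2)
  apply h0
  apply ext2 <;> simp [a0, b0, c0, hd]

theorem Stab_ne_top [NeZero (2 : F)] {X : Mat F} (h0 : X ≠ 0) (ht : X.trace = 0) :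
    Stab X ≠ ⊤ := fun h => not_red_top ⟨X, h0, ht, h.ge⟩

theorem neg_one_mem_Stab (X : Mat F) : (-1 : SL F) ∈ Stab X := by
  rw [mem_Stab]
  exact ⟨1, by simp [mat_neg, mat_one]⟩

end Field

/-! ### Unipotent elements -/

section Unipotent
variable {F : Type*} [Field F]

/-- The nilpotent matrix with kernel and image spanned by `(a, b)`. -/
def nilp (a b : F) : Mat F := !![-(a * b), a ^ 2; -b ^ 2, a * b]

theorem nilp_form {X : Mat F} (ht : X.trace = 0) (hd : X.det = 0) :
    ∃ a b s : F, (a ≠ 0 ∨ b ≠ 0) ∧ X = s • nilp a b := by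
  obtain ⟨v, hv, h⟩ := Matrix.exists_mulVec_eq_zero_iff.2 hd
  have e0 := congrFun h 0
  have e1 := congrFun h 1
  simp [Matrix.mulVec, dotProduct, Fin.sum_univ_two] at e0 e1
  rw [trace_fin_two] at ht
  have hx : X 1 1 = - X 0 0 := by linear_combination ht
  rw [hx] at e1
  by_cases h0 : v 0 = 0
  · have h1 : v 1 ≠ 0 := by
      intro h1; apply hv; ext i; fin_cases i <;> simp [h0, h1]
    have a1 : X 0 1 = 0 := by simpa [h0, h1] using e0
    have a2 : X 0 0 = 0 := by simpa [h0, h1] using e1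
    refine ⟨v 0, v 1, - X 1 0 / (v 1) ^ 2, Or.inr h1, ?_⟩
    apply ext2 <;> simp [nilp, h0, hx, a1, a2]
    field_simp
  · refine ⟨v 0, v 1, X 0 1 / (v 0) ^ 2, Or.inl h0, ?_⟩
    apply ext2 <;> simp [nilp, hx] <;> field_simp
    · linear_combination e0
    · linear_combination (v 0) * e1 + v 1 * e0
    · linear_combination -e0

theorem nilp_pair {X Y : Mat F} (hX0 : X ≠ 0) (hX : X.trace = 0) (hXd : X.det = 0)
    (hY : Y.trace = 0) (hYd : Y.det = 0) :
    (∃ m : F, Y = m • X) ∨ ∃ (g : SL F) (s t : F), X * mat g = mat g * !![0, s; 0, 0] ∧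
      Y * mat g = mat g * !![0, 0; t, 0] := by
  obtain ⟨a, b, s, hab, rfl⟩ := nilp_form hX hXd
  obtain ⟨c, d, t, hcd, rfl⟩ := nilp_form hY hYd
  have hs : s ≠ 0 := by rintro rfl; simp at hX0
  by_cases hD : a * d - b * c = 0
  · left
    rcases hab with ha | hb
    · refine ⟨t * (c / a) ^ 2 / s, ?_⟩
      have : d = b * c / a := by field_simp; linear_combination hD
      subst this
      apply ext2 <;> simp [nilp] <;> field_simp
    · refine ⟨t * (d / b) ^ 2 / s, ?_⟩
      have : c = a * d / b := by field_simp; linear_combination -hD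
      subst this
      apply ext2 <;> simp [nilp] <;> field_simp
  · right
    refine ⟨mk !![a, c / (a * d - b * c); b, d / (a * d - b * c)] ?_, s,
      - t * (a * d - b * c) ^ 2, ?_, ?_⟩
    · rw [det_fin_two_of]; field_simp
    · rw [mat_mk]
      apply ext2 <;> simp [nilp, Matrix.mul_apply, Fin.sum_univ_two] <;> field_simp <;> ring
    · rw [mat_mk]
      apply ext2 <;> simp [nilp, Matrix.mul_apply, Fin.sum_univ_two] <;> field_simp <;> ring

variable {p : ℕ} [Fact p.Prime]

theorem upper_pow (a : F) (n : ℕ) :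
    (mk !![1, a; 0, 1] (by simp)) ^ n = mk !![1, n * a; 0, 1] (by simp) := by
  induction n with
  | zero => apply mat_inj; rw [pow_zero, mat_one, mat_mk]; apply ext2 <;> simp
  | succ n ih =>
    rw [pow_succ, ih]; apply mat_inj; rw [mat_mul, mat_mk, mat_mk, mat_mk]
    apply ext2 <;> simp [Matrix.mul_apply, Fin.sum_univ_two]
    ring

theorem lower_pow (a : F) (n : ℕ) :
    (mk !![1, 0; a, 1] (by simp)) ^ n = mk !![1, 0; n * a, 1] (by simp) := by
  induction n with
  | zero => apply mat_inj; rw [pow_zero, mat_one, mat_mk]; apply ext2 <;> simp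
  | succ n ih =>
    rw [pow_succ, ih]; apply mat_inj; rw [mat_mul, mat_mk, mat_mk, mat_mk]
    apply ext2 <;> simp [Matrix.mul_apply, Fin.sum_univ_two]
    ring

/-- Over a prime field, an upper and a lower transvection generate `SL₂`. -/
theorem transv_gen (K : Subgroup (SL (ZMod p))) {a b : ZMod p} (ha : a ≠ 0) (hb : b ≠ 0)
    (h1 : mk !![1, a; 0, 1] (by simp) ∈ K) (h2 : mk !![1, 0; b, 1] (by simp) ∈ K) : K = ⊤ := by
  have u : ∀ s : ZMod p, mk !![1, s; 0, 1] (by simp) ∈ K := by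
    intro s
    have := K.pow_mem h1 (s / a).val
    rw [upper_pow] at this
    simpa [ZMod.natCast_zmod_val, ha] using this
  have l : ∀ s : ZMod p, mk !![1, 0; s, 1] (by simp) ∈ K := by
    intro s
    have := K.pow_mem h2 (s / b).val
    rw [lower_pow] at this
    simpa [ZMod.natCast_zmod_val, hb] using this
  have main : ∀ A : SL (ZMod p), mat A 1 0 ≠ 0 → A ∈ K := by
    intro A hc
    have hd := mat_det A
    rw [det_fin_two] at hd
    have : A = mk !![1, (mat A 0 0 - 1) / mat A 1 0; 0, 1] (by simp) *
        mk !![1, 0; mat A 1 0, 1] (by simp) *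
        mk !![1, (mat A 1 1 - 1) / mat A 1 0; 0, 1] (by simp) := by
      apply mat_inj
      rw [mat_mul, mat_mul, mat_mk, mat_mk, mat_mk]
      apply ext2 <;> simp [Matrix.mul_apply, Fin.sum_univ_two] <;> field_simp <;> try ring1
      linear_combination -hd
    rw [this]
    exact K.mul_mem (K.mul_mem (u _) (l _)) (u _)
  rw [eq_top_iff]
  intro A _
  by_cases hc : mat A 1 0 = 0
  · have : mk !![1, 0; 1, 1] (by simp) * A ∈ K := by
      apply main
      rw [mat_mul, mat_mk]
      have hd := mat_det A
      rw [det_fin_two, hc] at hd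
      simp [Matrix.mul_apply, Fin.sum_univ_two, hc]
      rintro h
      simp [h] at hd
    exact (K.mul_mem_cancel_left (l 1)).1 this
  · exact main A hc

theorem unip_top (H : Subgroup (SL (ZMod p))) {x y : SL (ZMod p)} (hx : x ∈ H) (hy : y ∈ H)
    (hx1 : x ≠ 1) (hy1 : y ≠ 1) (tx : (mat x).trace = 2) (ty : (mat y).trace = 2) (hH : H ≠ ⊤) :
    ∃ m : ZMod p, mat y - 1 = m • (mat x - 1) := by
  have key : ∀ z : SL (ZMod p), (mat z).trace = 2 →
      (mat z - 1).trace = 0 ∧ (mat z - 1).det = 0 := by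
    intro z hz
    have hd := mat_det z
    rw [trace_fin_two] at hz
    rw [det_fin_two] at hd
    constructor
    · simp [trace_fin_two]; linear_combination hz
    · simp [det_fin_two]; linear_combination hd - hz
  have ne : ∀ z : SL (ZMod p), z ≠ 1 → mat z - 1 ≠ 0 := by
    intro z hz h; apply hz; apply mat_inj; rw [sub_eq_zero.1 h, mat_one]
  rcases nilp_pair (ne x hx1) (key x tx).1 (key x tx).2 (key y ty).1 (key y ty).2 with
    h | ⟨g, s, t, h1, h2⟩
  · exact h
  · exfalso
    apply hH
    have hs : s ≠ 0 := by
      rintro rfl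
      apply ne x hx1
      have : !![0, 0; 0, 0] = (0 : Mat (ZMod p)) := by apply ext2 <;> rfl
      rw [this, mul_zero] at h1
      calc mat x - 1 = ((mat x - 1) * mat g) * mat g⁻¹ := by
            rw [Matrix.mul_assoc, mat_mul_inv, mul_one]
        _ = 0 := by rw [h1, zero_mul]
    have ht : t ≠ 0 := by
      rintro rfl
      apply ne y hy1
      have : !![0, 0; 0, 0] = (0 : Mat (ZMod p)) := by apply ext2 <;> rfl
      rw [this, mul_zero] at h2
      calc mat y - 1 = ((mat y - 1) * mat g) * mat g⁻¹ := by
            rw [Matrix.mul_assoc, mat_mul_inv, mul_one]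
        _ = 0 := by rw [h2, zero_mul]
    have ex : g * mk !![1, s; 0, 1] (by simp) * g⁻¹ = x := by
      rw [mul_inv_eq_iff_eq_mul]
      apply mat_inj
      rw [mat_mul, mat_mul, mat_mk]
      have : !![1, s; 0, 1] = 1 + !![0, s; 0, 0] := by apply ext2 <;> simp
      rw [this, mul_add, ← h1, mul_one, sub_mul, one_mul]; abel
    have ey : g * mk !![1, 0; t, 1] (by simp) * g⁻¹ = y := by
      rw [mul_inv_eq_iff_eq_mul]
      apply mat_inj
      rw [mat_mul, mat_mul, mat_mk]
      have : !![1, 0; t, 1] = 1 + !![0, 0; t, 0] := by apply ext2 <;> simp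
      rw [this, mul_add, ← h2, mul_one, sub_mul, one_mul]; abel
    have := transv_gen (H.comap (MulAut.conj g).toMonoidHom) hs ht
      (by rw [Subgroup.mem_comap]; simpa [ex] using hx)
      (by rw [Subgroup.mem_comap]; simpa [ey] using hy)
    rw [eq_top_iff]
    intro z _
    have hz : g⁻¹ * z * g ∈ H.comap (MulAut.conj g).toMonoidHom := by rw [this]; trivial
    rw [Subgroup.mem_comap] at hz
    simpa [mul_assoc] using hz

theorem mat_trace_neg (A : SL F) : (mat (-A)).trace = - (mat A).trace := by
  rw [mat_neg, trace_neg]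

theorem mat_trace_conj (A g : SL F) : (mat (g * A * g⁻¹)).trace = (mat A).trace := by
  rw [mat_mul, mat_mul, trace_mul_comm, ← Matrix.mul_assoc, mat_inv_mul, one_mul]

/-- A proper subgroup containing a nontrivial unipotent element is reducible. -/
theorem red_of_unip (H : Subgroup (SL (ZMod p))) (hH : H ≠ ⊤) (hneg : -1 ∈ H) {x : SL (ZMod p)}
    (hx : x ∈ H) (h1 : x ≠ 1) (h2 : x ≠ -1) (ht : (mat x).trace ^ 2 = 4) : Red H := by
  have : ∃ z ∈ H, z ≠ 1 ∧ (mat z).trace = 2 := by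
    have : ((mat x).trace - 2) * ((mat x).trace + 2) = 0 := by linear_combination ht
    rcases mul_eq_zero.1 this with h | h
    · exact ⟨x, hx, h1, by linear_combination h⟩
    · refine ⟨-x, ?_, ?_, ?_⟩
      · rw [← neg_one_mul]; exact H.mul_mem hneg hx
      · intro h; apply h2; rw [← h, neg_neg]
      · rw [mat_trace_neg]; linear_combination -h
  obtain ⟨z, hz, hz1, htz⟩ := this
  refine ⟨mat z - 1, ?_, ?_, ?_⟩
  · intro h; apply hz1; apply mat_inj; rw [sub_eq_zero.1 h, mat_one]
  · rw [trace_sub, htz]; simp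
  · intro A hA
    obtain ⟨m, hm⟩ := unip_top H hz (H.mul_mem (H.mul_mem hA hz) (H.inv_mem hA)) hz1
      (by intro h; apply hz1; rwa [conj_eq_one_iff] at h) htz
      (by rw [mat_trace_conj, htz]) hH
    refine ⟨m, ?_⟩
    rw [← smul_mul_assoc, ← hm, mat_mul, mat_mul, sub_mul, Matrix.mul_assoc, mat_inv_mul,
      mul_sub, mul_one, one_mul, mul_one]
end Unipotent

/-! ### Counting conjugates of centralizers -/

section Count
variable {F : Type*} [Field F]

/-- Elements of `SL₂` other than `±1`. -/
def NC (x : SL F) : Prop := x ≠ 1 ∧ x ≠ -1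

theorem scal_iff (x : SL F) : Scal (mat x) ↔ x = 1 ∨ x = -1 := by
  constructor
  · rintro ⟨a, ha⟩
    have hd := mat_det x
    rw [ha, det_smul, det_one, Fintype.card_fin, mul_one] at hd
    have : (a - 1) * (a + 1) = 0 := by linear_combination hd
    rcases mul_eq_zero.1 this with h | h
    · left; apply mat_inj; rw [ha, mat_one, sub_eq_zero.1 h, one_smul]
    · right; apply mat_inj; rw [ha, mat_neg, mat_one, eq_neg_of_add_eq_zero_left h, neg_one_smul]
  · rintro (rfl | rfl)
    · exact ⟨1, by rw [mat_one, one_smul]⟩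
    · exact ⟨-1, by rw [mat_neg, mat_one, neg_one_smul]⟩

theorem NC.not_scal {x : SL F} (h : NC x) : ¬ Scal (mat x) := by
  rw [scal_iff]; rintro (h1 | h1)
  · exact h.1 h1
  · exact h.2 h1

theorem mat_comm {x y : SL F} : x * y = y * x ↔ mat x * mat y = mat y * mat x := by
  rw [← mat_mul, ← mat_mul]
  exact ⟨fun h => by rw [h], fun h => mat_inj h⟩

theorem comm_trans {x y z : SL F} (hy : NC y) (h1 : x * y = y * x) (h2 : y * z = z * y) :
    x * z = z * x := by
  rw [mat_comm] at *
  exact commute_trans hy.not_scal h1 h2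

theorem NC.conj {x : SL F} (h : NC x) (g : SL F) : NC (g * x * g⁻¹) := by
  constructor
  · intro h1; rw [conj_eq_one_iff] at h1; exact h.1 h1
  · intro h1
    apply h.2
    have : x = g⁻¹ * (g * x * g⁻¹) * g := by group
    rw [this, h1]; simp

theorem NC.inv_ne [NeZero (2 : F)] {x : SL F} (h : NC x) : x ≠ x⁻¹ := by
  intro h1
  apply h.not_scal
  have h2 : mat x * mat x = 1 := by
    rw [← mat_mul, ← mat_one]; congr 1; nth_rewrite 2 [h1]; simp
  rw [cayley, mat_det, one_smul, sub_eq_iff_eq_add] at h2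
  have h3 : (mat x).trace • mat x = (2 : F) • 1 := by rw [h2, two_smul]
  have ht : (mat x).trace ≠ 0 := by
    intro h0
    rw [h0, zero_smul] at h3
    exact two_ne_zero (smul_one_eq_zero h3.symm)
  refine ⟨(mat x).trace⁻¹ * 2, ?_⟩
  rw [← smul_smul, ← h3, smul_smul, inv_mul_cancel₀ ht, one_smul]

theorem mat_inv (x : SL F) : mat x⁻¹ = (mat x).trace • 1 - mat x := by
  have h : mat x * ((mat x).trace • 1 - mat x) = 1 := by
    rw [mul_sub, cayley, mat_det, mul_smul_comm, mul_one, one_smul]; abel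
  calc mat x⁻¹ = mat x⁻¹ * (mat x * ((mat x).trace • 1 - mat x)) := by rw [h, mul_one]
    _ = _ := by rw [← Matrix.mul_assoc, mat_inv_mul, one_mul]

theorem eq_or_inv [NeZero (2 : F)] {x z : SL F} (hx : NC x) (h4 : (mat x).trace ^ 2 ≠ 4)
    (hc : x * z = z * x) (ht : (mat z).trace = (mat x).trace) : z = x ∨ z = x⁻¹ := by
  rw [mat_comm] at hc
  obtain ⟨a, b, e⟩ := commute_span hx.not_scal hc
  have h2 : (2 : F) ≠ 0 := two_ne_zero
  have e1 : 2 * a + b * (mat x).trace = (mat x).trace := by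
    rw [e] at ht; simp at ht; linear_combination ht
  have hd := mat_det z
  have hdx := mat_det x
  rw [e] at hd
  rw [trace_fin_two] at e1 h4
  rw [det_fin_two] at hd hdx
  simp at hd
  have e2 : a ^ 2 + a * b * (mat x 0 0 + mat x 1 1) + b ^ 2 = 1 := by
    linear_combination hd - b ^ 2 * hdx
  have e3 : (b - 1) * (b + 1) * ((mat x 0 0 + mat x 1 1) ^ 2 - 4) = 0 := by
    linear_combination (-4) * e2 + (2 * a + b * (mat x 0 0 + mat x 1 1) + (mat x 0 0 + mat x 1 1)) * e1
  rcases mul_eq_zero.1 e3 with h | h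
  · rcases mul_eq_zero.1 h with h | h
    · left
      have hb : b = 1 := by linear_combination h
      have ha : a = 0 := by
        apply mul_left_cancel₀ h2; rw [hb] at e1; linear_combination e1
      apply mat_inj
      rw [e, ha, hb]; simp
    · right
      have hb : b = -1 := by linear_combination h
      have ha : a = mat x 0 0 + mat x 1 1 := by
        apply mul_left_cancel₀ h2; rw [hb] at e1; linear_combination e1
      apply mat_inj
      rw [mat_inv, e, ha, hb, trace_fin_two]; simp [sub_eq_add_neg]
  · exact absurd (by linear_combination h) h4

theorem conj_comm_iff (g x y : SL F) :
    (g * x * g⁻¹) * (g * y * g⁻¹) = (g * y * g⁻¹) * (g * x * g⁻¹) ↔ x * y = y * x := by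
  have e : ∀ a b : SL F, (g * a * g⁻¹) * (g * b * g⁻¹) = g * (a * b) * g⁻¹ := by
    intro a b; group
  rw [e, e]
  constructor
  · intro h; simpa using h
  · intro h; rw [h]

theorem one_ne_neg_one [NeZero (2 : F)] : (1 : SL F) ≠ -1 := by
  intro h
  have h1 := congrArg mat h
  rw [mat_neg, mat_one] at h1
  have := congrFun (congrFun h1 0) 0
  simp at this
  exact two_ne_zero (α := F) (by linear_combination this)

variable [Fintype F] [DecidableEq F]
open Classical in
/-- The centralizer in `H`. -/
noncomputable def Cen (H : Subgroup (SL F)) (x : SL F) : Finset (SL F) :=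
  {y | y ∈ H ∧ x * y = y * x}
open Classical in
/-- The elements of `H` conjugating `x` into its centralizer. -/
noncomputable def Nor (H : Subgroup (SL F)) (x : SL F) : Finset (SL F) :=
  {y | y ∈ H ∧ x * (y * x * y⁻¹) = (y * x * y⁻¹) * x}
open Classical in
/-- The elements other than `±1` of the `H`-conjugates of the centralizer of `x`. -/
noncomputable def Orb (H : Subgroup (SL F)) (x : SL F) : Finset (SL F) :=
  {z | z ∈ H ∧ NC z ∧ ∃ y ∈ H, x * (y * z * y⁻¹) = (y * z * y⁻¹) * x}
open Classical in
/-- The elements of a subgroup as a finset. -/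
noncomputable def El (H : Subgroup (SL F)) : Finset (SL F) := {y | y ∈ H}

theorem mem_Cen {H : Subgroup (SL F)} {x y : SL F} : y ∈ Cen H x ↔ y ∈ H ∧ x * y = y * x := by
  simp [Cen]
theorem mem_Nor {H : Subgroup (SL F)} {x y : SL F} :
    y ∈ Nor H x ↔ y ∈ H ∧ x * (y * x * y⁻¹) = (y * x * y⁻¹) * x := by
  simp [Nor]
theorem mem_Orb {H : Subgroup (SL F)} {x z : SL F} :
    z ∈ Orb H x ↔ z ∈ H ∧ NC z ∧ ∃ y ∈ H, x * (y * z * y⁻¹) = (y * z * y⁻¹) * x := by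
  simp [Orb]
theorem mem_El {H : Subgroup (SL F)} {y : SL F} : y ∈ El H ↔ y ∈ H := by simp [El]

theorem card_bij_conj [NeZero (2 : F)] {H : Subgroup (SL F)} (hneg : -1 ∈ H) {x y : SL F} (hy : y ∈ H) :
    (Finset.bipartiteAbove (fun y z => x * (y * z * y⁻¹) = (y * z * y⁻¹) * x) (Orb H x) y).card + 2
      = (Cen H x).card := by
  classical
  have h2 : ({1, -1} : Finset (SL F)).card = 2 := Finset.card_pair one_ne_neg_one
  have hsub : ({1, -1} : Finset (SL F)) ⊆ Cen H x := by
    intro z hz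
    simp only [Finset.mem_insert, Finset.mem_singleton] at hz
    rcases hz with rfl | rfl
    · exact mem_Cen.2 ⟨H.one_mem, by simp⟩
    · exact mem_Cen.2 ⟨hneg, by simp⟩
  rw [← Finset.card_sdiff_add_card_eq_card hsub, h2]
  congr 1
  refine Finset.card_bij (fun z _ => y * z * y⁻¹) ?_ ?_ ?_
  · intro z hz
    rw [Finset.mem_bipartiteAbove, mem_Orb] at hz
    rw [Finset.mem_sdiff, mem_Cen]
    refine ⟨⟨H.mul_mem (H.mul_mem hy hz.1.1) (H.inv_mem hy), hz.2⟩, ?_⟩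
    have := hz.1.2.1.conj y
    simp only [Finset.mem_insert, Finset.mem_singleton]
    rintro (h | h)
    · exact this.1 h
    · exact this.2 h
  · intro a _ b _ h
    simpa using h
  · intro w hw
    rw [Finset.mem_sdiff, mem_Cen] at hw
    simp only [Finset.mem_insert, Finset.mem_singleton, not_or] at hw
    have hnc : NC (y⁻¹ * w * y⁻¹⁻¹) := NC.conj ⟨hw.2.1, hw.2.2⟩ y⁻¹
    have e : y * (y⁻¹ * w * y⁻¹⁻¹) * y⁻¹ = w := by group
    refine ⟨y⁻¹ * w * y⁻¹⁻¹, ?_, e⟩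
    rw [Finset.mem_bipartiteAbove, mem_Orb, e]
    exact ⟨⟨H.mul_mem (H.mul_mem (H.inv_mem hy) hw.1.1) (H.inv_mem (H.inv_mem hy)), hnc, y, hy,
      by rw [e]; exact hw.1.2⟩, hw.1.2⟩

theorem card_below {H : Subgroup (SL F)} {x z : SL F} (hx : NC x) (hz : z ∈ Orb H x) :
    (Finset.bipartiteBelow (fun y z => x * (y * z * y⁻¹) = (y * z * y⁻¹) * x) (El H) z).card
      = (Nor H x).card := by
  rw [mem_Orb] at hz
  obtain ⟨hzH, hzN, y0, hy0, hc⟩ := hz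
  have key : ∀ n : SL F, x * (n * (y0 * z * y0⁻¹) * n⁻¹) = (n * (y0 * z * y0⁻¹) * n⁻¹) * x ↔
      x * (n * x * n⁻¹) = (n * x * n⁻¹) * x := by
    intro n
    have hw := hzN.conj y0
    constructor
    · intro h
      exact comm_trans (hw.conj n) h ((conj_comm_iff n _ _).2 hc.symm)
    · intro h
      exact comm_trans (hx.conj n) h ((conj_comm_iff n _ _).2 hc)
  refine Finset.card_bij (fun y _ => y * y0⁻¹) ?_ ?_ ?_
  · intro y hy
    rw [Finset.mem_bipartiteBelow, mem_El] at hy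
    rw [mem_Nor, ← key]
    refine ⟨H.mul_mem hy.1 (H.inv_mem hy0), ?_⟩
    have e : y * y0⁻¹ * (y0 * z * y0⁻¹) * (y * y0⁻¹)⁻¹ = y * z * y⁻¹ := by group
    rw [e]; exact hy.2
  · intro a _ b _ h
    simpa using h
  · intro n hn
    rw [mem_Nor, ← key] at hn
    refine ⟨n * y0, ?_, by group⟩
    rw [Finset.mem_bipartiteBelow, mem_El]
    refine ⟨H.mul_mem hn.1 hy0, ?_⟩
    have e : n * y0 * z * (n * y0)⁻¹ = n * (y0 * z * y0⁻¹) * n⁻¹ := by group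
    rw [e]; exact hn.2

/-- Double counting of the pairs `(y, z)` with `y` in `H` and `z` in `Orb H x` such that `y z y⁻¹`
centralizes `x`: it determines the size of `Orb H x`. -/
theorem class_count [NeZero (2 : F)] {H : Subgroup (SL F)} (hneg : -1 ∈ H) {x : SL F} (hx : NC x) :
    (El H).card * (Cen H x).card = (Nor H x).card * (Orb H x).card + 2 * (El H).card := by
  classical
  have h := Finset.sum_card_bipartiteAbove_eq_sum_card_bipartiteBelow (s := El H) (t := Orb H x)
    (fun y z => x * (y * z * y⁻¹) = (y * z * y⁻¹) * x)
  rw [Finset.sum_congr rfl (fun z hz => card_below hx hz), Finset.sum_const, smul_eq_mul] at h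
  have h2 : ∑ y ∈ El H, ((Finset.bipartiteAbove
      (fun y z => x * (y * z * y⁻¹) = (y * z * y⁻¹) * x) (Orb H x) y).card + 2) =
      ∑ y ∈ El H, (Cen H x).card :=
    Finset.sum_congr rfl (fun y hy => card_bij_conj hneg (mem_El.1 hy))
  rw [Finset.sum_add_distrib, h, Finset.sum_const, Finset.sum_const, smul_eq_mul, smul_eq_mul] at h2
  linarith

theorem Nor_cases [NeZero (2 : F)] {H : Subgroup (SL F)} {x y : SL F} (hx : NC x)
    (h4 : (mat x).trace ^ 2 ≠ 4) (hy : y ∈ Nor H x) : y * x * y⁻¹ = x ∨ y * x * y⁻¹ = x⁻¹ :=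
  eq_or_inv hx h4 (mem_Nor.1 hy).2 (mat_trace_conj x y)

theorem card_Nor [NeZero (2 : F)] {H : Subgroup (SL F)} {x : SL F} (hx : NC x)
    (h4 : (mat x).trace ^ 2 ≠ 4) :
    (Nor H x).card = (Cen H x).card ∨ (Nor H x).card = 2 * (Cen H x).card := by
  classical
  have hsub : Cen H x ⊆ Nor H x := by
    intro y hy
    rw [mem_Cen] at hy
    rw [mem_Nor]
    have : y * x * y⁻¹ = x := by rw [← hy.2]; group
    exact ⟨hy.1, by rw [this]⟩
  by_cases h : ∃ y1 ∈ Nor H x, y1 ∉ Cen H x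
  · right
    obtain ⟨y1, hy1, hy1'⟩ := h
    have e1 : y1 * x * y1⁻¹ = x⁻¹ := by
      rcases Nor_cases hx h4 hy1 with h | h
      · exfalso; apply hy1'; rw [mem_Cen]
        exact ⟨(mem_Nor.1 hy1).1, by rw [mul_inv_eq_iff_eq_mul] at h; exact h.symm⟩
      · exact h
    have hH1 := (mem_Nor.1 hy1).1
    have : (Nor H x \ Cen H x).card = (Cen H x).card := by
      symm
      refine Finset.card_bij (fun y _ => y1 * y) ?_ ?_ ?_
      · intro y hy
        rw [mem_Cen] at hy
        have e : y1 * y * x * (y1 * y)⁻¹ = x⁻¹ := by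
          have : y * x * y⁻¹ = x := by rw [← hy.2]; group
          calc y1 * y * x * (y1 * y)⁻¹ = y1 * (y * x * y⁻¹) * y1⁻¹ := by group
            _ = x⁻¹ := by rw [this, e1]
        rw [Finset.mem_sdiff, mem_Nor, e, mem_Cen]
        refine ⟨⟨H.mul_mem hH1 hy.1, by simp⟩, ?_⟩
        rintro ⟨_, h⟩
        apply hx.inv_ne
        rw [← e, ← h]; group
      · intro a _ b _ h; simpa using h
      · intro w hw
        rw [Finset.mem_sdiff] at hw
        have e2 : w * x * w⁻¹ = x⁻¹ := by
          rcases Nor_cases hx h4 hw.1 with h | h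
          · exfalso; apply hw.2; rw [mem_Cen]
            exact ⟨(mem_Nor.1 hw.1).1, by rw [mul_inv_eq_iff_eq_mul] at h; exact h.symm⟩
          · exact h
        refine ⟨y1⁻¹ * w, ?_, by group⟩
        rw [mem_Cen]
        refine ⟨H.mul_mem (H.inv_mem hH1) (mem_Nor.1 hw.1).1, ?_⟩
        have e3 : y1⁻¹ * w * x * (y1⁻¹ * w)⁻¹ = x := by
          calc y1⁻¹ * w * x * (y1⁻¹ * w)⁻¹ = y1⁻¹ * (w * x * w⁻¹) * y1 := by group
            _ = x := by rw [e2, ← e1]; group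
        rw [mul_inv_eq_iff_eq_mul] at e3
        exact e3.symm
    rw [← Finset.card_sdiff_add_card_eq_card hsub, this]; ring
  · left
    push Not at h
    congr 1
    exact Finset.Subset.antisymm h hsub

theorem Orb_card_Cen {H : Subgroup (SL F)} {x z : SL F} (hx : NC x) (hz : z ∈ Orb H x) :
    (Cen H z).card = (Cen H x).card := by
  rw [mem_Orb] at hz
  obtain ⟨hzH, hzN, y, hy, hc⟩ := hz
  refine Finset.card_bij (fun w _ => y * w * y⁻¹) ?_ ?_ ?_
  · intro w hw
    rw [mem_Cen] at hw ⊢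
    refine ⟨H.mul_mem (H.mul_mem hy hw.1) (H.inv_mem hy), ?_⟩
    exact comm_trans (hzN.conj y) hc ((conj_comm_iff y _ _).2 hw.2)
  · intro a _ b _ h; simpa using h
  · intro w hw
    rw [mem_Cen] at hw
    refine ⟨y⁻¹ * w * y, ?_, by group⟩
    rw [mem_Cen]
    refine ⟨H.mul_mem (H.mul_mem (H.inv_mem hy) hw.1) hy, ?_⟩
    rw [← conj_comm_iff y]
    have e : y * (y⁻¹ * w * y) * y⁻¹ = w := by group
    rw [e]
    exact comm_trans hx hc.symm hw.2

theorem Orb_trans {H : Subgroup (SL F)} {x z w : SL F} (hz : z ∈ Orb H x)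
    (hw : w ∈ Orb H z) : w ∈ Orb H x := by
  rw [mem_Orb] at *
  obtain ⟨hzH, hzN, y, hy, hc⟩ := hz
  obtain ⟨hwH, hwN, u, hu, hd⟩ := hw
  refine ⟨hwH, hwN, y * u, H.mul_mem hy hu, ?_⟩
  have e : y * u * w * (y * u)⁻¹ = y * (u * w * u⁻¹) * y⁻¹ := by group
  rw [e]
  exact comm_trans (hzN.conj y) hc ((conj_comm_iff y _ _).2 hd)

theorem Orb_symm {H : Subgroup (SL F)} {x z : SL F} (hxH : x ∈ H) (hx : NC x)
    (hz : z ∈ Orb H x) : x ∈ Orb H z := by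
  rw [mem_Orb] at *
  obtain ⟨hzH, hzN, y, hy, hc⟩ := hz
  refine ⟨hxH, hx, y⁻¹, H.inv_mem hy, ?_⟩
  rw [← conj_comm_iff y]
  have e : y * (y⁻¹ * x * y⁻¹⁻¹) * y⁻¹ = x := by group
  rw [e]; exact hc.symm

theorem Orb_self {H : Subgroup (SL F)} {x : SL F} (hxH : x ∈ H) (hx : NC x) : x ∈ Orb H x := by
  rw [mem_Orb]
  exact ⟨hxH, hx, 1, H.one_mem, by simp⟩

theorem Orb_disjoint {H : Subgroup (SL F)} {x z : SL F} (hzH : z ∈ H) (hz : NC z)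
    (h : z ∉ Orb H x) : Disjoint (Orb H x) (Orb H z) := by
  rw [Finset.disjoint_left]
  intro w hw hw'
  exact h (Orb_trans hw (Orb_symm hzH hz hw'))

theorem Cen_even {H : Subgroup (SL F)} [NeZero (2 : F)] (hneg : -1 ∈ H) (x : SL F) :
    ∃ e, (Cen H x).card = 2 * e ∧ (NC x → x ∈ H → 2 ≤ e) ∧ ∀ y ∈ Cen H x, y ^ (2 * e) = 1 := by
  classical
  let K : Subgroup (SL F) := H ⊓ Subgroup.centralizer {x}
  have hK : ∀ y, y ∈ K ↔ y ∈ Cen H x := by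
    intro y
    rw [mem_Cen, Subgroup.mem_inf, Subgroup.mem_centralizer_singleton_iff]
    constructor <;> rintro ⟨a, b⟩ <;> exact ⟨a, b.symm⟩
  have hc : Nat.card K = (Cen H x).card := by
    rw [← Nat.card_eq_finsetCard]
    exact Nat.card_congr (Equiv.subtypeEquivRight hK)
  have hnK : -1 ∈ K := (hK _).2 (mem_Cen.2 ⟨hneg, by simp⟩)
  have ho : orderOf (⟨-1, hnK⟩ : K) = 2 := by
    rw [Subgroup.orderOf_mk]
    apply orderOf_eq_prime
    · simp
    · exact one_ne_neg_one.symm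
  have hdvd : 2 ∣ Nat.card K := by
    have h := orderOf_dvd_natCard (⟨-1, hnK⟩ : K)
    rwa [ho] at h
  obtain ⟨e, he⟩ := hdvd
  refine ⟨e, by rw [← hc, he], ?_, ?_⟩
  · intro hx hxH
    by_contra hlt
    have h3 : ({1, -1, x} : Finset (SL F)).card = 3 := by
      rw [Finset.card_eq_three]
      exact ⟨1, -1, x, one_ne_neg_one, hx.1.symm, hx.2.symm, rfl⟩
    have hsub : ({1, -1, x} : Finset (SL F)) ⊆ Cen H x := by
      intro z hz
      simp only [Finset.mem_insert, Finset.mem_singleton] at hz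
      rw [← hK]
      rcases hz with rfl | rfl | rfl
      · exact K.one_mem
      · exact hnK
      · rw [hK]; exact mem_Cen.2 ⟨hxH, rfl⟩
    have := Finset.card_le_card hsub
    omega
  · intro y hy
    rw [← hK] at hy
    have := pow_card_eq_one' (x := (⟨y, hy⟩ : K))
    rw [he] at this
    exact congrArg Subtype.val this
end Count

/-! ### Dickson's list of subgroups -/

section Dickson
variable {F : Type*} [Field F]

theorem red_of_nor [NeZero (2 : F)] {H : Subgroup (SL F)} {x : SL F} (hx : NC x)
    (h : ∀ y ∈ H, y * x * y⁻¹ = x ∨ y * x * y⁻¹ = x⁻¹) : Red H := by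
  refine ⟨(2 : F) • mat x - (mat x).trace • (1 : Mat F), ?_, ?_, ?_⟩
  · intro h0
    apply hx.not_scal
    refine ⟨(mat x).trace / 2, ?_⟩
    rw [sub_eq_zero] at h0
    rw [div_eq_inv_mul, ← smul_smul, ← h0, smul_smul, inv_mul_cancel₀ two_ne_zero, one_smul]
  · simp [trace_sub]; ring
  · intro y hy
    rw [mem_Stab]
    rcases h y hy with h | h
    · rw [mul_inv_eq_iff_eq_mul] at h
      refine ⟨1, ?_⟩
      rw [mul_sub, sub_mul, mul_smul_comm, smul_mul_assoc, ← mat_mul, h, ← mat_mul]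
      simp
    · rw [mul_inv_eq_iff_eq_mul] at h
      refine ⟨-1, ?_⟩
      have h' := congrArg mat h
      rw [mat_mul, mat_mul, mat_inv, sub_mul, smul_mul_assoc, one_mul] at h'
      rw [mul_sub, sub_mul, mul_smul_comm, smul_mul_assoc, h', mul_smul_comm, smul_mul_assoc,
        one_mul, mul_one]
      module

theorem pow_trace [NeZero (2 : F)] {x : SL F} {e : ℕ} (h : x ^ (2 * e) = 1) :
    Scal (mat (x ^ e)) := by
  rw [scal_iff]
  by_contra hne
  push Not at hne
  apply (show NC (x ^ e) from hne).inv_ne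
  rw [eq_inv_iff_mul_eq_one, ← pow_add, ← two_mul, h]

theorem scal_of_smul {A : Mat F} {a b : F} (hA : ¬ Scal A) (h : Scal (a • A - b • (1 : Mat F))) :
    a = 0 := by
  by_contra ha
  obtain ⟨c, hc⟩ := h
  apply hA
  refine ⟨a⁻¹ * (b + c), ?_⟩
  rw [sub_eq_iff_eq_add] at hc
  rw [← smul_smul, add_smul, add_comm, ← hc, smul_smul, inv_mul_cancel₀ ha, one_smul]

theorem trace_of_pow [NeZero (2 : F)] {x : SL F} (hx : NC x) :
    (x ^ (2 * 2) = 1 → (mat x).trace = 0) ∧ (x ^ (2 * 3) = 1 → (mat x).trace ^ 2 = 1) ∧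
    (x ^ (2 * 4) = 1 → (mat x).trace = 0 ∨ (mat x).trace ^ 2 = 2) ∧
    (x ^ (2 * 5) = 1 → (mat x).trace ^ 2 = (mat x).trace + 1 ∨
      (mat x).trace ^ 2 = - (mat x).trace + 1) := by
  set t := (mat x).trace with ht
  have hs := hx.not_scal
  have p2 : mat (x ^ 2) = t • mat x - (1 : F) • (1 : Mat F) := by
    rw [pow_two, mat_mul, cayley, mat_det]
  have step : ∀ (n : ℕ) (a b : F), mat (x ^ n) = a • mat x - b • (1 : Mat F) →
      mat (x ^ (n + 1)) = (t * a - b) • mat x - a • (1 : Mat F) := by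
    intro n a b h
    rw [pow_succ, mat_mul, h, sub_mul, smul_mul_assoc, cayley, mat_det, smul_mul_assoc, one_mul,
      one_smul]
    module
  have p3 := step 2 _ _ p2
  have p4 := step 3 _ _ p3
  have p5 := step 4 _ _ p4
  refine ⟨fun h => ?_, fun h => ?_, fun h => ?_, fun h => ?_⟩
  · have := pow_trace h
    rw [p2] at this
    exact scal_of_smul hs this
  · have := pow_trace h
    rw [p3] at this
    linear_combination scal_of_smul hs this
  · have := pow_trace h
    rw [p4] at this
    have h0 : t * (t ^ 2 - 2) = 0 := by linear_combination scal_of_smul hs this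
    rcases mul_eq_zero.1 h0 with h | h
    · exact Or.inl h
    · right; linear_combination h
  · have := pow_trace h
    rw [p5] at this
    have h0 : (t ^ 2 - t - 1) * (t ^ 2 + t - 1) = 0 := by linear_combination scal_of_smul hs this
    rcases mul_eq_zero.1 h0 with h | h
    · left; linear_combination h
    · right; linear_combination h

/-- Traces and order of a binary tetrahedral group. -/
def TypeT (H : Subgroup (SL F)) : Prop := Nat.card H = 24 ∧
  (∀ x ∈ H, NC x → (mat x).trace = 0 ∨ (mat x).trace ^ 2 = 1) ∧
  (∃ x ∈ H, NC x ∧ (mat x).trace = 0) ∧ ∃ x ∈ H, NC x ∧ (mat x).trace ^ 2 = 1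

/-- Traces and order of a binary octahedral group. -/
def TypeO (H : Subgroup (SL F)) : Prop := Nat.card H = 48 ∧
  (∀ x ∈ H, NC x → (mat x).trace = 0 ∨ (mat x).trace ^ 2 = 1 ∨ (mat x).trace ^ 2 = 2) ∧
  (∃ x ∈ H, NC x ∧ (mat x).trace = 0) ∧ (∃ x ∈ H, NC x ∧ (mat x).trace ^ 2 = 1) ∧
  ∃ x ∈ H, NC x ∧ (mat x).trace ^ 2 = 2

/-- Traces and order of a binary icosahedral group. -/
def TypeI (H : Subgroup (SL F)) : Prop := Nat.card H = 120 ∧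
  (∀ x ∈ H, NC x → (mat x).trace = 0 ∨ (mat x).trace ^ 2 = 1 ∨
    (mat x).trace ^ 2 = (mat x).trace + 1 ∨ (mat x).trace ^ 2 = - (mat x).trace + 1) ∧
  (∃ x ∈ H, NC x ∧ (mat x).trace = 0) ∧ (∃ x ∈ H, NC x ∧ (mat x).trace ^ 2 = 1) ∧
  ∃ x ∈ H, NC x ∧ ((mat x).trace ^ 2 = (mat x).trace + 1 ∨
    (mat x).trace ^ 2 = - (mat x).trace + 1)

variable [Fintype F] [DecidableEq F]

theorem card_El (H : Subgroup (SL F)) : (El H).card = Nat.card H := by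
  classical
  rw [← Nat.card_eq_finsetCard]
  exact Nat.card_congr (Equiv.subtypeEquivRight fun _ => mem_El)

theorem Nor_sub (H : Subgroup (SL F)) (x : SL F) : Nor H x ⊆ El H := fun _ hy =>
  mem_El.2 (mem_Nor.1 hy).1

/-- The numerical data of the class of an element: `2 * e` is the order of the centralizer and
`w = |H| / (2 * e)`. -/
theorem class_data [NeZero (2 : F)] {H : Subgroup (SL F)} (hneg : -1 ∈ H) {x : SL F} (hxH : x ∈ H)
    (hx : NC x) (h4 : (mat x).trace ^ 2 ≠ 4) {n : ℚ} (hn : 2 * n = (El H).card) :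
    ∃ (e : ℕ) (w : ℚ), (Cen H x).card = 2 * e ∧ 2 ≤ e ∧ e * w = n ∧
      ((1 ≤ w ∧ (w = 1 → Red H) ∧ ((Orb H x).card : ℚ) = 2 * n - 2 * w) ∨
       (2 ≤ w ∧ (w = 2 → Red H) ∧ ((Orb H x).card : ℚ) = n - w)) := by
  obtain ⟨e, he, h2, -⟩ := Cen_even hneg x
  have e2 := h2 hx hxH
  have hcount := class_count hneg hx
  have hle := Finset.card_le_card (Nor_sub H x)
  have hred : (Nor H x).card = (El H).card → Red H := by
    intro h
    have := Finset.eq_of_subset_of_card_le (Nor_sub H x) h.ge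
    apply red_of_nor hx
    intro y hy
    exact Nor_cases hx h4 (by rw [this]; exact mem_El.2 hy)
  have e0 : (0 : ℚ) < e := by exact_mod_cast (by omega : 0 < e)
  have hq : ((El H).card : ℚ) * (Cen H x).card =
      (Nor H x).card * (Orb H x).card + 2 * (El H).card := by exact_mod_cast hcount
  have hleq : ((Nor H x).card : ℚ) ≤ (El H).card := by exact_mod_cast hle
  refine ⟨e, n / e, he, e2, by field_simp, ?_⟩
  rw [he] at hq
  push_cast at hq
  rcases card_Nor (H := H) hx h4 with h | h
  · left
    rw [he] at h
    rw [h] at hq hleq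
    push_cast at hq hleq
    refine ⟨?_, ?_, ?_⟩
    · rw [le_div_iff₀ e0]; linarith
    · intro h1
      apply hred
      rw [div_eq_one_iff_eq e0.ne'] at h1
      have : (((Nor H x).card : ℕ) : ℚ) = (El H).card := by rw [h]; push_cast; linarith
      exact_mod_cast this
    · rw [← hn] at hq; field_simp; linarith
  · right
    rw [he] at h
    rw [h] at hq hleq
    push_cast at hq hleq
    refine ⟨?_, ?_, ?_⟩
    · rw [le_div_iff₀ e0]; linarith
    · intro h1
      apply hred
      rw [div_eq_iff e0.ne'] at h1
      have : (((Nor H x).card : ℕ) : ℚ) = (El H).card := by rw [h]; push_cast; linarith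
      exact_mod_cast this
    · rw [← hn] at hq; field_simp; linarith

theorem w_bound {e : ℕ} {w n : ℚ} (h : e * w = n) (hw : 1 ≤ w) (k : ℕ) (hk : k ≤ e) :
    k * w ≤ n := by
  rw [← h]
  have : (k : ℚ) ≤ e := by exact_mod_cast hk
  nlinarith

theorem w_eq {e : ℕ} {w n : ℚ} (h : e * w = n) (k : ℕ) (hk : e = k) : k * w = n := by
  rw [← h, hk]

/-- The possible orders of centralizers in an irreducible group without unipotent elements. -/
theorem class_equation [NeZero (2 : F)] {H : Subgroup (SL F)} (hneg : -1 ∈ H)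
    (hu : ∀ x ∈ H, NC x → (mat x).trace ^ 2 ≠ 4) (hred : ¬ Red H) :
    ∃ m : ℕ, (m = 3 ∧ (El H).card = 24 ∨ m = 4 ∧ (El H).card = 48 ∨ m = 5 ∧ (El H).card = 120) ∧
      (∀ x ∈ H, NC x → (Cen H x).card = 2 * 2 ∨ (Cen H x).card = 2 * 3 ∨
        (Cen H x).card = 2 * m) ∧
      (∃ x ∈ H, NC x ∧ (Cen H x).card = 2 * 2) ∧ (∃ x ∈ H, NC x ∧ (Cen H x).card = 2 * 3) ∧
      (∃ x ∈ H, NC x ∧ (Cen H x).card = 2 * m) := by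
  classical
  obtain ⟨n, hn⟩ : ∃ n : ℚ, 2 * n = (El H).card := ⟨(El H).card / 2, by ring⟩
  -- the elements other than `±1`
  let S : Finset (SL F) := (El H).filter NC
  have hS : ∀ x, x ∈ S ↔ x ∈ H ∧ NC x := by intro x; simp [S, mem_El]
  have hScard : (S.card : ℚ) + 2 = 2 * n := by
    rw [hn]
    have h2 : ({1, -1} : Finset (SL F)).card = 2 := Finset.card_pair one_ne_neg_one
    have hsub : ({1, -1} : Finset (SL F)) ⊆ El H := by
      intro z hz
      simp only [Finset.mem_insert, Finset.mem_singleton] at hz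
      rcases hz with rfl | rfl
      · exact mem_El.2 H.one_mem
      · exact mem_El.2 hneg
    have : El H \ {1, -1} = S := by
      ext z; simp [S, NC]
    have h3 := Finset.card_sdiff_add_card_eq_card hsub
    rw [this, h2] at h3
    exact_mod_cast h3
  have hOS : ∀ x, Orb H x ⊆ S := fun x z hz => (hS z).2 ⟨(mem_Orb.1 hz).1, (mem_Orb.1 hz).2.1⟩
  have hSne : S.Nonempty := by
    rw [Finset.nonempty_iff_ne_empty]
    intro h
    apply hred
    refine ⟨nilp 1 0, ?_, ?_, ?_⟩
    · intro h; have := congrFun (congrFun h 0) 1; simp [nilp] at this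
    · simp [nilp, trace_fin_two]
    · intro y hy
      by_cases hy1 : NC y
      · have := (hS y).2 ⟨hy, hy1⟩
        rw [h] at this; simp at this
      · have : y = 1 ∨ y = -1 := by
          by_contra h'; push Not at h'; exact hy1 h'
        rcases this with rfl | rfl
        · exact Subgroup.one_mem _
        · exact neg_one_mem_Stab _
  obtain ⟨x1, hx1, m1⟩ := S.exists_min_image (fun x => (Cen H x).card) hSne
  obtain ⟨k1, n1⟩ := (hS x1).1 hx1
  obtain ⟨e1, w1, c1, t1, q1, d1⟩ := class_data hneg k1 n1 (hu x1 k1 n1) hn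
  have b1 := w_bound q1 (by rcases d1 with d | d <;> linarith [d.1])
  have b1' := w_eq q1
  by_cases hr1 : S \ Orb H x1 = ∅
  · -- a single class
    have : S = Orb H x1 := Finset.Subset.antisymm (Finset.sdiff_eq_empty_iff_subset.1 hr1) (hOS x1)
    rw [this] at hScard
    exfalso
    apply hred
    rcases d1 with ⟨d, dr, du⟩ | ⟨d, dr, du⟩
    · exact dr (by linarith)
    · have := b1 2 t1; push_cast at this; linarith
  obtain ⟨x2, hx2, m2⟩ := (S \ Orb H x1).exists_min_image (fun x => (Cen H x).card)
    (Finset.nonempty_iff_ne_empty.2 hr1)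
  rw [Finset.mem_sdiff] at hx2
  obtain ⟨k2, n2⟩ := (hS x2).1 hx2.1
  obtain ⟨e2, w2, c2, t2, q2, d2⟩ := class_data hneg k2 n2 (hu x2 k2 n2) hn
  have b2 := w_bound q2 (by rcases d2 with d | d <;> linarith [d.1])
  have b2' := w_eq q2
  have dis12 := Orb_disjoint k2 n2 hx2.2
  have e12 : e1 ≤ e2 := by have := m1 x2 hx2.1; rw [c1, c2] at this; omega
  have f1 := b1 2 t1
  have f2 := b2 2 t2
  push_cast at f1 f2
  by_cases hr2 : S \ (Orb H x1 ∪ Orb H x2) = ∅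
  · -- two classes
    have hSeq : S = Orb H x1 ∪ Orb H x2 :=
      Finset.Subset.antisymm (Finset.sdiff_eq_empty_iff_subset.1 hr2)
        (Finset.union_subset (hOS _) (hOS _))
    have hc : (S.card : ℚ) = (Orb H x1).card + (Orb H x2).card := by
      rw [hSeq, Finset.card_union_of_disjoint dis12]; push_cast; rfl
    have main : ∀ (ea eb : ℕ) (wa wb : ℚ), 2 ≤ ea → 2 ≤ eb → (∀ k ≤ ea, (k : ℚ) * wa ≤ n) →
        (∀ k, ea = k → (k : ℚ) * wa = n) → (∀ k ≤ eb, (k : ℚ) * wb ≤ n) →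
        (∀ k, eb = k → (k : ℚ) * wb = n) → (wb = 2 → Red H) → 2 ≤ wb →
        n + 2 = 2 * wa + wb → ea = 3 ∧ eb = 2 ∧ n = 12 := by
      intro ea eb wa wb ha hb la la' lb lb' hr hw hh
      have g2 := lb 2 hb
      push_cast at g2
      rcases (by omega : ea = 2 ∨ ea = 3 ∨ 4 ≤ ea) with h | h | h
      · have := la' 2 h; push_cast at this
        exact absurd (hr (by linarith)) hred
      · have g1 := la' 3 h; push_cast at g1
        rcases (by omega : eb = 2 ∨ 3 ≤ eb) with h' | h'
        · have := lb' 2 h'; push_cast at this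
          exact ⟨h, h', by linarith⟩
        · have := lb 3 h'; push_cast at this
          exfalso; linarith
      · have g1 := la 4 h; push_cast at g1
        exfalso; linarith
    have fin : ∀ (xa xb : SL F), xa ∈ H → NC xa → xb ∈ H → NC xb → S ⊆ Orb H xa ∪ Orb H xb →
        (Cen H xa).card = 2 * 3 → (Cen H xb).card = 2 * 2 → n = 12 → ∃ m : ℕ,
        (m = 3 ∧ (El H).card = 24 ∨ m = 4 ∧ (El H).card = 48 ∨ m = 5 ∧ (El H).card = 120) ∧
      (∀ x ∈ H, NC x → (Cen H x).card = 2 * 2 ∨ (Cen H x).card = 2 * 3 ∨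
        (Cen H x).card = 2 * m) ∧
      (∃ x ∈ H, NC x ∧ (Cen H x).card = 2 * 2) ∧ (∃ x ∈ H, NC x ∧ (Cen H x).card = 2 * 3) ∧
      (∃ x ∈ H, NC x ∧ (Cen H x).card = 2 * m) := by
      intro xa xb ha na hb nb hsub ca cb h12
      refine ⟨3, Or.inl ⟨rfl, ?_⟩, ?_, ⟨xb, hb, nb, cb⟩, ⟨xa, ha, na, ca⟩, ⟨xa, ha, na, ca⟩⟩
      · rw [h12] at hn
        have : ((24 : ℕ) : ℚ) = (El H).card := by rw [← hn]; norm_num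
        exact_mod_cast this.symm
      · intro x hx hxn
        rcases Finset.mem_union.1 (hsub ((hS x).2 ⟨hx, hxn⟩)) with h | h
        · right; left; rw [Orb_card_Cen na h, ca]
        · left; rw [Orb_card_Cen nb h, cb]
    rcases d1 with ⟨da, dra, dua⟩ | ⟨da, dra, dua⟩ <;> rcases d2 with ⟨db, drb, dub⟩ | ⟨db, drb, dub⟩
    · exfalso; linarith
    · obtain ⟨h1, h2, h3⟩ := main e1 e2 w1 w2 t1 t2 b1 b1' b2 b2' drb db (by linarith)
      exact fin x1 x2 k1 n1 k2 n2 hSeq.subset (by rw [c1, h1]) (by rw [c2, h2]) h3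
    · obtain ⟨h1, h2, h3⟩ := main e2 e1 w2 w1 t2 t1 b2 b2' b1 b1' dra da (by linarith)
      exact fin x2 x1 k2 n2 k1 n1 (by rw [hSeq, Finset.union_comm]) (by rw [c2, h1])
        (by rw [c1, h2]) h3
    · exfalso; linarith
  obtain ⟨x3, hx3, m3⟩ := (S \ (Orb H x1 ∪ Orb H x2)).exists_min_image (fun x => (Cen H x).card)
    (Finset.nonempty_iff_ne_empty.2 hr2)
  rw [Finset.mem_sdiff, Finset.mem_union, not_or] at hx3
  obtain ⟨k3, n3⟩ := (hS x3).1 hx3.1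
  obtain ⟨e3, w3, c3, t3, q3, d3⟩ := class_data hneg k3 n3 (hu x3 k3 n3) hn
  have b3 := w_bound q3 (by rcases d3 with d | d <;> linarith [d.1])
  have b3' := w_eq q3
  have dis13 := Orb_disjoint k3 n3 hx3.2.1
  have dis23 := Orb_disjoint k3 n3 hx3.2.2
  have dis3 : Disjoint (Orb H x1 ∪ Orb H x2) (Orb H x3) := Finset.disjoint_union_left.2 ⟨dis13, dis23⟩
  have e23 : e2 ≤ e3 := by
    have := m2 x3 (Finset.mem_sdiff.2 ⟨hx3.1, hx3.2.1⟩); rw [c3, c2] at this; omega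
  have f3 := b3 2 t3
  push_cast at f3
  have hu3 : Orb H x1 ∪ Orb H x2 ∪ Orb H x3 ⊆ S :=
    Finset.union_subset (Finset.union_subset (hOS _) (hOS _)) (hOS _)
  have hc3 : ((Orb H x1 ∪ Orb H x2 ∪ Orb H x3).card : ℚ) =
      (Orb H x1).card + (Orb H x2).card + (Orb H x3).card := by
    rw [Finset.card_union_of_disjoint dis3, Finset.card_union_of_disjoint dis12]; push_cast; rfl
  have low1 : n / 2 ≤ (Orb H x1).card := by rcases d1 with ⟨_, _, d⟩ | ⟨_, _, d⟩ <;> rw [d] <;> linarith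
  have low2 : n / 2 ≤ (Orb H x2).card := by rcases d2 with ⟨_, _, d⟩ | ⟨_, _, d⟩ <;> rw [d] <;> linarith
  have low3 : n / 2 ≤ (Orb H x3).card := by rcases d3 with ⟨_, _, d⟩ | ⟨_, _, d⟩ <;> rw [d] <;> linarith
  have hS3 : S = Orb H x1 ∪ Orb H x2 ∪ Orb H x3 := by
    apply Finset.Subset.antisymm _ hu3
    intro x hx
    by_contra hx4
    obtain ⟨k4, n4⟩ := (hS x).1 hx
    obtain ⟨e4, w4, c4, t4, q4, d4⟩ := class_data hneg k4 n4 (hu x k4 n4) hn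
    have f4 := w_bound q4 (by rcases d4 with d | d <;> linarith [d.1]) 2 t4
    push_cast at f4
    have low4 : n / 2 ≤ (Orb H x).card := by
      rcases d4 with ⟨_, _, d⟩ | ⟨_, _, d⟩ <;> rw [d] <;> linarith
    simp only [Finset.mem_union, not_or] at hx4
    have dis4 : Disjoint (Orb H x1 ∪ Orb H x2 ∪ Orb H x3) (Orb H x) :=
      Finset.disjoint_union_left.2 ⟨Finset.disjoint_union_left.2
        ⟨Orb_disjoint k4 n4 hx4.1.1, Orb_disjoint k4 n4 hx4.1.2⟩, Orb_disjoint k4 n4 hx4.2⟩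
    have := Finset.card_le_card (Finset.union_subset hu3 (hOS x))
    rw [Finset.card_union_of_disjoint dis4] at this
    have h' : ((Orb H x1 ∪ Orb H x2 ∪ Orb H x3).card : ℚ) + (Orb H x).card ≤ S.card := by
      exact_mod_cast this
    linarith
  rw [hS3, hc3] at hScard
  have conc : ∀ m : ℕ, (m = 3 ∧ n = 12 ∨ m = 4 ∧ n = 24 ∨ m = 5 ∧ n = 60) → e1 = 2 → e2 = 3 →
      e3 = m → ∃ m : ℕ,
        (m = 3 ∧ (El H).card = 24 ∨ m = 4 ∧ (El H).card = 48 ∨ m = 5 ∧ (El H).card = 120) ∧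
      (∀ x ∈ H, NC x → (Cen H x).card = 2 * 2 ∨ (Cen H x).card = 2 * 3 ∨
        (Cen H x).card = 2 * m) ∧
      (∃ x ∈ H, NC x ∧ (Cen H x).card = 2 * 2) ∧ (∃ x ∈ H, NC x ∧ (Cen H x).card = 2 * 3) ∧
      (∃ x ∈ H, NC x ∧ (Cen H x).card = 2 * m) := by
    intro m hm h1 h2 h3
    rw [h1] at c1; rw [h2] at c2; rw [h3] at c3
    refine ⟨m, ?_, ?_, ⟨x1, k1, n1, c1⟩, ⟨x2, k2, n2, c2⟩, ⟨x3, k3, n3, c3⟩⟩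
    · rcases hm with ⟨h, h'⟩ | ⟨h, h'⟩ | ⟨h, h'⟩
      · left; refine ⟨h, ?_⟩
        have : ((24 : ℕ) : ℚ) = (El H).card := by rw [← hn, h']; norm_num
        exact_mod_cast this.symm
      · right; left; refine ⟨h, ?_⟩
        have : ((48 : ℕ) : ℚ) = (El H).card := by rw [← hn, h']; norm_num
        exact_mod_cast this.symm
      · right; right; refine ⟨h, ?_⟩
        have : ((120 : ℕ) : ℚ) = (El H).card := by rw [← hn, h']; norm_num
        exact_mod_cast this.symm
    · intro x hx hxn
      have hxS := (hS x).2 ⟨hx, hxn⟩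
      rw [hS3, Finset.mem_union, Finset.mem_union] at hxS
      rcases hxS with (h | h) | h
      · left; rw [Orb_card_Cen n1 h, c1]
      · right; left; rw [Orb_card_Cen n2 h, c2]
      · right; right; rw [Orb_card_Cen n3 h, c3]
  have hsum : n + 2 = w1 + w2 + w3 ∧ (w3 = 2 → Red H) := by
    rcases d1 with ⟨da, dra, dua⟩ | ⟨da, dra, dua⟩ <;>
    rcases d2 with ⟨db, drb, dub⟩ | ⟨db, drb, dub⟩ <;>
    rcases d3 with ⟨dc, drc, duc⟩ | ⟨dc, drc, duc⟩
    all_goals first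
      | exact ⟨by linarith, drc⟩
      | (exfalso; linarith)
  obtain ⟨hsum, hr3⟩ := hsum
  rcases (by omega : e1 = 2 ∨ 3 ≤ e1) with h1 | h1
  · have g1 := b1' 2 h1; push_cast at g1
    rcases (by omega : e2 = 2 ∨ e2 = 3 ∨ 4 ≤ e2) with h2 | h2 | h2
    · have g2 := b2' 2 h2; push_cast at g2
      exact absurd (hr3 (by linarith)) hred
    · have g2 := b2' 3 h2; push_cast at g2
      rcases (by omega : e3 = 3 ∨ e3 = 4 ∨ e3 = 5 ∨ 6 ≤ e3) with h3 | h3 | h3 | h3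
      · have g3 := b3' 3 h3; push_cast at g3
        exact conc 3 (Or.inl ⟨rfl, by linarith⟩) h1 h2 h3
      · have g3 := b3' 4 h3; push_cast at g3
        exact conc 4 (Or.inr (Or.inl ⟨rfl, by linarith⟩)) h1 h2 h3
      · have g3 := b3' 5 h3; push_cast at g3
        exact conc 5 (Or.inr (Or.inr ⟨rfl, by linarith⟩)) h1 h2 h3
      · have g3 := b3 6 h3; push_cast at g3
        exfalso; linarith
    · have g2 := b2 4 h2; push_cast at g2
      have g3 := b3 4 (h2.trans e23); push_cast at g3
      exfalso; linarith
  · have g1 := b1 3 h1; push_cast at g1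
    have g2 := b2 3 (h1.trans e12); push_cast at g2
    have g3 := b3 3 ((h1.trans e12).trans e23); push_cast at g3
    exfalso; linarith

theorem Cen_pow [NeZero (2 : F)] {H : Subgroup (SL F)} (hneg : -1 ∈ H) {x : SL F} (hxH : x ∈ H)
    {e : ℕ} (h : (Cen H x).card = 2 * e) : x ^ (2 * e) = 1 := by
  obtain ⟨e', he, _, h2⟩ := Cen_even hneg x
  have : e = e' := by omega
  subst this
  exact h2 x (mem_Cen.2 ⟨hxH, rfl⟩)

theorem exists_trace_two [NeZero (2 : F)] {H : Subgroup (SL F)} (hneg : -1 ∈ H) {x : SL F}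
    (hx : NC x) (hxH : x ∈ H) (h : (Cen H x).card = 2 * 4) :
    ∃ y ∈ H, NC y ∧ (mat y).trace ^ 2 = 2 := by
  classical
  by_contra hcon
  push Not at hcon
  have h0 : ∀ y ∈ Cen H x, NC y → (mat y).trace = 0 := by
    intro y hy hyn
    obtain ⟨e', he, _, h2⟩ := Cen_even hneg x
    have : e' = 4 := by omega
    subst this
    rcases (trace_of_pow hyn).2.2.1 (h2 y hy) with h | h
    · exact h
    · exact absurd h (hcon y (mem_Cen.1 hy).1 hyn)
  have hx0 := h0 x (mem_Cen.2 ⟨hxH, rfl⟩) hx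
  have hsub : Cen H x ⊆ {1, -1, x, -x} := by
    intro y hy
    simp only [Finset.mem_insert, Finset.mem_singleton]
    by_cases hyn : NC y
    · have ty := h0 y hy hyn
      have h4 : (mat x).trace ^ 2 ≠ 4 := by
        rw [hx0]
        intro h
        exact mul_ne_zero (two_ne_zero (α := F)) (two_ne_zero (α := F)) (by linear_combination -h)
      rcases eq_or_inv hx h4 (mem_Cen.1 hy).2 (by rw [ty, hx0]) with h | h
      · simp [h]
      · right; right; right
        rw [h]; apply mat_inj; rw [mat_inv, hx0, mat_neg]; simp
    · have : y = 1 ∨ y = -1 := by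
        by_contra h'; push Not at h'; exact hyn h'
      tauto
  have h1 := Finset.card_le_card hsub
  have h2 : ({1, -1, x, -x} : Finset (SL F)).card ≤ 4 := Finset.card_le_four
  omega

/-- A subgroup without unipotent elements: its noncentral elements are partitioned by the conjugates
of centralizers, and the class equation leaves the reducible case and three exceptional ones. -/
theorem dickson_aux [NeZero (2 : F)] {H : Subgroup (SL F)} (hneg : -1 ∈ H)
    (hu : ∀ x ∈ H, NC x → (mat x).trace ^ 2 ≠ 4) :
    Red H ∨ TypeT H ∨ TypeO H ∨ TypeI H := by
  by_cases hred : Red H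
  · exact Or.inl hred
  right
  obtain ⟨m, hm, hall, ⟨x2, k2, n2, c2⟩, ⟨x3, k3, n3, c3⟩, ⟨x4, k4, n4, c4⟩⟩ :=
    class_equation hneg hu hred
  rw [card_El] at hm
  have tr2 : ∀ x ∈ H, NC x → (Cen H x).card = 2 * 2 → (mat x).trace = 0 :=
    fun x hx hn h => (trace_of_pow hn).1 (Cen_pow hneg hx h)
  have tr3 : ∀ x ∈ H, NC x → (Cen H x).card = 2 * 3 → (mat x).trace ^ 2 = 1 :=
    fun x hx hn h => (trace_of_pow hn).2.1 (Cen_pow hneg hx h)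
  have i2 : ∃ x ∈ H, NC x ∧ (mat x).trace = 0 := ⟨x2, k2, n2, tr2 x2 k2 n2 c2⟩
  have i3 : ∃ x ∈ H, NC x ∧ (mat x).trace ^ 2 = 1 := ⟨x3, k3, n3, tr3 x3 k3 n3 c3⟩
  rcases hm with ⟨rfl, hc⟩ | ⟨rfl, hc⟩ | ⟨rfl, hc⟩
  · left
    refine ⟨hc, fun x hx hn => ?_, i2, i3⟩
    rcases hall x hx hn with h | h | h
    · exact Or.inl (tr2 x hx hn h)
    · exact Or.inr (tr3 x hx hn h)
    · exact Or.inr (tr3 x hx hn h)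
  · right; left
    refine ⟨hc, fun x hx hn => ?_, i2, i3, exists_trace_two hneg n4 k4 c4⟩
    rcases hall x hx hn with h | h | h
    · exact Or.inl (tr2 x hx hn h)
    · exact Or.inr (Or.inl (tr3 x hx hn h))
    · have := (trace_of_pow hn).2.2.1 (Cen_pow hneg hx h); tauto
  · right; right
    refine ⟨hc, fun x hx hn => ?_, i2, i3, ⟨x4, k4, n4, ?_⟩⟩
    · rcases hall x hx hn with h | h | h
      · exact Or.inl (tr2 x hx hn h)
      · exact Or.inr (Or.inl (tr3 x hx hn h))
      · exact Or.inr (Or.inr ((trace_of_pow hn).2.2.2 (Cen_pow hneg hx h)))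
    · exact (trace_of_pow n4).2.2.2 (Cen_pow hneg k4 c4)
end Dickson

/-- Dickson's list of proper subgroups containing `-1`. -/
theorem dickson {p : ℕ} [Fact p.Prime] [NeZero (2 : ZMod p)] (H : Subgroup (SL (ZMod p)))
    (hH : H ≠ ⊤) (hneg : -1 ∈ H) : Red H ∨ TypeT H ∨ TypeO H ∨ TypeI H := by
  by_cases h : ∃ x ∈ H, NC x ∧ (mat x).trace ^ 2 = 4
  · obtain ⟨x, hx, hn, ht⟩ := h
    exact Or.inl (red_of_unip H hH hneg hx hn.1 hn.2 ht)
  · push Not at h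
    exact dickson_aux hneg h

/-! ### Conjugacy and square roots in the base field -/

section Conj
variable {F : Type*} [Field F]

theorem companion {A : Mat F} (hA : ¬ Scal A) :
    ∃ S : Mat F, S.det ≠ 0 ∧ A * S = S * !![0, -A.det; 1, A.trace] := by
  by_cases hc : A 1 0 = 0
  · by_cases hb : A 0 1 = 0
    · refine ⟨!![1, A 0 0; 1, A 1 1], ?_, ?_⟩
      · rw [det_fin_two_of]
        intro h
        apply hA
        refine ⟨A 0 0, ext2 ?_ ?_ ?_ ?_⟩ <;> simp [hb, hc]
        linear_combination h
      · apply ext2 <;>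
          simp [Matrix.mul_apply, Fin.sum_univ_two, trace_fin_two, det_fin_two, hb, hc] <;> ring
    · refine ⟨!![0, A 0 1; 1, A 1 1], ?_, ?_⟩
      · rw [det_fin_two_of]; simpa using hb
      · apply ext2 <;>
          simp [Matrix.mul_apply, Fin.sum_univ_two, trace_fin_two, det_fin_two] <;> ring
  · refine ⟨!![1, A 0 0; 0, A 1 0], ?_, ?_⟩
    · rw [det_fin_two_of]; simpa using hc
    · apply ext2 <;>
          simp [Matrix.mul_apply, Fin.sum_univ_two, trace_fin_two, det_fin_two] <;> ring

variable [Fintype F] [NeZero (2 : F)]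

theorem norm_surj {t d c : F} (hd : t ^ 2 - 4 * d ≠ 0) :
    ∃ a b : F, a ^ 2 + a * b * t + b ^ 2 * d = c := by
  have h2 : (2 : F) ≠ 0 := two_ne_zero
  have hodd : Fintype.card F % 2 = 1 := FiniteField.odd_card_of_char_ne_two (by
    intro h
    haveI : CharP F 2 := ringChar.eq_iff.1 h
    exact h2 (by exact_mod_cast CharP.cast_eq_zero F 2))
  obtain ⟨x, y, h⟩ := FiniteField.exists_root_sum_quadratic
    (f := Polynomial.X ^ 2 - Polynomial.C c)
    (g := Polynomial.C (-(t ^ 2 - 4 * d)) * Polynomial.X ^ 2)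
    (Polynomial.degree_X_pow_sub_C (by norm_num) c)
    (by rw [Polynomial.degree_C_mul_X_pow 2 (neg_ne_zero.2 hd)]; rfl) hodd
  simp at h
  refine ⟨x - y * t, 2 * y, ?_⟩
  linear_combination h

/-- Two matrices with the same separable characteristic polynomial are conjugate in `SL₂`. -/
theorem conj_mat {A B : Mat F} (hA : ¬ Scal A) (hB : ¬ Scal B) (ht : A.trace = B.trace)
    (hd : A.det = B.det) (hdisc : A.trace ^ 2 - 4 * A.det ≠ 0) :
    ∃ g : SL F, mat g * A = B * mat g := by
  obtain ⟨S, hS, eS⟩ := companion hA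
  obtain ⟨T, hT, eT⟩ := companion hB
  have e1 : adjugate S * A = !![0, -A.det; 1, A.trace] * adjugate S := by
    have : adjugate S * (A * S) * adjugate S =
        adjugate S * (S * !![0, -A.det; 1, A.trace]) * adjugate S := by rw [eS]
    rw [← Matrix.mul_assoc, Matrix.mul_assoc, mul_adjugate, ← Matrix.mul_assoc (adjugate S) S,
      adjugate_mul, Matrix.mul_smul, mul_one, smul_mul_assoc, one_mul, smul_mul_assoc] at this
    exact smul_right_injective _ hS this
  rw [ht, hd] at e1
  have hPdet : (T * adjugate S).det ≠ 0 := by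
    rw [det_mul, det_adjugate]; simp [hS, hT]
  have eP : (T * adjugate S) * A = B * (T * adjugate S) := by
    rw [Matrix.mul_assoc, e1, ← Matrix.mul_assoc, ← eT, Matrix.mul_assoc]
  obtain ⟨a, b, hab⟩ := norm_surj (c := (T * adjugate S).det⁻¹) hdisc
  have hQ : (a • (1 : Mat F) + b • A).det = (T * adjugate S).det⁻¹ := by
    rw [← hab]; simp [det_fin_two, trace_fin_two]; ring
  refine ⟨mk ((T * adjugate S) * (a • (1 : Mat F) + b • A)) ?_, ?_⟩
  · rw [det_mul, hQ, mul_inv_cancel₀ hPdet]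
  · rw [mat_mk, Matrix.mul_assoc]
    have : (a • (1 : Mat F) + b • A) * A = A * (a • (1 : Mat F) + b • A) := by
      simp only [add_mul, mul_add, smul_mul_assoc, mul_smul_comm, one_mul, mul_one]
    rw [this, ← Matrix.mul_assoc, eP, Matrix.mul_assoc]

/-- Noncentral elements of `SL₂` with the same trace `t`, `t ^ 2 ≠ 4`, are conjugate in `SL₂`. -/
theorem conj_SL {x y : SL F} (hx : NC x) (hy : NC y) (ht : (mat x).trace = (mat y).trace)
    (h4 : (mat x).trace ^ 2 ≠ 4) : ∃ g : SL F, g * x * g⁻¹ = y := by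
  obtain ⟨g, hg⟩ := conj_mat hx.not_scal hy.not_scal ht (by rw [mat_det, mat_det])
    (by rw [mat_det]; intro h; exact h4 (by linear_combination h))
  refine ⟨g, ?_⟩
  rw [mul_inv_eq_iff_eq_mul]
  apply mat_inj
  rw [mat_mul, mat_mul, hg]
end Conj

/-- The arithmetic of the field that is used: square roots of `-1`, `2`, a golden ratio `f`, a
square root `z` of `f² - 4`, and `-3` is not a square. -/
structure Consts (F : Type*) [Field F] where
  i : F
  r : F
  f : F
  z : F
  i2 : i ^ 2 = -1
  r2 : r ^ 2 = 2
  f2 : f ^ 2 = f + 1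
  z2 : z ^ 2 = f ^ 2 - 4
  n3 : ∀ s : F, s ^ 2 ≠ -3
  h2 : (2 : F) ≠ 0
  h3 : (3 : F) ≠ 0
  h5 : (5 : F) ≠ 0

theorem exists_consts (p : ℕ) [hp : Fact p.Prime] (h40 : p % 40 = 1) (h3 : p % 3 = 2) :
    Nonempty (Consts (ZMod p)) := by
  have h1 : p ≠ 1 := hp.out.one_lt.ne'
  have hnum : ∀ n : ℕ, 0 < n → n < 41 → (n : ZMod p) ≠ 0 := by
    intro n h0 hn h
    rw [ZMod.natCast_eq_zero_iff] at h
    have := Nat.le_of_dvd h0 h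
    omega
  have h2' : (2 : ZMod p) ≠ 0 := by exact_mod_cast hnum 2 (by norm_num) (by norm_num)
  have h3' : (3 : ZMod p) ≠ 0 := by exact_mod_cast hnum 3 (by norm_num) (by norm_num)
  have h5' : (5 : ZMod p) ≠ 0 := by exact_mod_cast hnum 5 (by norm_num) (by norm_num)
  obtain ⟨i, hi⟩ := (ZMod.exists_sq_eq_neg_one_iff (p := p)).2 (by omega)
  obtain ⟨r, hr⟩ := (ZMod.exists_sq_eq_two_iff (p := p) (by rintro rfl; omega)).2 (by omega)
  have hcard : Fintype.card (ZMod p)ˣ = p - 1 := ZMod.card_units p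
  have : Fact (Nat.Prime 5) := ⟨by norm_num⟩
  obtain ⟨u, hu⟩ := exists_prime_orderOf_dvd_card (G := (ZMod p)ˣ) 5 (by rw [hcard]; omega)
  have hu5 : (u : ZMod p) ^ 5 = 1 := by
    have := pow_orderOf_eq_one u
    rw [hu] at this
    have := congrArg Units.val this
    rwa [Units.val_pow_eq_pow_val, Units.val_one] at this
  have hu1 : (u : ZMod p) ≠ 1 := by
    intro h
    have : u = 1 := by ext; simpa using h
    rw [this, orderOf_one] at hu
    omega
  have hu0 : (u : ZMod p) ≠ 0 := u.ne_zero
  obtain ⟨v, hv⟩ : ∃ v : ZMod p, v = (u : ZMod p) := ⟨_, rfl⟩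
  rw [← hv] at hu5 hu1 hu0
  have hcyc : v ^ 4 + v ^ 3 + v ^ 2 + v + 1 = 0 := by
    have : (v - 1) * (v ^ 4 + v ^ 3 + v ^ 2 + v + 1) = 0 := by linear_combination hu5
    rcases mul_eq_zero.1 this with h | h
    · exact absurd (sub_eq_zero.1 h) hu1
    · exact h
  refine ⟨⟨i, r, -(v + v⁻¹), v - v⁻¹, ?_, ?_, ?_, ?_, ?_, h2', h3', h5'⟩⟩
  · rw [pow_two]; exact hi.symm
  · rw [pow_two]; exact hr.symm
  · field_simp; linear_combination hcyc
  · field_simp; ring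
  · intro s hs
    have hw : ((s - 1) / 2) ^ 3 = 1 := by
      field_simp; linear_combination (s - 3) * hs
    have hw1 : (s - 1) / 2 ≠ 1 := by
      intro h
      rw [div_eq_iff h2'] at h
      have h' : s = 3 := by linear_combination h
      rw [h'] at hs
      exact mul_ne_zero (mul_ne_zero h2' h2') h3' (by linear_combination hs)
    have hw0 : (s - 1) / 2 ≠ 0 := by
      intro h; rw [h] at hw; simp at hw
    have ho : orderOf (Units.mk0 _ hw0) = 3 := by
      have : Fact (Nat.Prime 3) := ⟨by norm_num⟩
      apply orderOf_eq_prime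
      · ext; simpa using hw
      · intro h; apply hw1; simpa using congrArg Units.val h
    have := orderOf_dvd_card (x := Units.mk0 _ hw0)
    rw [ho, hcard] at this
    omega

/-! ### A finite check over `ℤ[√2, (1+√5)/2]` -/

/-- `a + b r + c f + d r f`, an element of `ℤ[r, f]` with `r² = 2` and `f² = f + 1`. -/
structure R where
  a : ℤ
  b : ℤ
  c : ℤ
  d : ℤ

/-- Equality of integers, in a form that is fast to evaluate. -/
def ieq : ℤ → ℤ → Bool
  | .ofNat m, .ofNat n => m.beq n
  | .negSucc m, .negSucc n => m.beq n
  | _, _ => false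

namespace R
def ofInt (n : ℤ) : R := ⟨n, 0, 0, 0⟩
def add : R → R → R
  | ⟨a, b, c, d⟩, ⟨a', b', c', d'⟩ => ⟨.add a a', .add b b', .add c c', .add d d'⟩
def sub : R → R → R
  | ⟨a, b, c, d⟩, ⟨a', b', c', d'⟩ => ⟨.sub a a', .sub b b', .sub c c', .sub d d'⟩
def neg : R → R
  | ⟨a, b, c, d⟩ => ⟨.neg a, .neg b, .neg c, .neg d⟩
def mul : R → R → R
  | ⟨a, b, c, d⟩, ⟨a', b', c', d'⟩ =>
    let cc := Int.mul c c'
    let dd := Int.mul 2 (.mul d d')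
    let cd := Int.add (.mul c d') (.mul d c')
    ⟨.add (.add (.mul a a') (.mul 2 (.mul b b'))) (.add cc dd),
     .add (.add (.mul a b') (.mul b a')) cd,
     .add (.add (.add (.mul a c') (.mul c a')) (.mul 2 (.add (.mul b d') (.mul d b')))) (.add cc dd),
     .add (.add (.add (.mul a d') (.mul d a')) (.add (.mul b c') (.mul c b'))) cd⟩
/-- The norm to `ℤ`. -/
def norm : R → ℤ
  | ⟨a, b, c, d⟩ =>
    let e := Int.sub (.mul c c) (.mul 2 (.mul d d))
    let u := Int.add (.sub (.mul a a) (.mul 2 (.mul b b))) e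
    let v := Int.add (.sub (.mul 2 (.mul a c)) (.mul 4 (.mul b d))) e
    .sub (.add (.mul u u) (.mul u v)) (.mul v v)
instance : Add R := ⟨add⟩
instance : Sub R := ⟨sub⟩
instance : Neg R := ⟨neg⟩
instance : Mul R := ⟨mul⟩
def beq : R → R → Bool
  | ⟨a, b, c, d⟩, ⟨a', b', c', d'⟩ =>
    ieq a a' && ieq b b' && ieq c c' && ieq d d'
end R

/-- A number whose prime factors are all less than `41`. -/
def smooth : ℕ :=
  189440899156242768942779436337345847091094460108875062955245236398325760000000000000000

/-- A test that guarantees that an element is nonzero in every field of characteristic `≥ 41`. -/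
def nz (x : R) : Bool := !(Nat.beq x.norm.natAbs 0) && Nat.beq (Nat.mod smooth x.norm.natAbs) 0

/-- The inner products that occur, numbered from `0` to `10`. -/
def val : ℕ → R
  | 0 => ⟨0, 0, 0, 0⟩
  | 1 => ⟨1, 0, 0, 0⟩
  | 2 => ⟨-1, 0, 0, 0⟩
  | 3 => ⟨0, 1, 0, 0⟩
  | 4 => ⟨0, -1, 0, 0⟩
  | 5 => ⟨0, 0, 1, 0⟩
  | 6 => ⟨0, 0, -1, 0⟩
  | 7 => ⟨1, 0, -1, 0⟩
  | 8 => ⟨-1, 0, 1, 0⟩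
  | 9 => ⟨2, 0, 0, 0⟩
  | _ => ⟨-2, 0, 0, 0⟩

/-- Traces in binary octahedral groups. -/
def lO : List R := [val 0, val 1, val 2, val 3, val 4]
/-- Traces in binary icosahedral groups. -/
def lI : List R := [val 0, val 1, val 2, val 5, val 6, val 7, val 8]

/-- `x` might coincide with a member of `l` in some field of characteristic `≥ 41`. -/
def inl (x : R) (l : List R) : Bool := l.any fun y => !nz (x - y)

/-- Determinant of a symmetric matrix of size 3. -/
def det3 (p q s x y z : R) : R := p * (q * s - z * z) - x * (x * s - z * y) + y * (x * z - q * y)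

/-- Necessary condition on three half-turns. -/
def t222 (x y z : R) : Bool :=
  let D := det3 (.ofInt 2) (.ofInt 2) (.ofInt 2) x y z
  !nz D || (!nz x && !nz y) || (!nz x && !nz z) || (!nz y && !nz z) ||
  [lO, lI].any fun T => inl x T && inl y T && inl z T &&
    T.any fun t => !nz (.ofInt 2 * (t * t) - D)

/-- Necessary condition on a rotation of order three and two half-turns. -/
def t322 (x y z : R) : Bool :=
  let D := det3 (.ofInt 6) (.ofInt 2) (.ofInt 2) x y z
  (!nz x && !nz y) ||
  [lO, lI].any fun T => inl z T && T.any fun t =>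
    !nz (.ofInt 2 * ((t + t + z) * (t + t + z)) - D) && inl (-(t + z)) T

/-- Necessary condition on two rotations of order three and a half-turn. -/
def t332 (w x y : R) : Bool :=
  let D := det3 (.ofInt 6) (.ofInt 6) (.ofInt 2) w x y
  [lO, lI].any fun T => T.any fun t =>
    !nz (.ofInt 2 * ((.ofInt 4 * t + x + y) * (.ofInt 4 * t + x + y)) - D) &&
    T.any fun q => !nz (-(t + t + x + y) - (q + q))

/-- Bit `121 a + 11 b + c` of these tables records whether `t222`, `t322`, `t332` hold at
`val a`, `val b`, `val c`. -/
def tab222 : ℕ := 149898189401931947472982257096940334914553884302431556948054544118712089334014240109889805673654065322166238279908779470625977490349281768763261668328003144588235487562812323650378795373602344931773578063708173004137152104391793458163856723762103158062262375046131009262613758890600130999254473224014868182810583119165951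
/-- The table for `t322`, see `tab222`. -/
def tab322 : ℕ :=
  3734259460370986153287946675182057897207027333237268077496560121993912461471689078094133023702457503060802955741317922948249156464139219372794599966380434809255687523304253733380128903202589116020623787343128511115471920060207836292535182012077077945754166425493958451061594745010880595058191936821741483867991792698015364961199231751930325013032674993223016556043477909040851123478540848609145913855
/-- The table for `t332`, see `tab222`. -/
def tab332 : ℕ :=
  35194933589265062937102080830580408667393392813191713859849530270378884585708410539429666860855200866408919237478910847663092874577313239520272629035785770953739442344891082143591278094373657670808380389695721367556808915589212225053371800851325112915468945287814425283318125811856280452039086295336156675791059175797469076276916791319590595193124725650187273858828572656620206604458371320091227717632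

/-- Lookup in one of the three tables. -/
def bit (tab a b c : ℕ) : Bool :=
  Nat.beq (Nat.mod (Nat.shiftRight tab (.add (.mul a 121) (.add (.mul b 11) c))) 2) 1

/-- Codes allowed for the pair `(i, j)` when the first `k` elements have order three. -/
def codes (k i j : ℕ) : List ℕ :=
  bif j.blt k then [9, 10] else bif i.blt k then [0, 9, 10] else [0, 1, 2, 3, 4, 5, 6, 7, 8]
/-- Codes up to sign. -/
def codesP (k i j : ℕ) : List ℕ :=
  bif j.blt k then [9] else bif i.blt k then [0, 9] else [0, 1, 3, 5, 7]

/-- The condition on the triple `(i, j, l)` whose pairs have the codes `a`, `b`, `c`, when the first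
`k` elements have order three. Nothing is required of three elements of order three. -/
def tri (k i j l a b c : ℕ) : Bool :=
  bif l.blt k then true else bif j.blt k then bit tab332 a b c else
  bif i.blt k then bit tab322 a b c else bit tab222 a b c

theorem tab222_ok : ((codes 0 0 1).all fun a => (codes 0 0 1).all fun b => (codes 0 0 1).all fun c =>
    !(t222 (val a) (val b) (val c)) || bit tab222 a b c) = true := by
  decide +kernel
theorem tab322_ok : ((codes 1 0 1).all fun a => (codes 1 0 1).all fun b => (codes 0 0 1).all fun c =>
    !(t322 (val a) (val b) (val c)) || bit tab322 a b c) = true := by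
  decide +kernel
theorem tab332_ok : ((codes 2 0 1).all fun a => (codes 1 0 1).all fun b => (codes 1 0 1).all fun c =>
    !(t332 (val a) (val b) (val c)) || bit tab332 a b c) = true := by
  decide +kernel

/-! ### The search over Gram matrices -/

/-- A vector with four entries in `ℤ[r, f]`. -/
structure Row where
  x0 : R
  x1 : R
  x2 : R
  x3 : R

/-- The entries of a row; all indices above `2` give the last one. -/
def Row.get (u : Row) : ℕ → R
  | 0 => u.x0
  | 1 => u.x1
  | 2 => u.x2
  | _ => u.x3

/-- A symmetric matrix of size four, given by its rows. -/
structure Gram where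
  r0 : Row
  r1 : Row
  r2 : Row
  r3 : Row

/-- The rows of a matrix; all indices above `2` give the last one. -/
def Gram.row (G : Gram) : ℕ → Row
  | 0 => G.r0
  | 1 => G.r1
  | 2 => G.r2
  | _ => G.r3

/-- The squared length of the `i`-th vector. -/
def dg (k i : ℕ) : R := bif i.blt k then .ofInt 6 else .ofInt 2

/-- The Gram matrix with given codes. -/
def gram (k a b x c y z : ℕ) : Gram :=
  ⟨⟨dg k 0, val a, val b, val c⟩, ⟨val a, dg k 1, val x, val y⟩,
   ⟨val b, val x, dg k 2, val z⟩, ⟨val c, val y, val z, dg k 3⟩⟩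

/-- The effect of a half-turn about the `i`-th vector on a vector of inner products. -/
def act (G : Gram) (u : Row) (i : ℕ) : Row :=
  let c := u.get i
  let w := G.row i
  ⟨.sub (.mul c w.x0) u.x0, .sub (.mul c w.x1) u.x1, .sub (.mul c w.x2) u.x2,
    .sub (.mul c w.x3) u.x3⟩

/-- The half-turns other than `t`. -/
def invs (k t : ℕ) : List ℕ := [0, 1, 2, 3].filter fun i => !i.blt k && !i.beq t
/-- The rotations of order three other than `t`. -/
def ords (k t : ℕ) : List ℕ := [0, 1, 2, 3].filter fun i => i.blt k && !i.beq t

/-- The element `2`. -/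
def two : R := ⟨2, 0, 0, 0⟩
/-- The element `-2`. -/
def mtwo : R := ⟨-2, 0, 0, 0⟩
/-- `x = ±2`. -/
def pm2 (x : R) : Bool := x.beq two || x.beq mtwo
/-- `x = ±1`. -/
def pm1 (x : R) : Bool := x.beq (val 1) || x.beq (val 2)

/-- `u` belongs, up to sign, to one of the half-turns other than `t`. -/
def ruleO (k : ℕ) (G : Gram) (t : ℕ) (u : Row) : Bool :=
  (invs k t).any fun s => (u.get s).beq two && ([0, 1, 2, 3].any fun a => !a.beq t && !a.beq s &&
      ((u.get a).beq ((G.row s).get a) && nz (.ofInt 2 * dg k a - (G.row s).get a * (G.row s).get a)))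
    || (u.get s).beq mtwo && ([0, 1, 2, 3].any fun a => !a.beq t && !a.beq s &&
      ((u.get a).beq (-(G.row s).get a) && nz (.ofInt 2 * dg k a - (G.row s).get a * (G.row s).get a)))
/-- `u` belongs to a half-turn about the common perpendicular of two orthogonal axes of half-turns:
it is, up to sign, their product. -/
def rule2 (k : ℕ) (G : Gram) (t : ℕ) (u : Row) : Bool :=
  (invs k t).any fun a => (u.get a).beq (val 0) && (invs k t).any fun b => !a.beq b &&
    ((u.get b).beq (val 0) && ((G.row a).get b).beq (val 0))
/-- `u` belongs to a half-turn determined by a rotation `m` of order three and a half-turn `b` that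
generate a binary tetrahedral group. -/
def rule3 (k : ℕ) (G : Gram) (t : ℕ) (u : Row) : Bool :=
  (ords k t).any fun m => pm2 (u.get m) && (invs k t).any fun b =>
    (u.get b).beq (val 0) && pm2 ((G.row m).get b)
/-- `u` belongs to a half-turn determined by two rotations of order three that generate a binary
tetrahedral group. -/
def rule4 (k : ℕ) (G : Gram) (t : ℕ) (u : Row) : Bool :=
  (ords k t).any fun m => (ords k t).any fun n => !m.beq n &&
    (((G.row m).get n).beq two && ((u.get m).beq two && (u.get n).beq mtwo ||
      (u.get m).beq mtwo && (u.get n).beq two) ||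
    ((G.row m).get n).beq mtwo && ((u.get m).beq two && (u.get n).beq two ||
      (u.get m).beq mtwo && (u.get n).beq mtwo))
/-- `u` belongs to a rotation of order three about the common perpendicular of the axes of two
half-turns whose product has order three. -/
def rule1 (k : ℕ) (G : Gram) (t : ℕ) (u : Row) : Bool :=
  (invs k t).any fun a => (u.get a).beq (val 0) && (invs k t).any fun b => !a.beq b &&
    ((u.get b).beq (val 0) && pm1 ((G.row a).get b))
/-- Sufficient conditions for an element of the order of the `t`-th one, with inner products `u` with
the four vectors, to lie in the group generated by `-1` and the three elements other than `t`. -/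
def rules (k : ℕ) (G : Gram) (t : ℕ) (u : Row) : Bool :=
  bif t.blt k then rule1 k G t u else
  ruleO k G t u || rule2 k G t u || rule3 k G t u || rule4 k G t u

/-- Indices `t` and words in the half-turns other than `t` that are tried. -/
def cands : ℕ → List (ℕ × List ℕ)
  | 0 => [(1, [2, 0, 3]), (0, [2, 3]), (2, [3, 0, 1]), (0, [3, 1]), (1, [3, 0, 2]), (3, [1, 2]),
      (0, [1, 2]), (3, [0, 1, 0]), (3, [2, 0]), (0, [2, 3, 1]), (1, [2])]
  | 1 => [(0, []), (1, [3]), (3, [2]), (2, [1])]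
  | 2 => [(3, [2]), (2, []), (3, [])]
  | _ => [(3, [])]

/-- Some element, conjugated by a word in the half-turns among the other three, is recognised as a
member of the group generated by these three and `-1`. -/
def dep (k : ℕ) (G : Gram) : Bool :=
  (cands k).any fun q => rules k G q.1 (q.2.foldl (act G) (G.row q.1))

/-- The class of a code up to sign. -/
def cls (a : ℕ) : ℕ := Nat.div (Nat.add a 1) 2
/-- When all elements are half-turns, the first two are assumed to give the largest class. -/
def le (k a x : ℕ) : Bool := bif Nat.blt 0 k then true else Nat.ble (cls x) (cls a)

/-- In every admissible configuration the Gram determinant is nonzero or an element depends on the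
others. The Gram determinant is evaluated as `t det M - vᵀ adj(M) v`, where `M` is the Gram matrix of
the first three vectors and `v` their inner products with the last one. -/
def check (k : ℕ) : Bool :=
  (codesP k 0 1).all fun a => (codesP k 0 2).all fun b => (codes k 1 2).all fun x =>
    !le k a b || !le k a x || !tri k 0 1 2 a b x ||
      (let A00 := R.sub (.mul (dg k 1) (dg k 2)) (.mul (val x) (val x))
      let A01 := R.sub (.mul (val b) (val x)) (.mul (val a) (dg k 2))
      let A02 := R.sub (.mul (val a) (val x)) (.mul (dg k 1) (val b))
      let A11 := R.sub (.mul (dg k 0) (dg k 2)) (.mul (val b) (val b))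
      let A12 := R.sub (.mul (val a) (val b)) (.mul (dg k 0) (val x))
      let A22 := R.sub (.mul (dg k 0) (dg k 1)) (.mul (val a) (val a))
      let dt := R.mul (dg k 3) (.add (.mul (dg k 0) A00) (.add (.mul (val a) A01) (.mul (val b) A02)))
      (codesP k 0 3).all fun c => (codes k 1 3).all fun y =>
      !le k a c || !le k a y || !tri k 0 1 3 a c y ||
        (let U := R.add (.mul A02 (val c)) (.mul A12 (val y))
        let B := R.add U U
        let W := R.mul A01 (.mul (val c) (val y))
        let E := R.sub dt (.add (.add (.mul A00 (.mul (val c) (val c))) (.add W W))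
          (.mul A11 (.mul (val y) (val y))))
        (codes k 2 3).all fun z =>
        !le k a z || !tri k 0 2 3 b c z || (!tri k 1 2 3 x y z ||
          (nz (.sub E (.mul (val z) (.add B (.mul A22 (val z))))) || dep k (gram k a b x c y z)))))

theorem check3 : check 3 = true := by decide +kernel
theorem check2 : check 2 = true := by decide +kernel
theorem check1 : check 1 = true := by decide +kernel
set_option maxRecDepth 100000 in
theorem check0 : check 0 = true := by decide +kernel

/-! ### Evaluation of the finite check in a field -/

section Eval
variable {F : Type*} [Field F] (C : Consts F)

/-- The value in `F` of an element of `ℤ[r, f]`. -/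
def e (x : R) : F := x.a + x.b * C.r + x.c * C.f + x.d * (C.r * C.f)

theorem e_add (x y : R) : e C (R.add x y) = e C x + e C y := by
  obtain ⟨a, b, c, d⟩ := x
  obtain ⟨a', b', c', d'⟩ := y
  change ((a + a' : ℤ) : F) + ((b + b' : ℤ) : F) * C.r + ((c + c' : ℤ) : F) * C.f +
    ((d + d' : ℤ) : F) * (C.r * C.f) = _
  simp only [e]
  push_cast; ring

theorem e_sub (x y : R) : e C (R.sub x y) = e C x - e C y := by
  obtain ⟨a, b, c, d⟩ := x
  obtain ⟨a', b', c', d'⟩ := y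
  change ((a - a' : ℤ) : F) + ((b - b' : ℤ) : F) * C.r + ((c - c' : ℤ) : F) * C.f +
    ((d - d' : ℤ) : F) * (C.r * C.f) = _
  simp only [e]
  push_cast; ring

theorem e_neg (x : R) : e C (R.neg x) = - e C x := by
  obtain ⟨a, b, c, d⟩ := x
  change ((-a : ℤ) : F) + ((-b : ℤ) : F) * C.r + ((-c : ℤ) : F) * C.f +
    ((-d : ℤ) : F) * (C.r * C.f) = _
  simp only [e]
  push_cast; ring

theorem e_mul (x y : R) : e C (R.mul x y) = e C x * e C y := by
  obtain ⟨a, b, c, d⟩ := x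
  obtain ⟨a', b', c', d'⟩ := y
  change ((a * a' + 2 * (b * b') + (c * c' + 2 * (d * d')) : ℤ) : F) +
    ((a * b' + b * a' + (c * d' + d * c') : ℤ) : F) * C.r +
    ((a * c' + c * a' + 2 * (b * d' + d * b') + (c * c' + 2 * (d * d')) : ℤ) : F) * C.f +
    ((a * d' + d * a' + (b * c' + c * b') + (c * d' + d * c') : ℤ) : F) * (C.r * C.f) = _
  simp only [e]
  push_cast
  have h1 := C.r2
  have h2 := C.f2
  linear_combination (-(b * b' : F) - (b * d' + d * b') * C.f - d * d' * C.f ^ 2) * h1 +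
    (-(c * c' : F) - (c * d' + d * c') * C.r - 2 * d * d') * h2

theorem e_mul' (x y : R) : e C (x * y) = e C x * e C y := e_mul C x y
theorem e_add' (x y : R) : e C (x + y) = e C x + e C y := e_add C x y
theorem e_sub' (x y : R) : e C (x - y) = e C x - e C y := e_sub C x y
theorem e_neg' (x : R) : e C (-x) = - e C x := e_neg C x
theorem e_ofInt (n : ℤ) : e C (.ofInt n) = n := by simp [e, R.ofInt]

theorem e_norm (x : R) : ∃ y : F, e C x * y = (x.norm : F) := by
  obtain ⟨a, b, c, d⟩ := x
  have key : (((⟨a, b, c, d⟩ : R).norm : ℤ) : F) =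
      (((a * a - 2 * (b * b) + (c * c - 2 * (d * d))) ^ 2 +
      (a * a - 2 * (b * b) + (c * c - 2 * (d * d))) * (2 * (a * c) - 4 * (b * d) +
        (c * c - 2 * (d * d))) -
      (2 * (a * c) - 4 * (b * d) + (c * c - 2 * (d * d))) ^ 2 : ℤ) : F) := by
    congr 1
    rw [pow_two, pow_two]
    rfl
  rw [key]
  generalize hu : a * a - 2 * (b * b) + (c * c - 2 * (d * d)) = u
  generalize hv : 2 * (a * c) - 4 * (b * d) + (c * c - 2 * (d * d)) = v
  have h1 := C.r2
  have h2 := C.f2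
  refine ⟨(a - b * C.r + c * C.f - d * (C.r * C.f)) * (u + v - v * C.f), ?_⟩
  have e1 : ((a : F) + b * C.r + c * C.f + d * (C.r * C.f)) *
      (a - b * C.r + c * C.f - d * (C.r * C.f)) = u + v * C.f := by
    rw [← hu, ← hv]
    push_cast
    linear_combination (-(b + d * C.f) ^ 2 : F) * h1 + ((c : F) ^ 2 - 2 * d ^ 2) * h2
  rw [e, ← mul_assoc, e1]
  push_cast
  linear_combination (-(v : F) ^ 2) * h2

theorem ieq_iff {m n : ℤ} (h : ieq m n = true) : m = n := by
  cases m <;> cases n <;> simp [ieq] at h <;> simp [h]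

theorem R.beq_eq {x y : R} (h : x.beq y = true) : x = y := by
  obtain ⟨a, b, c, d⟩ := x
  obtain ⟨a', b', c', d'⟩ := y
  simp only [R.beq, Bool.and_eq_true] at h
  rw [ieq_iff h.1.1.1, ieq_iff h.1.1.2, ieq_iff h.1.2, ieq_iff h.2]
end Eval

section Table
variable {p : ℕ} [hp : Fact p.Prime] (C : Consts (ZMod p))

theorem smooth_eq : smooth = (Nat.factorial 37) ^ 2 := by decide +kernel

/-- The norm of `x` is nonzero and divides `(37!)²`, so it is nonzero modulo `p`, hence so is `x`. -/
theorem nz_sound (h41 : 41 ≤ p) {x : R} (h : nz x = true) : e C x ≠ 0 := by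
  intro h0
  simp only [nz, Bool.and_eq_true] at h
  obtain ⟨y, hy⟩ := e_norm C x
  rw [h0, zero_mul] at hy
  have h1 : (p : ℤ) ∣ x.norm := (ZMod.intCast_zmod_eq_zero_iff_dvd _ _).1 hy.symm
  have h2 : p ∣ x.norm.natAbs := Int.natCast_dvd.1 h1
  have h3 : x.norm.natAbs ∣ smooth := Nat.dvd_of_mod_eq_zero (Nat.eq_of_beq_eq_true h.2)
  have h4 := h2.trans h3
  rw [smooth_eq] at h4
  have := (Nat.Prime.dvd_factorial hp.out).1 (hp.out.dvd_of_dvd_pow h4)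
  omega

theorem not_nz (h41 : 41 ≤ p) {x : R} (h : e C x = 0) : (!nz x) = true := by
  by_contra hn
  have : nz x = true := by simpa using hn
  exact nz_sound C h41 this h

/-- Membership of a trace in one of the two lists. -/
def InL (T : List R) (t : ZMod p) : Prop := ∃ y ∈ T, t = e C y

theorem inl_of (h41 : 41 ≤ p) {T : List R} {x : R} (h : InL C T (e C x)) : inl x T = true := by
  obtain ⟨y, hy, h⟩ := h
  rw [inl, List.any_eq_true]
  exact ⟨y, hy, not_nz C h41 (by rw [e_sub', h, sub_self])⟩

theorem e_det3 (a b c x y z : R) : e C (det3 a b c x y z) =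
    e C a * (e C b * e C c - e C z ^ 2) - e C x * (e C x * e C c - e C z * e C y) +
      e C y * (e C x * e C z - e C b * e C y) := by
  simp only [det3, e_add', e_sub', e_mul']; ring

/-- The determinant of a symmetric matrix of size three. -/
def gd3 {F : Type*} [Field F] (a b c x y z : F) : F :=
  a * (b * c - z ^ 2) - x * (x * c - z * y) + y * (x * z - b * y)

theorem bit222 (h41 : 41 ≤ p) {a b c : ℕ} (ha : a ∈ codes 0 0 1) (hb : b ∈ codes 0 0 1)
    (hc : c ∈ codes 0 0 1)
    (h : gd3 2 2 2 (e C (val a)) (e C (val b)) (e C (val c)) = 0 ∨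
      (e C (val a) = 0 ∧ e C (val b) = 0) ∨ (e C (val a) = 0 ∧ e C (val c) = 0) ∨
      (e C (val b) = 0 ∧ e C (val c) = 0) ∨
      ∃ T ∈ [lO, lI], InL C T (e C (val a)) ∧ InL C T (e C (val b)) ∧ InL C T (e C (val c)) ∧
        ∃ t, InL C T t ∧ 2 * t ^ 2 = gd3 2 2 2 (e C (val a)) (e C (val b)) (e C (val c))) :
    bit tab222 a b c = true := by
  have H := tab222_ok
  simp only [List.all_eq_true] at H
  have H := H a ha b hb c hc
  rw [Bool.or_eq_true] at H
  refine H.resolve_left ?_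
  rw [Bool.not_eq_true', Bool.not_eq_false, t222]
  have hD : e C (det3 (.ofInt 2) (.ofInt 2) (.ofInt 2) (val a) (val b) (val c)) =
      gd3 2 2 2 (e C (val a)) (e C (val b)) (e C (val c)) := by
    rw [e_det3, e_ofInt, gd3]; push_cast; ring
  simp only [Bool.or_eq_true, Bool.and_eq_true, List.any_eq_true]
  rcases h with h | h | h | h | ⟨T, hT, h1, h2, h3, t, ⟨y, hy, rfl⟩, h4⟩
  · exact Or.inl (Or.inl (Or.inl (Or.inl (not_nz C h41 (by rw [hD, h])))))
  · exact Or.inl (Or.inl (Or.inl (Or.inr ⟨not_nz C h41 h.1, not_nz C h41 h.2⟩)))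
  · exact Or.inl (Or.inl (Or.inr ⟨not_nz C h41 h.1, not_nz C h41 h.2⟩))
  · exact Or.inl (Or.inr ⟨not_nz C h41 h.1, not_nz C h41 h.2⟩)
  · refine Or.inr ⟨T, hT, ⟨⟨inl_of C h41 h1, inl_of C h41 h2⟩, inl_of C h41 h3⟩, y, hy,
      not_nz C h41 ?_⟩
    rw [e_sub', hD, e_mul', e_mul', e_ofInt, ← h4]; push_cast; ring

theorem bit322 (h41 : 41 ≤ p) {a b c : ℕ} (ha : a ∈ codes 1 0 1) (hb : b ∈ codes 1 0 1)
    (hc : c ∈ codes 0 0 1)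
    (h : (e C (val a) = 0 ∧ e C (val b) = 0) ∨
      ∃ T ∈ [lO, lI], InL C T (e C (val c)) ∧ ∃ t, InL C T t ∧ InL C T (-(t + e C (val c))) ∧
        2 * (2 * t + e C (val c)) ^ 2 = gd3 6 2 2 (e C (val a)) (e C (val b)) (e C (val c))) :
    bit tab322 a b c = true := by
  have H := tab322_ok
  simp only [List.all_eq_true] at H
  have H := H a ha b hb c hc
  rw [Bool.or_eq_true] at H
  refine H.resolve_left ?_
  rw [Bool.not_eq_true', Bool.not_eq_false, t322]
  have hD : e C (det3 (.ofInt 6) (.ofInt 2) (.ofInt 2) (val a) (val b) (val c)) =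
      gd3 6 2 2 (e C (val a)) (e C (val b)) (e C (val c)) := by
    rw [e_det3, e_ofInt, e_ofInt, gd3]; push_cast; ring
  simp only [Bool.or_eq_true, Bool.and_eq_true, List.any_eq_true]
  rcases h with h | ⟨T, hT, h1, t, ⟨y, hy, rfl⟩, h3, h4⟩
  · exact Or.inl ⟨not_nz C h41 h.1, not_nz C h41 h.2⟩
  · refine Or.inr ⟨T, hT, inl_of C h41 h1, y, hy, not_nz C h41 ?_, inl_of C h41 ?_⟩
    · rw [e_sub', hD, e_mul', e_mul', e_add', e_add', e_ofInt, ← h4]; push_cast; ring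
    · rwa [e_neg', e_add']

theorem bit332 (h41 : 41 ≤ p) {a b c : ℕ} (ha : a ∈ codes 2 0 1) (hb : b ∈ codes 1 0 1)
    (hc : c ∈ codes 1 0 1)
    (h : ∃ T ∈ [lO, lI], ∃ t, InL C T t ∧ (∃ q, InL C T q ∧
        2 * q = -(2 * t + e C (val b) + e C (val c))) ∧
        2 * (4 * t + e C (val b) + e C (val c)) ^ 2 =
          gd3 6 6 2 (e C (val a)) (e C (val b)) (e C (val c))) :
    bit tab332 a b c = true := by
  have H := tab332_ok
  simp only [List.all_eq_true] at H
  have H := H a ha b hb c hc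
  rw [Bool.or_eq_true] at H
  refine H.resolve_left ?_
  rw [Bool.not_eq_true', Bool.not_eq_false, t332]
  have hD : e C (det3 (.ofInt 6) (.ofInt 6) (.ofInt 2) (val a) (val b) (val c)) =
      gd3 6 6 2 (e C (val a)) (e C (val b)) (e C (val c)) := by
    rw [e_det3, e_ofInt, e_ofInt, gd3]; push_cast; ring
  simp only [Bool.and_eq_true, List.any_eq_true]
  obtain ⟨T, hT, t, ⟨y, hy, rfl⟩, ⟨q, ⟨q, hq, rfl⟩, h3⟩, h4⟩ := h
  refine ⟨T, hT, y, hy, not_nz C h41 ?_, q, hq, not_nz C h41 ?_⟩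
  · rw [e_sub', hD, e_mul', e_mul', e_add', e_add', e_mul', e_ofInt, e_ofInt, ← h4]
    push_cast; ring
  · rw [e_sub', e_neg', e_add', e_add', e_add', e_add']
    linear_combination -h3

/-- The determinant of a symmetric matrix of size four, in the notation of `check`. -/
def gd4 {F : Type*} [Field F] (p q s t a b x c y z : F) : F :=
  t * gd3 p q s a b x - (c ^ 2 * (q * s - x ^ 2) + 2 * c * y * (b * x - a * s) +
    2 * c * z * (a * x - q * b) + y ^ 2 * (p * s - b ^ 2) + 2 * y * z * (a * b - p * x) +
    z ^ 2 * (p * q - a ^ 2))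

theorem check_sound (h41 : 41 ≤ p) {k : ℕ} (hk : check k = true) {a b x c y z : ℕ}
    (ha : a ∈ codesP k 0 1) (hb : b ∈ codesP k 0 2) (hx : x ∈ codes k 1 2) (hc : c ∈ codesP k 0 3)
    (hy : y ∈ codes k 1 3) (hz : z ∈ codes k 2 3)
    (hle : ∀ w ∈ [b, x, c, y, z], le k a w = true)
    (h1 : tri k 0 1 2 a b x = true) (h2 : tri k 0 1 3 a c y = true)
    (h3 : tri k 0 2 3 b c z = true) (h4 : tri k 1 2 3 x y z = true)
    (hdet : gd4 (e C (dg k 0)) (e C (dg k 1)) (e C (dg k 2)) (e C (dg k 3)) (e C (val a))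
      (e C (val b)) (e C (val x)) (e C (val c)) (e C (val y)) (e C (val z)) = 0) :
    dep k (gram k a b x c y z) = true := by
  simp only [List.mem_cons, List.not_mem_nil, or_false, forall_eq_or_imp, forall_eq] at hle
  obtain ⟨l1, l2, l3, l4, l5⟩ := hle
  unfold check at hk
  simp only [List.all_eq_true] at hk
  have H := hk a ha b hb x hx
  rw [l1, l2, h1] at H
  simp only [Bool.not_true, Bool.false_or, List.all_eq_true] at H
  have H := H c hc y hy
  rw [l3, l4, h2] at H
  simp only [Bool.not_true, Bool.false_or, List.all_eq_true] at H
  have H := H z hz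
  rw [l5, h3, h4] at H
  simp only [Bool.not_true, Bool.false_or, Bool.or_eq_true] at H
  refine H.resolve_left fun h => nz_sound C h41 h ?_
  simp only [e_sub, e_add, e_mul]
  rw [← hdet, gd4, gd3]
  ring
end Table

/-! ### The bilinear form and criteria for dependence -/

section Vec
variable {F : Type*} [Field F]

/-- The invariant symmetric bilinear form on traceless matrices. -/
def D (X Y : Mat F) : F := -(X * Y).trace

theorem tl {X : Mat F} (h : X.trace = 0) : ∃ a b c : F, X = !![a, b; c, -a] := by
  refine ⟨X 0 0, X 0 1, X 1 0, ext2 rfl rfl rfl ?_⟩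
  rw [trace_fin_two] at h
  simp; linear_combination h

theorem D_comm (X Y : Mat F) : D X Y = D Y X := by rw [D, D, trace_mul_comm]
theorem D_smul (a : F) (X Y : Mat F) : D (a • X) Y = a * D X Y := by
  simp [D]
theorem D_smul' (a : F) (X Y : Mat F) : D X (a • Y) = a * D X Y := by
  simp [D]
theorem D_add (X Y Z : Mat F) : D (X + Y) Z = D X Z + D Y Z := by simp [D, add_mul]; ring
theorem D_add' (X Y Z : Mat F) : D X (Y + Z) = D X Y + D X Z := by simp [D, mul_add]; ring
theorem D_sub (X Y Z : Mat F) : D (X - Y) Z = D X Z - D Y Z := by simp [D, sub_mul]; ring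
theorem D_sub' (X Y Z : Mat F) : D X (Y - Z) = D X Y - D X Z := by simp [D, mul_sub]; ring
theorem D_neg (X Y : Mat F) : D (-X) Y = - D X Y := by simp [D]
theorem D_neg' (X Y : Mat F) : D X (-Y) = - D X Y := by simp [D]

theorem D_self {X : Mat F} (h : X.trace = 0) : D X X = 2 * X.det := by
  rw [D, det_sq_zero h]; simp; ring

theorem D_mk (a b c a' b' c' : F) : D !![a, b; c, -a] !![a', b'; c', -a'] =
    -(2 * a * a' + b * c' + c * b') := by
  simp [D, trace_fin_two]; ring

theorem gd3_eq {X Y Z : Mat F} (hX : X.trace = 0) (hY : Y.trace = 0) (hZ : Z.trace = 0) :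
    gd3 (D X X) (D Y Y) (D Z Z) (D X Y) (D X Z) (D Y Z) = 2 * (X * Y * Z).trace ^ 2 := by
  obtain ⟨a, b, c, rfl⟩ := tl hX
  obtain ⟨a', b', c', rfl⟩ := tl hY
  obtain ⟨x, y, z, rfl⟩ := tl hZ
  simp only [D_mk, gd3]
  simp [trace_fin_two]; ring

/-- Cramer's rule in the three-dimensional space of traceless matrices. -/
theorem cramer {A B C X : Mat F} (hA : A.trace = 0) (hB : B.trace = 0) (hC : C.trace = 0)
    (hX : X.trace = 0) : (2 * (A * B * C).trace) • X =
      -(D X A • (B * C - C * B) + D X B • (C * A - A * C) + D X C • (A * B - B * A)) := by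
  obtain ⟨a, b, c, rfl⟩ := tl hX
  obtain ⟨a', b', c', rfl⟩ := tl hA
  obtain ⟨x, y, z, rfl⟩ := tl hB
  obtain ⟨x', y', z', rfl⟩ := tl hC
  simp only [D_mk]
  apply ext2 <;> simp [trace_fin_two] <;> ring

/-- Four traceless matrices are linearly dependent, so their Gram determinant vanishes. -/
theorem gd4_eq [NeZero (2 : F)] {X Y Z T : Mat F} (hX : X.trace = 0) (hY : Y.trace = 0)
    (hZ : Z.trace = 0) (hT : T.trace = 0) :
    gd4 (D X X) (D Y Y) (D Z Z) (D T T) (D X Y) (D X Z) (D Y Z) (D X T) (D Y T) (D Z T) = 0 := by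
  obtain ⟨a, b, c, rfl⟩ := tl hX
  obtain ⟨a', b', c', rfl⟩ := tl hY
  obtain ⟨x, y, z, rfl⟩ := tl hZ
  obtain ⟨x', y', z', rfl⟩ := tl hT
  simp only [D_mk, gd4, gd3]
  ring

theorem perp_cramer [NeZero (2 : F)] {A B C X : Mat F} (hA : A.trace = 0) (hB : B.trace = 0)
    (hC : C.trace = 0) (hX : X.trace = 0) (h1 : D X A = 0) (h2 : D X B = 0) (h3 : D X C = 0)
    (h0 : X ≠ 0) : (A * B * C).trace = 0 := by
  have := cramer hA hB hC hX
  rw [h1, h2, h3] at this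
  simp only [zero_smul, add_zero, neg_zero] at this
  rcases smul_eq_zero.1 this with h | h
  · exact (mul_eq_zero.1 h).resolve_left two_ne_zero
  · exact absurd h h0

/-- A vector of norm zero orthogonal to a nondegenerate plane vanishes. -/
theorem null_perp [NeZero (2 : F)] {A B X : Mat F} (hA : A.trace = 0) (hB : B.trace = 0)
    (hX : X.trace = 0) (h0 : D X X = 0) (h1 : D X A = 0) (h2 : D X B = 0)
    (hg : D A A * D B B - D A B ^ 2 ≠ 0) : X = 0 := by
  by_contra hne
  have e := gd3_eq hX hA hB
  rw [h0, h1, h2, gd3] at e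
  have e1 : (X * A * B).trace = 0 := by
    have : 2 * (X * A * B).trace ^ 2 = 0 := by rw [← e]; ring
    simpa [two_ne_zero] using this
  have e2 : (A * B * (A * B - B * A)).trace = - (D A A * D B B - D A B ^ 2) := by
    obtain ⟨a', b', c', rfl⟩ := tl hA
    obtain ⟨x, y, z, rfl⟩ := tl hB
    simp only [D_mk]
    simp [trace_fin_two]; ring
  have e3 : D X (A * B - B * A) = 0 := by
    have : D X (A * B - B * A) = - 2 * (X * A * B).trace := by
      obtain ⟨a, b, c, rfl⟩ := tl hX
      obtain ⟨a', b', c', rfl⟩ := tl hA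
      obtain ⟨x, y, z, rfl⟩ := tl hB
      simp [D, trace_fin_two]; ring
    rw [this, e1, mul_zero]
  have e4 : (A * B - B * A).trace = 0 := by rw [trace_sub, trace_mul_comm, sub_self]
  have := perp_cramer hA hB e4 hX h1 h2 e3 hne
  rw [e2] at this
  exact hg (neg_eq_zero.1 this)

theorem eq_of_D [NeZero (2 : F)] {A Y V : Mat F} {s : F} (hs : s * s = 1) (hA : A.trace = 0)
    (hY : Y.trace = 0) (hV : V.trace = 0) (hYY : D Y Y = 2) (hVV : D V V = 2)
    (h1 : D Y V = 2 * s) (h2 : D Y A = s * D V A) (hg : D V V * D A A - D V A ^ 2 ≠ 0) :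
    Y = s • V := by
  rw [← sub_eq_zero]
  refine null_perp hV hA (by simp [hY, hV]) ?_ ?_ ?_ hg
  · simp only [D_sub, D_sub', D_smul, D_smul', hYY, hVV, D_comm V Y, h1]
    linear_combination (-2) * hs
  · simp only [D_sub, D_smul, h1, hVV]; ring
  · simp only [D_sub, D_smul, h2]; ring

/-- Two traceless matrices orthogonal to the same two independent ones are proportional. -/
theorem perp_unique [NeZero (2 : F)] {A B X Y : Mat F} (hA : A.trace = 0) (hB : B.trace = 0)
    (hX : X.trace = 0) (hY : Y.trace = 0) (h1 : D X A = 0) (h2 : D X B = 0) (h3 : D Y A = 0)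
    (h4 : D Y B = 0) (hA0 : A ≠ 0) (hAB : ¬ ∃ c : F, B = c • A) (hX0 : X ≠ 0) :
    ∃ c : F, Y = c • X := by
  have hN0 : A * B - B * A ≠ 0 := by
    intro h
    rw [sub_eq_zero] at h
    have hs : ¬ Scal A := by
      rintro ⟨a, rfl⟩
      have : (2 : F) * a = 0 := by
        rw [trace_smul, trace_one, Fintype.card_fin, smul_eq_mul] at hA
        push_cast at hA; linear_combination hA
      rw [(mul_eq_zero.1 this).resolve_left two_ne_zero, zero_smul] at hA0
      exact hA0 rfl
    obtain ⟨a, b, e⟩ := commute_span hs h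
    have : (2 : F) * a = 0 := by
      have := hB
      rw [e, trace_add, trace_smul, trace_smul, hA, trace_one, Fintype.card_fin, smul_eq_mul] at this
      push_cast at this; linear_combination this
    rw [(mul_eq_zero.1 this).resolve_left two_ne_zero, zero_smul, zero_add] at e
    exact hAB ⟨b, e⟩
  have key : ∀ Z : Mat F, Z.trace = 0 → D Z A = 0 → D Z B = 0 → ∃ c : F, Z = c • (A * B - B * A) := by
    intro Z hZ z1 z2
    -- some traceless `C` completes `A`, `B` to a basis
    have : ∃ C : Mat F, C.trace = 0 ∧ (A * B * C).trace ≠ 0 := by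
      by_contra hcon
      push Not at hcon
      apply hN0
      have t1 := hcon !![0, 1; 0, 0] (by simp [trace_fin_two])
      have t2 := hcon !![0, 0; 1, 0] (by simp [trace_fin_two])
      have t3 := hcon !![1, 0; 0, -1] (by simp [trace_fin_two])
      obtain ⟨a', b', c', rfl⟩ := tl hA
      obtain ⟨x, y, z, rfl⟩ := tl hB
      simp [trace_fin_two] at t1 t2 t3
      apply ext2 <;> simp
      · linear_combination t3
      · linear_combination 2 * t2
      · linear_combination 2 * t1
      · linear_combination -t3
    obtain ⟨C, hC, hC0⟩ := this
    have e := cramer hA hB hC hZ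
    rw [z1, z2, zero_smul, zero_smul, zero_add, zero_add, ← neg_smul] at e
    have hne : 2 * (A * B * C).trace ≠ 0 := mul_ne_zero two_ne_zero hC0
    refine ⟨(2 * (A * B * C).trace)⁻¹ * (-D Z C), ?_⟩
    rw [← smul_smul, ← e, smul_smul, inv_mul_cancel₀ hne, one_smul]
  obtain ⟨c, hc⟩ := key X hX h1 h2
  obtain ⟨d, hd⟩ := key Y hY h3 h4
  have hc0 : c ≠ 0 := by rintro rfl; rw [zero_smul] at hc; exact hX0 hc
  refine ⟨d * c⁻¹, ?_⟩
  rw [hc, hd, smul_smul, mul_assoc, inv_mul_cancel₀ hc0, mul_one]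

theorem anti_of_perp {X Y : Mat F} (hX : X.trace = 0) (hY : Y.trace = 0) (h : D X Y = 0) :
    X * Y = -(Y * X) := by
  have e := anticomm X Y hY
  rw [D, neg_eq_zero] at h
  rw [hX, h, zero_smul, zero_smul, zero_add] at e
  exact eq_neg_of_add_eq_zero_left e

/-- An element whose axis is orthogonal to those of two half-turns commutes with their product. -/
theorem comm_rule [NeZero (2 : F)] {K : Subgroup (SL F)} {a b y : SL F} {r s : F} {σ : F}
    (hneg : -1 ∈ K) (ha : a ∈ K)
    (hb : b ∈ K) (hta : (mat a).trace = 0) (htb : (mat b).trace = 0) (hr : r ≠ 0)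
    (hV : (r • mat y - s • 1 : Mat F).trace = 0)
    (h1 : D (r • mat y - s • 1) (mat a) = 0) (h2 : D (r • mat y - s • 1) (mat b) = 0)
    (h4 : (mat y).trace ^ 2 ≠ 4) (hσ : σ * σ = 1) (h3 : D (mat a) (mat b) = σ * (mat y).trace) :
    y ∈ K := by
  have e1 := anti_of_perp hV hta h1
  have e2 := anti_of_perp hV htb h2
  have hc : mat y * (mat a * mat b) = mat a * mat b * mat y := by
    have : (r • mat y - s • 1 : Mat F) * (mat a * mat b) =
        mat a * mat b * (r • mat y - s • 1 : Mat F) := by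
      rw [← Matrix.mul_assoc, e1, neg_mul, Matrix.mul_assoc, e2, mul_neg, neg_neg, Matrix.mul_assoc]
    simp only [sub_mul, mul_sub, smul_mul_assoc, mul_smul_comm, one_mul, mul_one] at this
    have := sub_left_injective this
    exact smul_right_injective _ hr this
  have hab : (mat (a * b)).trace = -(σ * (mat y).trace) := by
    rw [mat_mul, ← h3, D]; ring
  have hab2 : (mat (a * b)).trace ^ 2 = (mat y).trace ^ 2 := by
    rw [hab]; linear_combination (mat y).trace ^ 2 * hσ
  have hN : NC (a * b) := by
    constructor <;> intro h <;> rw [h] at hab2 <;> apply h4 <;> rw [← hab2] <;>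
      simp [mat_one, mat_neg] <;> norm_num
  have hK : a * b ∈ K := K.mul_mem ha hb
  have hc' : a * b * y = y * (a * b) := by rw [mat_comm, mat_mul]; exact hc.symm
  rcases mul_self_eq_one_iff.1 hσ with rfl | rfl
  · have hN' : NC (-(a * b)) := by
      constructor
      · intro h; exact hN.2 (by rw [← h, neg_neg])
      · intro h; exact hN.1 (neg_injective h)
    have hK' : -(a * b) ∈ K := by
      rw [← neg_one_mul]; exact K.mul_mem hneg hK
    have ht : (mat y).trace = (mat (-(a * b))).trace := by
      rw [mat_neg, trace_neg, hab]; ring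
    have hc'' : -(a * b) * y = y * -(a * b) := by rw [neg_mul, hc', mul_neg]
    rcases eq_or_inv hN' (by rw [← ht]; exact h4) hc'' ht with h | h <;> rw [h]
    · exact hK'
    · exact K.inv_mem hK'
  · have ht : (mat y).trace = (mat (a * b)).trace := by rw [hab]; ring
    rcases eq_or_inv hN (by rw [← ht]; exact h4) hc' ht with h | h <;> rw [h]
    · exact hK
    · exact K.inv_mem hK

theorem mem_of_sign [NeZero (2 : F)] {K : Subgroup (SL F)} {y v : SL F} {s : F} (hneg : -1 ∈ K)
    (hv : v ∈ K) (hs : s * s = 1) (h : mat y = s • mat v) : y ∈ K := by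
  rcases mul_self_eq_one_iff.1 hs with rfl | rfl
  · rw [one_smul] at h; rw [mat_inj h]; exact hv
  · have : y = -v := mat_inj (by rw [h, mat_neg, neg_smul, one_smul])
    rw [this, ← neg_one_mul]; exact K.mul_mem hneg hv

theorem D_inv {a : SL F} (h : (mat a).trace = 0) : D (mat a) (mat a) = 2 := by
  rw [D_self h, mat_det, mul_one]

/-- A half-turn is determined up to sign by two inner products, if their Gram matrix is regular. -/
theorem rO [NeZero (2 : F)] {K : Subgroup (SL F)} {v y : SL F} {A : Mat F} {s : F} (hneg : -1 ∈ K)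
    (hv : v ∈ K) (hs : s * s = 1) (hA : A.trace = 0) (hy : (mat y).trace = 0)
    (htv : (mat v).trace = 0) (h1 : D (mat y) (mat v) = 2 * s)
    (h2 : D (mat y) A = s * D (mat v) A) (hg : 2 * D A A - D (mat v) A ^ 2 ≠ 0) : y ∈ K :=
  mem_of_sign hneg hv hs (eq_of_D hs hA hy htv (D_inv hy) (D_inv htv) h1 h2
    (by rwa [D_inv htv]))

theorem r2 [NeZero (2 : F)] {K : Subgroup (SL F)} {a b y : SL F} (hneg : -1 ∈ K) (ha : a ∈ K)
    (hb : b ∈ K) (hta : (mat a).trace = 0) (htb : (mat b).trace = 0) (hy : (mat y).trace = 0)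
    (h1 : D (mat y) (mat a) = 0) (h2 : D (mat y) (mat b) = 0) (h3 : D (mat a) (mat b) = 0) :
    y ∈ K := by
  refine comm_rule (r := 1) (s := 0) (σ := 1) hneg ha hb hta htb one_ne_zero ?_ ?_ ?_ ?_ (one_mul 1) ?_
  · simpa using hy
  · simpa using h1
  · simpa using h2
  · rw [hy]
    have : (2 : F) ≠ 0 := two_ne_zero
    intro h
    apply mul_ne_zero this this
    linear_combination -h
  · rw [hy, h3, mul_zero]

/-- The axis of an element of order three modulo the centre. -/
def W (m : SL F) : Mat F := (2 : F) • mat m - (1 : F) • 1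

theorem W_tr {m : SL F} (h : (mat m).trace = 1) : (W m).trace = 0 := by
  simp [W, h]
theorem D_W {m : SL F} (h : (mat m).trace = 1) : D (W m) (W m) = 6 := by
  have hd := mat_det m
  rw [trace_fin_two] at h
  rw [det_fin_two] at hd
  have h' : mat m 1 1 = 1 - mat m 0 0 := by linear_combination h
  rw [h'] at hd
  simp [D, W, trace_fin_two, Matrix.mul_apply, Fin.sum_univ_two, h']
  linear_combination 8 * hd

theorem r1 [NeZero (2 : F)] (h3F : (3 : F) ≠ 0) {K : Subgroup (SL F)} {a b y : SL F} {σ : F}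
    (hneg : -1 ∈ K) (ha : a ∈ K)
    (hb : b ∈ K) (hta : (mat a).trace = 0) (htb : (mat b).trace = 0) (hy : (mat y).trace = 1)
    (h1 : D (W y) (mat a) = 0) (h2 : D (W y) (mat b) = 0) (hσ : σ * σ = 1)
    (h3 : D (mat a) (mat b) = σ) :
    y ∈ K := by
  refine comm_rule (r := 2) (s := 1) (σ := σ) hneg ha hb hta htb two_ne_zero (W_tr hy) h1 h2 ?_ hσ ?_
  · rw [hy]
    intro h
    apply h3F
    linear_combination -h
  · rw [hy, h3, mul_one]

theorem D_W_conj (m b : SL F) : D (W m) (mat (m * b * m⁻¹)) = D (W m) (mat b) := by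
  rw [D, D, mat_mul, mat_mul]
  congr 1
  have : W m * (mat m * mat b * mat m⁻¹) = mat m * (W m * mat b * mat m⁻¹) := by
    simp only [W, sub_mul, mul_sub, smul_mul_assoc, mul_smul_comm, one_mul, Matrix.mul_assoc]
  rw [this, trace_mul_comm, Matrix.mul_assoc, mat_inv_mul, mul_one]

theorem aba (a b : SL F) : mat (a * b * a) = (mat (a * b)).trace • mat a - mat b⁻¹ := by
  have h := cayley (mat (a * b))
  rw [mat_det, one_smul] at h
  have : mat (a * b * a) = mat (a * b) * mat (a * b) * mat b⁻¹ := by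
    rw [← mat_mul, ← mat_mul]; congr 1; group
  rw [this, h, sub_mul, smul_mul_assoc, ← mat_mul, one_mul]
  congr 3; group

theorem D_Wb (m b : SL F) (hb : (mat b).trace = 0) :
    D (W m) (mat b) = -2 * (mat (m * b)).trace := by
  simp only [D, W, mat_mul, sub_mul, smul_mul_assoc, one_mul,
    trace_sub, trace_smul, hb, smul_eq_mul]
  ring

theorem r3 [NeZero (2 : F)] {K : Subgroup (SL F)} {m b y : SL F} {σ τ : F}
    (hneg : -1 ∈ K) (hm : m ∈ K) (hb : b ∈ K) (htm : (mat m).trace = 1) (htb : (mat b).trace = 0)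
    (hy : (mat y).trace = 0) (hσ : σ * σ = 1) (hτ : τ * τ = 1) (h1 : D (mat y) (W m) = 2 * σ)
    (h2 : D (mat y) (mat b) = 0) (h3 : D (W m) (mat b) = 2 * τ) : y ∈ K := by
  have h2F : (2 : F) ≠ 0 := two_ne_zero
  set v := m * b * m⁻¹ with hv
  have hvK : v ∈ K := K.mul_mem (K.mul_mem hm hb) (K.inv_mem hm)
  have htv : (mat v).trace = 0 := by rw [hv, mat_trace_conj, htb]
  have hWv : D (W m) (mat v) = 2 * τ := by rw [hv, D_W_conj, h3]
  have hmb : (mat (m * b)).trace = -τ := by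
    have := D_Wb m b htb
    apply mul_left_cancel₀ h2F
    linear_combination this - h3
  have hbv : D (mat b) (mat v) = 0 := by
    have e1 : mat b * mat v = mat (b * m * b) * mat m⁻¹ := by
      rw [← mat_mul, ← mat_mul, hv]; congr 1; group
    have e2 : (mat (b * m)).trace = -τ := by rw [mat_mul, trace_mul_comm, ← mat_mul, hmb]
    have e3 := cayley (mat m)
    rw [mat_det, htm, one_smul, one_smul] at e3
    rw [D, e1, aba, e2, mat_inv, htm, one_smul]
    have e4 : (-τ • mat b - (1 - mat m)) * (1 - mat m) =
        -τ • mat b + τ • (mat b * mat m) - 1 + mat m + mat m - mat m * mat m := by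
      simp only [sub_mul, mul_sub, smul_mul_assoc, one_mul, mul_one, neg_smul, neg_mul]; abel
    rw [e4, e3]
    rw [← mat_mul]
    simp only [trace_add, trace_sub, trace_smul, htb, e2, htm, trace_one,
      Fintype.card_fin, smul_eq_mul]
    push_cast
    linear_combination hτ
  have hvv := D_inv htv
  have hbb := D_inv htb
  have hg := gd4_eq htb htv (W_tr htm) hy
  rw [hbb, hvv, D_W htm, D_inv hy, hbv, D_comm (mat b) (W m), h3, D_comm (mat v) (W m), hWv,
    D_comm (mat b) (mat y), h2, D_comm (W m) (mat y), h1, gd4, gd3, D_comm (mat v) (mat y)] at hg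
  generalize hq : D (mat y) (mat v) = q at hg
  have h8 : (8 : F) * (q * (q - 2 * (σ * τ))) = 0 := by
    linear_combination -hg + (4 * q ^ 2 - 32) * hτ - 16 * hσ
  have h8' : (8 : F) ≠ 0 := by
    have := pow_ne_zero 3 h2F; norm_num at this ⊢; exact this
  rcases mul_eq_zero.1 ((mul_eq_zero.1 h8).resolve_left h8') with h | h
  · exact r2 hneg hb hvK htb htv hy h2 (by rw [hq, h]) hbv
  · refine rO (s := σ * τ) (A := mat b) hneg hvK ?_ htb hy htv ?_ ?_ ?_
    · linear_combination (τ * τ) * hσ + hτ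
    · rw [hq]; linear_combination h
    · rw [h2, D_comm, hbv, mul_zero]
    · rw [hbb, D_comm, hbv]
      intro h0; apply mul_ne_zero h2F h2F; linear_combination h0

theorem W_inv {m : SL F} (h : (mat m).trace = 1) : W m⁻¹ = - W m := by
  rw [W, W, mat_inv, h]; module
theorem tr_inv (m : SL F) : (mat m⁻¹).trace = (mat m).trace := by
  rw [mat_inv]; simp [trace_fin_two]; ring

theorem D_WW {m n : SL F} (hm : (mat m).trace = 1) (hn : (mat n).trace = 1) :
    D (W m) (W n) = 2 - 4 * (mat (m * n)).trace := by
  simp only [D, W, mat_mul, sub_mul, mul_sub, smul_mul_assoc, mul_smul_comm, one_mul, mul_one,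
    trace_sub, trace_smul, hm, hn, smul_eq_mul, trace_one, Fintype.card_fin]
  push_cast; ring

theorem r4 [NeZero (2 : F)] {K : Subgroup (SL F)} {m n y : SL F} {σ : F}
    (hneg : -1 ∈ K) (hm : m ∈ K) (hn : n ∈ K) (htm : (mat m).trace = 1) (htn : (mat n).trace = 1)
    (hy : (mat y).trace = 0) (hσ : σ * σ = 1) (h1 : D (mat y) (W m) = 2 * σ)
    (h2 : D (mat y) (W n) = 2 * σ) (h3 : D (W m) (W n) = -2) : y ∈ K := by
  have h2F : (2 : F) ≠ 0 := two_ne_zero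
  set v := m⁻¹ * n⁻¹ * m⁻¹ with hv
  have hvK : v ∈ K := K.mul_mem (K.mul_mem (K.inv_mem hm) (K.inv_mem hn)) (K.inv_mem hm)
  have ht : (mat (m⁻¹ * n⁻¹)).trace = 1 := by
    have h := D_WW (m := m⁻¹) (n := n⁻¹) (by rw [tr_inv, htm]) (by rw [tr_inv, htn])
    rw [W_inv htm, W_inv htn, D_neg, D_neg', neg_neg, h3] at h
    apply mul_left_cancel₀ (mul_ne_zero h2F h2F)
    linear_combination h
  have e : (2 : F) • mat v = -(W m + W n) := by
    rw [hv, aba, ht, inv_inv, mat_inv, htm, W, W]; module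
  have hvW : ∀ X, 2 * D X (mat v) = -(D X (W m) + D X (W n)) := by
    intro X
    rw [← D_smul', e, D_neg', D_add']
  have htv : (mat v).trace = 0 := by
    have := congrArg trace e
    rw [trace_smul, trace_neg, trace_add, W_tr htm, W_tr htn, add_zero, neg_zero] at this
    exact (smul_eq_zero.1 this).resolve_left h2F
  have hvm : D (mat v) (W m) = -2 := by
    rw [D_comm]; apply mul_left_cancel₀ h2F
    rw [hvW, D_W htm, h3]; ring
  refine rO (s := -σ) (A := W m) hneg hvK (by linear_combination hσ) (W_tr htm) hy htv ?_ ?_ ?_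
  · apply mul_left_cancel₀ h2F
    rw [hvW, h1, h2]; ring
  · rw [h1, hvm]; ring
  · rw [D_W htm, hvm]
    intro h; apply pow_ne_zero 3 h2F; linear_combination h

/-- Half-turns act on traceless matrices. -/
theorem half_turn {a : SL F} {Y : Mat F} (ha : (mat a).trace = 0) (hY : Y.trace = 0) :
    mat a * Y * mat a⁻¹ = D (mat a) Y • mat a - Y := by
  have e := anticomm (mat a) Y hY
  rw [ha, zero_smul, zero_add] at e
  have e1 : mat a * Y = (mat a * Y).trace • 1 - Y * mat a := eq_sub_of_add_eq e
  rw [e1, sub_mul, Matrix.mul_assoc, mat_mul_inv, mat_inv, ha, D]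
  simp
end Vec

/-! ### Soundness of the dependence test -/

theorem blt_iff {i k : ℕ} : Nat.blt i k = true ↔ i < k := by rw [Nat.blt_eq]

section Dep
variable {p : ℕ} [hp : Fact p.Prime] [NeZero (2 : ZMod p)] (C : Consts (ZMod p))

/-- The vector attached to an element of order three (`i < k`) or to a half-turn. -/
def vec (k i : ℕ) (y : SL (ZMod p)) : Mat (ZMod p) := if i < k then W y else mat y

/-- The subgroup generated by `-1` and the elements other than `x t`. -/
def Oth (x : ℕ → SL (ZMod p)) (t : ℕ) : Subgroup (SL (ZMod p)) :=
  Subgroup.closure (insert (-1) (x '' {i | i < 4 ∧ i ≠ t}))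

theorem neg_mem_Oth (x : ℕ → SL (ZMod p)) (t : ℕ) : -1 ∈ Oth x t :=
  Subgroup.subset_closure (Set.mem_insert _ _)
theorem mem_Oth {x : ℕ → SL (ZMod p)} {i t : ℕ} (hi : i < 4) (h : i ≠ t) : x i ∈ Oth x t :=
  Subgroup.subset_closure (Set.mem_insert_of_mem _ ⟨i, ⟨hi, h⟩, rfl⟩)

theorem vec_lt {k i : ℕ} (h : i < k) (y : SL (ZMod p)) : vec k i y = W y := if_pos h
theorem vec_ge {k i : ℕ} (h : k ≤ i) (y : SL (ZMod p)) : vec k i y = mat y := if_neg (by omega)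

theorem get_act (G : Gram) (u : Row) (i j : ℕ) :
    (act G u i).get j = R.sub (.mul (u.get i) ((G.row i).get j)) (u.get j) := by
  rcases j with _ | _ | _ | j <;> rfl

theorem vec_conj {k i : ℕ} (a y : SL (ZMod p)) : vec k i (a * y * a⁻¹) = mat a * vec k i y * mat a⁻¹ := by
  unfold vec
  split_ifs
  · simp only [W, mat_mul, mul_sub, sub_mul, mul_smul_comm, smul_mul_assoc, mul_one, mat_mul_inv]
  · simp only [mat_mul]

variable {k : ℕ} {x : ℕ → SL (ZMod p)} {G : Gram}

theorem vec_tr {i : ℕ} {y : SL (ZMod p)} (h : (mat y).trace = if i < k then 1 else 0) :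
    (vec k i y).trace = 0 := by
  unfold vec
  split_ifs with h1
  · exact W_tr (by rw [h, if_pos h1])
  · rw [h, if_neg h1]

theorem act_sound (htr : ∀ i < 4, (mat (x i)).trace = if i < k then 1 else 0)
    (hG : ∀ i < 4, ∀ j < 4, D (vec k i (x i)) (vec k j (x j)) = e C ((G.row i).get j))
    {t : ℕ} (ht : t < 4) (l : List ℕ) (hl : ∀ i ∈ l, k ≤ i ∧ i ≠ t ∧ i < 4) :
    ∃ y, (mat y).trace = (mat (x t)).trace ∧ (y ∈ Oth x t → x t ∈ Oth x t) ∧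
      ∀ j < 4, D (vec k t y) (vec k j (x j)) = e C ((l.foldl (act G) (G.row t)).get j) := by
  induction l using List.reverseRecOn with
  | nil => exact ⟨x t, rfl, id, fun j hj => hG t ht j hj⟩
  | append_singleton l i ih =>
    obtain ⟨y, h1, h2, h3⟩ := ih fun i hi => hl i (by simp [hi])
    obtain ⟨hki, hit, hi4⟩ := hl i (by simp)
    have hti : (mat (x i)).trace = 0 := by rw [htr i hi4, if_neg (by omega)]
    refine ⟨x i * y * (x i)⁻¹, by rw [mat_trace_conj, h1], fun h => h2 ?_, fun j hj => ?_⟩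
    · have hm := mem_Oth (x := x) hi4 hit
      have := (Oth x t).mul_mem ((Oth x t).mul_mem ((Oth x t).inv_mem hm) h) hm
      simpa [mul_assoc] using this
    · have hy : (vec k t y).trace = 0 := vec_tr (by rw [h1, htr t ht])
      rw [List.foldl_append, List.foldl_cons, List.foldl_nil, get_act, e_sub, e_mul, ← h3 j hj,
        ← h3 i hi4, ← hG i hi4 j hj, vec_conj, half_turn hti hy, D_sub, D_smul, vec_ge hki,
        D_comm (mat (x i))]

theorem mem_invs {i t : ℕ} (h : i ∈ invs k t) : k ≤ i ∧ i ≠ t ∧ i < 4 := by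
  simp only [invs, List.mem_filter, Bool.and_eq_true, Bool.not_eq_true'] at h
  obtain ⟨h1, h2, h3⟩ := h
  refine ⟨?_, ?_, ?_⟩
  · by_contra hc
    rw [blt_iff.2 (by omega : i < k)] at h2
    exact absurd h2 (by simp)
  · rintro rfl; simp at h3
  · simp at h1; omega

theorem mem_ords {i t : ℕ} (h : i ∈ ords k t) : i < k ∧ i ≠ t ∧ i < 4 := by
  simp only [ords, List.mem_filter, Bool.and_eq_true, Bool.not_eq_true'] at h
  obtain ⟨h1, h2, h3⟩ := h
  refine ⟨blt_iff.1 h2, ?_, ?_⟩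
  · rintro rfl; simp at h3
  · simp at h1; omega

theorem e_val0 : e C (val 0) = 0 := by simp [e, val]
theorem e_two : e C two = 2 := by simp [e, two]
theorem e_mtwo : e C mtwo = -2 := by simp [e, mtwo]
theorem e_pm2 {u : R} (h : pm2 u = true) : ∃ s : ZMod p, s * s = 1 ∧ e C u = 2 * s := by
  simp only [pm2, Bool.or_eq_true] at h
  rcases h with h | h <;> rw [R.beq_eq h]
  · exact ⟨1, by ring, by rw [e_two]; ring⟩
  · exact ⟨-1, by ring, by rw [e_mtwo]; ring⟩
theorem e_pm1 {u : R} (h : pm1 u = true) : ∃ s : ZMod p, s * s = 1 ∧ e C u = s := by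
  simp only [pm1, Bool.or_eq_true] at h
  rcases h with h | h <;> rw [R.beq_eq h]
  · exact ⟨1, by ring, by simp [e, val]⟩
  · exact ⟨-1, by ring, by simp [e, val]⟩

theorem e_dg {i : ℕ} {y : SL (ZMod p)} (h : (mat y).trace = if i < k then 1 else 0) :
    D (vec k i y) (vec k i y) = e C (dg k i) := by
  unfold vec dg
  split_ifs at h ⊢ with h1
  · rw [D_W h, blt_iff.2 h1]; simp [e_ofInt]
  · rw [D_inv h]
    have : Nat.blt i k = false := by
      by_contra hc; simp only [Bool.not_eq_false] at hc; exact h1 (blt_iff.1 hc)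
    rw [this]; simp [e_ofInt]

theorem beq_ne {i j : ℕ} (h : (!i.beq j) = true) : i ≠ j := by
  rintro rfl; simp at h

theorem rules_sound (h41 : 41 ≤ p)
    (htr : ∀ i < 4, (mat (x i)).trace = if i < k then 1 else 0)
    (hG : ∀ i < 4, ∀ j < 4, D (vec k i (x i)) (vec k j (x j)) = e C ((G.row i).get j))
    {t : ℕ} (ht : t < 4) {u : Row} {y : SL (ZMod p)} (hy : (mat y).trace = (mat (x t)).trace)
    (hu : ∀ j < 4, D (vec k t y) (vec k j (x j)) = e C (u.get j))
    (h : rules k G t u = true) : y ∈ Oth x t := by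
  have hneg := neg_mem_Oth x t
  rw [htr t ht] at hy
  have hinv : ∀ {a}, a ∈ invs k t → x a ∈ Oth x t ∧ (mat (x a)).trace = 0 ∧ vec k a (x a) = mat (x a)
      ∧ a < 4 := by
    intro a ha
    obtain ⟨h1, h2, h3⟩ := mem_invs ha
    exact ⟨mem_Oth h3 h2, by rw [htr a h3, if_neg (by omega)], vec_ge h1 _, h3⟩
  have hord : ∀ {a}, a ∈ ords k t → x a ∈ Oth x t ∧ (mat (x a)).trace = 1 ∧ vec k a (x a) = W (x a)
      ∧ a < 4 := by
    intro a ha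
    obtain ⟨h1, h2, h3⟩ := mem_ords ha
    exact ⟨mem_Oth h3 h2, by rw [htr a h3, if_pos h1], vec_lt h1 _, h3⟩
  unfold rules at h
  by_cases htk : t < k
  · rw [blt_iff.2 htk, cond_true] at h
    simp only [rule1, List.any_eq_true, Bool.and_eq_true] at h
    obtain ⟨a, ha, h1, b, hb, hab, h2, h3⟩ := h
    obtain ⟨ha1, ha2, ha3, ha4⟩ := hinv ha
    obtain ⟨hb1, hb2, hb3, hb4⟩ := hinv hb
    obtain ⟨s, hs, h3⟩ := e_pm1 C h3
    rw [if_pos htk] at hy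
    have u1 := hu a ha4
    have u2 := hu b hb4
    have u3 := hG a ha4 b hb4
    rw [R.beq_eq h1, e_val0, ha3, vec_lt htk] at u1
    rw [R.beq_eq h2, e_val0, hb3, vec_lt htk] at u2
    rw [ha3, hb3, h3] at u3
    exact r1 C.h3 hneg ha1 hb1 ha2 hb2 hy u1 u2 hs u3
  · have : Nat.blt t k = false := by
      by_contra hc; simp only [Bool.not_eq_false] at hc; exact htk (blt_iff.1 hc)
    rw [this, cond_false] at h
    rw [if_neg htk] at hy
    simp only [vec_ge (by omega : k ≤ t)] at hu
    simp only [Bool.or_eq_true] at h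
    rcases h with ((h | h) | h) | h
    · simp only [ruleO, List.any_eq_true, Bool.and_eq_true, Bool.or_eq_true] at h
      obtain ⟨s, hs, h⟩ := h
      obtain ⟨hs1, hs2, hs3, hs4⟩ := hinv hs
      have hnz : ∀ a < 4, nz (.ofInt 2 * dg k a - (G.row s).get a * (G.row s).get a) = true →
          2 * D (vec k a (x a)) (vec k a (x a)) - D (mat (x s)) (vec k a (x a)) ^ 2 ≠ 0 := by
        intro a ha h
        have := nz_sound C h41 h
        rw [e_sub', e_mul', e_mul', e_ofInt, ← e_dg C (htr a ha), ← hG s hs4 a ha, hs3] at this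
        rw [pow_two]; exact_mod_cast this
      rcases h with ⟨h1, a, ha, ⟨hat, has⟩, h2, h3⟩ | ⟨h1, a, ha, ⟨hat, has⟩, h2, h3⟩
      all_goals
        have ha4 : a < 4 := by simp at ha; omega
        have u1 := hu s hs4
        have u2 := hu a ha4
        rw [R.beq_eq h1, hs3] at u1
        rw [R.beq_eq h2] at u2
      · rw [e_two] at u1
        rw [← hG s hs4 a ha4, hs3] at u2
        exact rO hneg hs1 (one_mul 1) (vec_tr (htr a ha4)) hy hs2 (by rw [u1]; ring)
          (by rw [u2, one_mul]) (hnz a ha4 h3)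
      · rw [e_mtwo] at u1
        rw [e_neg', ← hG s hs4 a ha4, hs3] at u2
        exact rO (s := -1) hneg hs1 (by ring) (vec_tr (htr a ha4)) hy hs2 (by rw [u1]; ring)
          (by rw [u2]; ring) (hnz a ha4 h3)
    · simp only [rule2, List.any_eq_true, Bool.and_eq_true] at h
      obtain ⟨a, ha, h1, b, hb, hab, h2, h3⟩ := h
      obtain ⟨ha1, ha2, ha3, ha4⟩ := hinv ha
      obtain ⟨hb1, hb2, hb3, hb4⟩ := hinv hb
      have u1 := hu a ha4
      have u2 := hu b hb4
      have u3 := hG a ha4 b hb4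
      rw [R.beq_eq h1, e_val0, ha3] at u1
      rw [R.beq_eq h2, e_val0, hb3] at u2
      rw [ha3, hb3, R.beq_eq h3, e_val0] at u3
      exact r2 hneg ha1 hb1 ha2 hb2 hy u1 u2 u3
    · simp only [rule3, List.any_eq_true, Bool.and_eq_true] at h
      obtain ⟨m, hm, h1, b, hb, h2, h3⟩ := h
      obtain ⟨ha1, ha2, ha3, ha4⟩ := hord hm
      obtain ⟨hb1, hb2, hb3, hb4⟩ := hinv hb
      obtain ⟨s, hs, h1⟩ := e_pm2 C h1
      obtain ⟨s', hs', h3⟩ := e_pm2 C h3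
      have u1 := hu m ha4
      have u2 := hu b hb4
      have u3 := hG m ha4 b hb4
      rw [h1, ha3] at u1
      rw [R.beq_eq h2, e_val0, hb3] at u2
      rw [ha3, hb3, h3] at u3
      exact r3 hneg ha1 hb1 ha2 hb2 hy hs hs' u1 u2 u3
    · simp only [rule4, List.any_eq_true, Bool.and_eq_true, Bool.or_eq_true] at h
      obtain ⟨m, hm, n, hn, hmn, h⟩ := h
      obtain ⟨ha1, ha2, ha3, ha4⟩ := hord hm
      obtain ⟨hb1, hb2, hb3, hb4⟩ := hord hn
      have u1 := hu m ha4
      have u2 := hu n hb4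
      have u3 := hG m ha4 n hb4
      rw [ha3] at u1
      rw [hb3] at u2
      rw [ha3, hb3] at u3
      have hn' : x n ∈ Oth x t ∧ (x n)⁻¹ ∈ Oth x t := ⟨hb1, (Oth x t).inv_mem hb1⟩
      rcases h with ⟨h3, ⟨h1, h2⟩ | ⟨h1, h2⟩⟩ | ⟨h3, ⟨h1, h2⟩ | ⟨h1, h2⟩⟩
      all_goals
        rw [R.beq_eq h1] at u1
        rw [R.beq_eq h2] at u2
        rw [R.beq_eq h3] at u3
        simp only [e_two, e_mtwo] at u1 u2 u3
      · refine r4 (σ := 1) hneg ha1 hn'.2 ha2 (by rw [tr_inv, hb2]) hy (by ring) (by rw [u1]; ring) ?_ ?_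
        · rw [W_inv hb2, D_neg', u2]; ring
        · rw [W_inv hb2, D_neg', u3]
      · refine r4 (σ := -1) hneg ha1 hn'.2 ha2 (by rw [tr_inv, hb2]) hy (by ring) (by rw [u1]; ring) ?_ ?_
        · rw [W_inv hb2, D_neg', u2]; ring
        · rw [W_inv hb2, D_neg', u3]
      · exact r4 (σ := 1) hneg ha1 hb1 ha2 hb2 hy (by ring) (by rw [u1]; ring) (by rw [u2]; ring) u3
      · exact r4 (σ := -1) hneg ha1 hb1 ha2 hb2 hy (by ring) (by rw [u1]; ring) (by rw [u2]; ring) u3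

theorem cands_ok {k : ℕ} (hk : k < 4) : ∀ q ∈ cands k, q.1 < 4 ∧ ∀ i ∈ q.2, k ≤ i ∧ i ≠ q.1 ∧ i < 4 := by
  interval_cases k <;> decide

theorem dep_sound (h41 : 41 ≤ p) (hk : k < 4)
    (htr : ∀ i < 4, (mat (x i)).trace = if i < k then 1 else 0)
    (hG : ∀ i < 4, ∀ j < 4, D (vec k i (x i)) (vec k j (x j)) = e C ((G.row i).get j))
    (h : dep k G = true) : ∃ t < 4, x t ∈ Oth x t := by
  simp only [dep, List.any_eq_true] at h
  obtain ⟨q, hq, h⟩ := h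
  obtain ⟨h1, h2⟩ := cands_ok hk q hq
  obtain ⟨y, hy1, hy2, hy3⟩ := act_sound C htr hG h1 q.2 h2
  exact ⟨q.1, h1, hy2 (rules_sound C h41 htr hG h1 hy1 hy3 h)⟩
end Dep

/-! ### Configurations of fixed lines -/

section Lines
variable {F : Type*} [Field F]

/-- `X` is a multiple of `U`. -/
def Pr (U X : Mat F) : Prop := ∃ s : F, X = s • U

theorem Pr.symm {U X : Mat F} (h : Pr U X) (h0 : X ≠ 0) : Pr X U := by
  obtain ⟨s, rfl⟩ := h
  have hs : s ≠ 0 := by rintro rfl; simp at h0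
  exact ⟨s⁻¹, by rw [smul_smul, inv_mul_cancel₀ hs, one_smul]⟩
theorem Pr.trans {U V X : Mat F} (h : Pr U V) (h' : Pr V X) : Pr U X := by
  obtain ⟨s, rfl⟩ := h
  obtain ⟨t, rfl⟩ := h'
  exact ⟨t * s, by rw [smul_smul]⟩
theorem Pr.fixes {A U X : Mat F} (h : Pr U X) (hf : Fixes A U) : Fixes A X := by
  obtain ⟨s, rfl⟩ := h
  exact fixes_smul s hf
theorem Pr.perp {A U X : Mat F} (h : Pr U X) (hf : D U A = 0) : D X A = 0 := by
  obtain ⟨s, rfl⟩ := h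
  rw [D_smul, hf, mul_zero]

/-- A matrix annihilated on both sides by a nilpotent matrix is a multiple of it. -/
theorem nil_span {X Z : Mat F} (h0 : X ≠ 0) (ht : X.trace = 0) (h1 : X * Z = 0)
    (h2 : Z * X = 0) (hd : X.det = 0) : Pr X Z := by
  obtain ⟨a, b, c, rfl⟩ := tl ht
  have hd' : -(a * a) - b * c = 0 := by simpa using hd
  have e1 := fun i j => congrFun (congrFun h1 i) j
  have e2 := fun i j => congrFun (congrFun h2 i) j
  simp only [Matrix.mul_apply, Fin.sum_univ_two, Matrix.zero_apply] at e1 e2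
  have a00 := e1 0 0
  have a01 := e1 0 1
  have a10 := e1 1 0
  have a11 := e1 1 1
  have b00 := e2 0 0
  have b01 := e2 0 1
  have b10 := e2 1 0
  have b11 := e2 1 1
  simp at a00 a01 a10 a11 b00 b01 b10 b11
  by_cases hb : b = 0
  · by_cases hc : c = 0
    · exfalso; apply h0
      have ha : a = 0 := by
        have : a * a = 0 := by rw [hb] at hd'; linear_combination -hd'
        exact mul_self_eq_zero.1 this
      subst ha hb hc
      apply ext2 <;> simp
    · refine ⟨Z 1 0 / c, ext2 ?_ ?_ ?_ ?_⟩ <;> simp <;> field_simp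
      · linear_combination a10
      · apply mul_left_cancel₀ hc
        linear_combination c * a11 + a * b10 + Z 1 0 * hd'
      · linear_combination b10
  · refine ⟨Z 0 1 / b, ext2 ?_ ?_ ?_ ?_⟩ <;> simp <;> field_simp
    · linear_combination b01
    · apply mul_left_cancel₀ hb
      linear_combination b * b11 + a * a01 + Z 0 1 * hd'
    · linear_combination a01

theorem nil_sq {X : Mat F} (ht : X.trace = 0) (hd : X.det = 0) : X * X = 0 := by
  rw [det_sq_zero ht, hd, neg_zero, zero_smul]

theorem nil_fix {A X : Mat F} (h0 : X ≠ 0) (ht : X.trace = 0) (hd : X.det = 0) (h : Fixes A X) :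
    ∃ μ : F, A * X = μ • X := by
  obtain ⟨c, hc⟩ := h
  refine nil_span h0 ht ?_ ?_ hd
  · rw [hc, mul_smul_comm, ← Matrix.mul_assoc, nil_sq ht hd, zero_mul, smul_zero]
  · rw [Matrix.mul_assoc, nil_sq ht hd, mul_zero]

theorem mat_mul_ne {h : SL F} {Z : Mat F} (h0 : Z ≠ 0) : mat h * Z ≠ 0 := by
  intro h1
  apply h0
  have := congrArg (fun M => mat h⁻¹ * M) h1
  simpa [← Matrix.mul_assoc, mat_inv_mul] using this

theorem mat_mul_ne' {h : SL F} {Z : Mat F} (h0 : Z ≠ 0) : Z * mat h ≠ 0 := by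
  intro h1
  apply h0
  have := congrArg (fun M => M * mat h⁻¹) h1
  simpa [Matrix.mul_assoc, mat_mul_inv] using this

theorem fix_of_eig {h : SL F} {Z : Mat F} {μ : F} (h0 : Z ≠ 0) (ht : Z.trace = 0)
    (he : mat h * Z = μ • Z) : Fixes (mat h) Z := by
  have e := anticomm (mat h) Z ht
  rw [he, trace_smul, ht, smul_zero, zero_smul, add_zero] at e
  have e1 : Z * mat h = ((mat h).trace - μ) • Z := by
    rw [sub_smul, ← e]; abel
  have hn : (mat h).trace - μ ≠ 0 := by
    intro h1; rw [h1, zero_smul] at e1; exact mat_mul_ne' h0 e1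
  refine ⟨μ * ((mat h).trace - μ)⁻¹, ?_⟩
  rw [he, e1, smul_smul, mul_assoc, inv_mul_cancel₀ hn, mul_one]

theorem nil_pair {X Y : Mat F} (hX0 : X ≠ 0) (hX : X.trace = 0) (hXd : X.det = 0)
    (hY0 : Y ≠ 0) (hY : Y.trace = 0) (hYd : Y.det = 0) (hXY : ¬ Pr X Y) : (X * Y).trace ≠ 0 := by
  intro h
  have e := anti_of_perp hX hY (by rw [D, h, neg_zero])
  have hXX := nil_sq hX hXd
  have hYY := nil_sq hY hYd
  obtain ⟨s, hs⟩ := nil_span (Z := X * Y) hX0 hX (by rw [← Matrix.mul_assoc, hXX, zero_mul])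
    (by rw [e, neg_mul, Matrix.mul_assoc, hXX, mul_zero, neg_zero]) hXd
  obtain ⟨t, ht⟩ := nil_span (Z := X * Y) hY0 hY
    (by rw [e, mul_neg, ← Matrix.mul_assoc, hYY, zero_mul, neg_zero])
    (by rw [Matrix.mul_assoc, hYY, mul_zero]) hYd
  have hs0 : s = 0 := by
    by_contra hs0
    apply hXY
    have : Pr Y X := ⟨s⁻¹ * t, by rw [← smul_smul, ← ht, hs, smul_smul, inv_mul_cancel₀ hs0, one_smul]⟩
    exact this.symm hX0
  rw [hs0, zero_smul] at hs
  rw [hs] at e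
  exact hXY (nil_span hX0 hX hs (neg_eq_zero.1 e.symm) hXd)

/-- The axis of a matrix. -/
def ax (A : Mat F) : Mat F := (2 : F) • A - A.trace • (1 : Mat F)

theorem ax_tr (A : Mat F) : (ax A).trace = 0 := by
  simp [ax]; ring

theorem comm_ax [NeZero (2 : F)] {A B : Mat F} (h : B * ax A = ax A * B) : A * B = B * A := by
  simp only [ax, mul_sub, sub_mul, mul_smul_comm, smul_mul_assoc, one_mul, mul_one] at h
  exact (smul_right_injective _ (two_ne_zero : (2 : F) ≠ 0) (sub_left_injective h)).symm

theorem ax_comm {A B : Mat F} (h : A * B = B * A) : B * ax A = ax A * B := by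
  simp only [ax, mul_sub, sub_mul, mul_smul_comm, smul_mul_assoc, one_mul, mul_one, h]

theorem ax_ne [NeZero (2 : F)] {A : Mat F} (h : ¬ Scal A) : ax A ≠ 0 := by
  intro h0
  have h2 : (2 : F) ≠ 0 := two_ne_zero
  apply h
  refine ⟨2⁻¹ * A.trace, ?_⟩
  rw [ax, sub_eq_zero] at h0
  rw [← smul_smul, ← h0, smul_smul, inv_mul_cancel₀ h2, one_smul]

/-- An element fixing two of the lines fixed by a noncentral element of nonzero trace fixes all of
them. -/
theorem three_lines [NeZero (2 : F)] {g h : SL F} {X Y Z : Mat F} (hg : NC g)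
    (htr : (mat g).trace ≠ 0) (hX0 : X ≠ 0) (hY0 : Y ≠ 0) (hZ0 : Z ≠ 0)
    (hX : X.trace = 0) (hY : Y.trace = 0) (hZ : Z.trace = 0)
    (gX : Fixes (mat g) X) (gY : Fixes (mat g) Y) (gZ : Fixes (mat g) Z) (hXY : ¬ Pr X Y)
    (fX : Fixes (mat h) X) (fY : Fixes (mat h) Y) : Fixes (mat h) Z := by
  have hs := hg.not_scal
  have hW0 := ax_ne hs
  have mix : ∀ {X Y : Mat F}, X ≠ 0 → Y ≠ 0 → Y.trace = 0 → Pr (ax (mat g)) X → Fixes (mat h) X →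
      Fixes (mat h) Y → (Y.det = 0 ∧ ∃ k : F, k ≠ 0 ∧ k * k = (mat g).trace ^ 2 - 4 * (mat g).det ∧
      ax (mat g) * Y = k • Y) → mat h * ax (mat g) = ax (mat g) * mat h := by
    rintro X Y hX0 hY0 hY hP fX fY ⟨hd, k, hk, -, hk2⟩
    obtain ⟨c, hc⟩ := (hP.symm hX0).fixes fX
    obtain ⟨μ, hμ⟩ := nil_fix hY0 hY hd fY
    have hμ0 : μ ≠ 0 := by rintro rfl; rw [zero_smul] at hμ; exact mat_mul_ne hY0 hμ
    have e1 : mat h * ax (mat g) * Y = (k * μ) • Y := by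
      rw [Matrix.mul_assoc, hk2, mul_smul_comm, hμ, smul_smul]
    have e2 : ax (mat g) * mat h * Y = (k * μ) • Y := by
      rw [Matrix.mul_assoc, hμ, mul_smul_comm, hk2, smul_smul, mul_comm]
    rw [hc, smul_mul_assoc, e2, smul_smul] at e1
    have : c = 1 := by
      have := smul_left_injective F hY0 e1
      exact mul_right_cancel₀ (mul_ne_zero hk hμ0) (by simpa using this)
    rw [hc, this, one_smul]
  have key : mat h * ax (mat g) = ax (mat g) * mat h := by
    rcases fix_cases hs hX0 hX htr gX with h1 | h1 <;> rcases fix_cases hs hY0 hY htr gY with h2 | h2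
    · have h1 : Pr (ax (mat g)) X := h1
      exact absurd ((h1.symm hX0).trans h2) hXY
    · exact mix hX0 hY0 hY h1 fX fY h2
    · exact mix hY0 hX0 hX h2 fY fX h1
    · obtain ⟨d1, k, -, -, e1⟩ := h1
      obtain ⟨d2, l, -, -, e2⟩ := h2
      have hn := nil_pair hX0 hX d1 hY0 hY d2 hXY
      obtain ⟨μ, hμ⟩ := nil_fix hX0 hX d1 fX
      obtain ⟨ν, hν⟩ := nil_fix hY0 hY d2 fY
      change ax (mat g) * X = _ at e1
      change ax (mat g) * Y = _ at e2
      have m1 : (mat h * ax (mat g) - ax (mat g) * mat h) * X = 0 := by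
        rw [sub_mul, Matrix.mul_assoc, Matrix.mul_assoc, e1, hμ, mul_smul_comm, mul_smul_comm, e1, hμ,
          smul_comm, sub_self]
      have m2 : (mat h * ax (mat g) - ax (mat g) * mat h) * Y = 0 := by
        rw [sub_mul, Matrix.mul_assoc, Matrix.mul_assoc, e2, hν, mul_smul_comm, mul_smul_comm, e2, hν,
          smul_comm, sub_self]
      have e := anticomm X Y hY
      rw [hX, zero_smul, zero_add] at e
      have := congrArg (fun M => (mat h * ax (mat g) - ax (mat g) * mat h) * M) e
      simp only [mul_add, ← Matrix.mul_assoc, m1, m2, zero_mul, zero_add, mul_smul_comm, mul_one] at this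
      exact sub_eq_zero.1 ((smul_eq_zero.1 this.symm).resolve_left hn)
  have hc := comm_ax key
  rcases fix_cases hs hZ0 hZ htr gZ with h1 | ⟨hd, -⟩
  · exact Pr.fixes h1 (fixes_comm key)
  · obtain ⟨a, b, e⟩ := commute_span hs hc
    obtain ⟨μ, hμ⟩ := nil_fix hZ0 hZ hd gZ
    refine fix_of_eig (μ := a + b * μ) hZ0 hZ ?_
    rw [e, add_mul, smul_mul_assoc, smul_mul_assoc, one_mul, hμ, smul_smul, add_smul]

/-- Four half-turns cannot have three independent fixed lines of the corresponding triples. -/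
theorem inv_lines [NeZero (2 : F)] {a b c d : SL F} {X Y Z : Mat F}
    (ha : (mat a).trace = 0) (hb : (mat b).trace = 0) (hc : (mat c).trace = 0)
    (hd : (mat d).trace = 0) (hX0 : X ≠ 0) (hY0 : Y ≠ 0) (hZ0 : Z ≠ 0)
    (hX : X.trace = 0) (hY : Y.trace = 0) (hZ : Z.trace = 0)
    (bX : Fixes (mat b) X) (cX : Fixes (mat c) X) (dX : Fixes (mat d) X) (aX : ¬ Fixes (mat a) X)
    (aY : Fixes (mat a) Y) (cY : Fixes (mat c) Y) (dY : Fixes (mat d) Y) (bY : ¬ Fixes (mat b) Y)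
    (aZ : Fixes (mat a) Z) (bZ : Fixes (mat b) Z) (dZ : Fixes (mat d) Z) (cZ : ¬ Fixes (mat c) Z)
    (ab : ¬ Pr (mat a) (mat b)) (ac : ¬ Pr (mat a) (mat c)) (ad : ¬ Pr (mat a) (mat d))
    (bc : ¬ Pr (mat b) (mat c)) (bd : ¬ Pr (mat b) (mat d)) (cd : ¬ Pr (mat c) (mat d)) : False := by
  have n0 : ∀ g : SL F, mat g ≠ 0 := fun g h => by
    have := mat_det g; rw [h] at this; simp at this
  have dich : ∀ {g : SL F} {X : Mat F}, (mat g).trace = 0 → X.trace = 0 → Fixes (mat g) X →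
      D X (mat g) = 0 ∨ Pr (mat g) X := by
    intro g X hg hX h
    rcases fix_inv hg (mat_det g) hX h with h | h
    · left; rw [D_comm, D, h, neg_zero]
    · exact Or.inr h
  have pf : ∀ {g : SL F} {X : Mat F}, (mat g).trace = 0 → X.trace = 0 → D X (mat g) = 0 →
      Fixes (mat g) X := by
    intro g X hg hX h
    apply fixes_of_perp hg hX
    rw [D_comm, D, neg_eq_zero] at h; exact h
  have XY : ¬ Pr X Y := fun h => aX ((h.symm hY0).fixes aY)
  have XZ : ¬ Pr X Z := fun h => aX ((h.symm hZ0).fixes aZ)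
  have YZ : ¬ Pr Y Z := fun h => bY ((h.symm hZ0).fixes bZ)
  have two : ∀ {g h : SL F} {X : Mat F}, X ≠ 0 → Pr (mat g) X → Pr (mat h) X → Pr (mat g) (mat h) :=
    fun h0 h1 h2 => h1.trans (h2.symm h0)
  -- no line is spanned by `d`
  have stepd : ∀ {a b c : SL F} {X Y Z : Mat F}, (mat a).trace = 0 → X ≠ 0 → Y ≠ 0 →
      Z ≠ 0 → X.trace = 0 → Y.trace = 0 → Z.trace = 0 → ¬ Fixes (mat a) X → Fixes (mat a) Y →
      Fixes (mat d) Y → Fixes (mat a) Z → Fixes (mat d) Z → ¬ Pr X Y → ¬ Pr X Z → ¬ Pr Y Z →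
      ¬ Pr (mat a) (mat d) → ¬ Pr (mat d) X := by
    intro a b c X Y Z ha hX0 hY0 hZ0 hX hY hZ aX aY dY aZ dZ XY XZ YZ ad h
    have key : ∀ {Y : Mat F}, Y ≠ 0 → Y.trace = 0 → Fixes (mat a) Y → Fixes (mat d) Y → ¬ Pr X Y →
        D Y (mat a) = 0 ∧ D Y (mat d) = 0 := by
      intro Y hY0 hY aY dY XY
      have h1 : D Y (mat d) = 0 := (dich hd hY dY).resolve_right fun h' => XY ((h.symm hX0).trans h')
      refine ⟨(dich ha hY aY).resolve_right fun h' => aX (pf ha hX ?_), h1⟩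
      apply h.perp
      rw [D_comm]
      exact (h'.symm hY0).perp h1
    obtain ⟨y1, y2⟩ := key hY0 hY aY dY XY
    obtain ⟨z1, z2⟩ := key hZ0 hZ aZ dZ XZ
    exact YZ (perp_unique ha hd hY hZ y1 y2 z1 z2 (n0 a) ad hY0)
  have YX : ¬ Pr Y X := fun h => XY (h.symm hX0)
  have ZX : ¬ Pr Z X := fun h => XZ (h.symm hX0)
  have ZY : ¬ Pr Z Y := fun h => YZ (h.symm hY0)
  have dX' := (dich hd hX dX).resolve_right
    (stepd (b := b) (c := c) ha hX0 hY0 hZ0 hX hY hZ aX aY dY aZ dZ XY XZ YZ ad)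
  have dY' := (dich hd hY dY).resolve_right
    (stepd (b := b) (c := c) hb hY0 hX0 hZ0 hY hX hZ bY bX dX bZ dZ YX YZ XZ bd)
  have dZ' := (dich hd hZ dZ).resolve_right
    (stepd (b := b) (c := c) hc hZ0 hX0 hY0 hZ hX hY cZ cX dX cY dY ZX ZY XY cd)
  have pc : Pr (mat c) X ∨ Pr (mat c) Y := by
    by_contra hcon
    push Not at hcon
    exact XY (perp_unique hc hd hX hY ((dich hc hX cX).resolve_right hcon.1) dX'
      ((dich hc hY cY).resolve_right hcon.2) dY' (n0 c) cd hX0)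
  have pb : Pr (mat b) X ∨ Pr (mat b) Z := by
    by_contra hcon
    push Not at hcon
    exact XZ (perp_unique hb hd hX hZ ((dich hb hX bX).resolve_right hcon.1) dX'
      ((dich hb hZ bZ).resolve_right hcon.2) dZ' (n0 b) bd hX0)
  have pa : Pr (mat a) Y ∨ Pr (mat a) Z := by
    by_contra hcon
    push Not at hcon
    exact YZ (perp_unique ha hd hY hZ ((dich ha hY aY).resolve_right hcon.1) dY'
      ((dich ha hZ aZ).resolve_right hcon.2) dZ' (n0 a) ad hY0)
  rcases pc with h | h
  · have h1 := pb.resolve_left fun h' => bc (two hX0 h' h)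
    have h2 := pa.resolve_right fun h' => ab (two hZ0 h' h1)
    have h3 := (dich hc hY cY).resolve_right fun h' => ac (two hY0 h2 h')
    apply aX
    apply pf ha hX
    apply h.perp
    rw [D_comm]
    exact (h2.symm hY0).perp h3
  · have h1 := pa.resolve_left fun h' => ac (two hY0 h' h)
    have h2 := pb.resolve_right fun h' => ab (two hZ0 h1 h')
    have h3 := (dich hc hX cX).resolve_right fun h' => bc (two hX0 h2 h')
    apply bY
    apply pf hb hY
    apply h.perp
    rw [D_comm]
    exact (h2.symm hX0).perp h3
end Lines

/-! ### Irredundant quadruples -/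

section Small
variable {p : ℕ} [hp : Fact p.Prime] [NeZero (2 : ZMod p)] (C : Consts (ZMod p))

/-- Binary tetrahedral, octahedral and icosahedral groups. -/
def Small (H : Subgroup (SL (ZMod p))) : Prop := TypeT H ∨ TypeO H ∨ TypeI H

theorem e_vals : e C (val 0) = 0 ∧ e C (val 1) = 1 ∧ e C (val 2) = -1 ∧ e C (val 3) = C.r ∧
    e C (val 4) = -C.r ∧ e C (val 5) = C.f ∧ e C (val 6) = -C.f ∧ e C (val 7) = 1 - C.f ∧
    e C (val 8) = C.f - 1 ∧ e C (val 9) = 2 ∧ e C (val 10) = -2 := by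
  refine ⟨?_, ?_, ?_, ?_, ?_, ?_, ?_, ?_, ?_, ?_, ?_⟩ <;> simp [e, val] <;> try ring

theorem sq_one_cases {F : Type*} [Field F] {t : F} (h : t ^ 2 = 1) : t = 1 ∨ t = -1 := by
  rcases mul_eq_zero.1 (show (t - 1) * (t + 1) = 0 by linear_combination h) with h | h
  · left; linear_combination h
  · right; linear_combination h

theorem mem_lO {t : ZMod p} (h : t = 0 ∨ t ^ 2 = 1 ∨ t ^ 2 = 2) : InL C lO t := by
  obtain ⟨e0, e1, e2, e3, e4, -⟩ := e_vals C
  rcases h with h | h | h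
  · exact ⟨val 0, by simp [lO], by rw [e0, h]⟩
  · rcases sq_one_cases h with h | h
    · exact ⟨val 1, by simp [lO], by rw [e1, h]⟩
    · exact ⟨val 2, by simp [lO], by rw [e2, h]⟩
  · rcases mul_eq_zero.1 (show (t - C.r) * (t + C.r) = 0 by linear_combination h - C.r2) with h | h
    · exact ⟨val 3, by simp [lO], by rw [e3]; linear_combination h⟩
    · exact ⟨val 4, by simp [lO], by rw [e4]; linear_combination h⟩

theorem mem_lI {t : ZMod p} (h : t = 0 ∨ t ^ 2 = 1 ∨ t ^ 2 = t + 1 ∨ t ^ 2 = -t + 1) :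
    InL C lI t := by
  obtain ⟨e0, e1, e2, -, -, e5, e6, e7, e8, -⟩ := e_vals C
  have hf := C.f2
  rcases h with h | h | h | h
  · exact ⟨val 0, by simp [lI], by rw [e0, h]⟩
  · rcases sq_one_cases h with h | h
    · exact ⟨val 1, by simp [lI], by rw [e1, h]⟩
    · exact ⟨val 2, by simp [lI], by rw [e2, h]⟩
  · rcases mul_eq_zero.1 (show (t - C.f) * (t - (1 - C.f)) = 0 by
      linear_combination h - hf) with h | h
    · exact ⟨val 5, by simp [lI], by rw [e5]; linear_combination h⟩
    · exact ⟨val 7, by simp [lI], by rw [e7]; linear_combination h⟩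
  · rcases mul_eq_zero.1 (show (t + C.f) * (t + (1 - C.f)) = 0 by
      linear_combination h - hf) with h | h
    · exact ⟨val 6, by simp [lI], by rw [e6]; linear_combination h⟩
    · exact ⟨val 8, by simp [lI], by rw [e8]; linear_combination h⟩

/-- The list depends on the group: octahedral traces cover the tetrahedral ones. -/
theorem small_trace {H : Subgroup (SL (ZMod p))} (h : Small H) :
    ∃ T ∈ [lO, lI], ∀ x ∈ H, NC x → InL C T (mat x).trace := by
  rcases h with h | h | h
  · refine ⟨lO, by simp, fun x hx hn => mem_lO C ?_⟩
    rcases h.2.1 x hx hn with h | h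
    · exact Or.inl h
    · exact Or.inr (Or.inl h)
  · exact ⟨lO, by simp, fun x hx hn => mem_lO C (h.2.1 x hx hn)⟩
  · exact ⟨lI, by simp, fun x hx hn => mem_lI C (h.2.1 x hx hn)⟩

include C in
theorem small_two {H : Subgroup (SL (ZMod p))} (h : Small H) {c : SL (ZMod p)} (hc : c ∈ H)
    (ht : (mat c).trace = 2) : c = 1 := by
  have h2 := C.h2
  have h3 := C.h3
  have h5 := C.h5
  by_contra h1
  have hn : NC c := by
    refine ⟨h1, ?_⟩
    rintro rfl
    rw [mat_neg, mat_one] at ht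
    simp at ht
    exact mul_ne_zero h2 h2 (by linear_combination -ht)
  have k0 : (mat c).trace ≠ 0 := by rw [ht]; exact h2
  have k1 : (mat c).trace ^ 2 ≠ 1 := by rw [ht]; intro h; exact h3 (by linear_combination h)
  have k2 : (mat c).trace ^ 2 ≠ 2 := by rw [ht]; intro h; exact h2 (by linear_combination h)
  have k3 : (mat c).trace ^ 2 ≠ (mat c).trace + 1 := by
    rw [ht]; intro h; exact one_ne_zero (by linear_combination h : (1 : ZMod p) = 0)
  have k4 : (mat c).trace ^ 2 ≠ -(mat c).trace + 1 := by
    rw [ht]; intro h; exact h5 (by linear_combination h)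
  rcases h with h | h | h
  · have := h.2.1 c hc hn; tauto
  · have := h.2.1 c hc hn; tauto
  · have := h.2.1 c hc hn; tauto

theorem sub_small {H K : Subgroup (SL (ZMod p))} (h : Small H) (hK : K ≤ H) {l : SL (ZMod p)}
    (hl : l ∈ H) (hlK : l ∉ K) (hneg : -1 ∈ K) : Red K ∨ TypeT K := by
  have hfin : Finite (SL (ZMod p)) := inferInstance
  have hne : K ≠ ⊤ := by rintro rfl; exact hlK trivial
  rcases dickson K hne hneg with h1 | h1 | h1 | h1
  · exact Or.inl h1
  · exact Or.inr h1
  · exfalso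
    have hd := Subgroup.card_dvd_of_le hK
    have hn : Nat.card K ≠ Nat.card H := by
      intro he
      have := Subgroup.eq_of_le_of_card_ge hK he.ge
      exact hlK (this ▸ hl)
    rw [h1.1] at hd hn
    rcases h with h | h | h <;> rw [h.1] at hd hn <;> revert hd hn <;> decide
  · exfalso
    have hd := Subgroup.card_dvd_of_le hK
    have hn : Nat.card K ≠ Nat.card H := by
      intro he
      have := Subgroup.eq_of_le_of_card_ge hK he.ge
      exact hlK (this ▸ hl)
    rw [h1.1] at hd hn
    rcases h with h | h | h <;> rw [h.1] at hd hn <;> revert hd hn <;> decide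

theorem nc_mul {H : Subgroup (SL (ZMod p))} (hneg : -1 ∈ H) {g y : SL (ZMod p)} (hg : g ∉ H)
    (hy : y ∈ H) : NC (g * y) := by
  constructor
  · intro h
    rw [eq_inv_of_mul_eq_one_left h] at hg
    exact hg (H.inv_mem hy)
  · intro h
    have : g = -1 * y⁻¹ := by rw [← h]; group
    rw [this] at hg
    exact hg (H.mul_mem hneg (H.inv_mem hy))

theorem nc_mul' {H : Subgroup (SL (ZMod p))} (hneg : -1 ∈ H) {g y : SL (ZMod p)} (hg : g ∉ H)
    (hy : y ∈ H) : NC (y * g) := by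
  constructor
  · intro h
    rw [eq_inv_of_mul_eq_one_right h] at hg
    exact hg (H.inv_mem hy)
  · intro h
    have : g = y⁻¹ * -1 := by rw [← h]; group
    rw [this] at hg
    exact hg (H.mul_mem (H.inv_mem hy) hneg)

/-- Two elements of a small group with a common eigenvector commute. -/
theorem small_comm (C : Consts (ZMod p)) {H : Subgroup (SL (ZMod p))} (h : Small H)
    {a b : SL (ZMod p)} (ha : a ∈ H) (hb : b ∈ H) {X : Mat (ZMod p)} (h0 : X ≠ 0)
    (ht : X.trace = 0) (hd : X.det = 0) (fa : Fixes (mat a) X) (fb : Fixes (mat b) X) :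
    a * b = b * a := by
  obtain ⟨ν, hν⟩ := nil_fix h0 ht hd fa
  obtain ⟨μ, hμ⟩ := nil_fix h0 ht hd fb
  have e1 : mat (a * b) * X = (μ * ν) • X := by
    rw [mat_mul, Matrix.mul_assoc, hμ, mul_smul_comm, hν, smul_smul]
  have e2 : mat (b * a) * X = (μ * ν) • X := by
    rw [mat_mul, Matrix.mul_assoc, hν, mul_smul_comm, hμ, smul_smul, mul_comm]
  have e3 : (mat (a * b * (b * a)⁻¹) - 1) * (mat (b * a) * X) = 0 := by
    rw [sub_mul, one_mul, ← Matrix.mul_assoc, ← mat_mul, inv_mul_cancel_right, e1, e2, sub_self]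
  have hY0 : mat (b * a) * X ≠ 0 := mat_mul_ne h0
  have hdet : (mat (a * b * (b * a)⁻¹) - 1).det = 0 := by
    by_contra hdn
    apply hY0
    have : IsUnit (mat (a * b * (b * a)⁻¹) - 1).det := isUnit_iff_ne_zero.2 hdn
    calc mat (b * a) * X = (mat (a * b * (b * a)⁻¹) - 1)⁻¹ *
        ((mat (a * b * (b * a)⁻¹) - 1) * (mat (b * a) * X)) := by
          rw [← Matrix.mul_assoc, Matrix.nonsing_inv_mul _ this, one_mul]
      _ = 0 := by rw [e3, mul_zero]
  have htr : (mat (a * b * (b * a)⁻¹)).trace = 2 := by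
    have hd1 := mat_det (a * b * (b * a)⁻¹)
    generalize mat (a * b * (b * a)⁻¹) = M at hd1 hdet ⊢
    rw [det_fin_two] at hd1 hdet
    simp at hdet
    rw [trace_fin_two]
    linear_combination hd1 - hdet
  have := small_two C h (H.mul_mem (H.mul_mem ha hb) (H.inv_mem (H.mul_mem hb ha))) htr
  exact mul_inv_eq_one.1 this

end Small

section Quad
variable {p : ℕ} [hp : Fact p.Prime] [NeZero (2 : ZMod p)]

/-- Four elements `x i` of an irredundant generating set (modulo `-1`), with `H i` the subgroup
generated by all the generators except `x i`. -/
structure Quad (x : Fin 4 → SL (ZMod p)) (H : Fin 4 → Subgroup (SL (ZMod p))) : Prop where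
  neg : ∀ i, -1 ∈ H i
  mem : ∀ i j, i ≠ j → x j ∈ H i
  nmem : ∀ i, x i ∉ H i
  top : ∀ i, ∀ K : Subgroup (SL (ZMod p)), H i ≤ K → x i ∈ K → K = ⊤
  gen : ∀ i j, j ≠ i → ∀ K : Subgroup (SL (ZMod p)),
    (∀ b ∈ H i, (∃ l, l ≠ i ∧ l ≠ j ∧ b ∈ H l) → b ∈ K) → H i ≤ K

theorem fin4_two : ∀ i j : Fin 4, ∃ k l, k ≠ i ∧ k ≠ j ∧ l ≠ i ∧ l ≠ j ∧ k ≠ l := by decide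
theorem fin4_one : ∀ i j k : Fin 4, ∃ l, l ≠ i ∧ l ≠ j ∧ l ≠ k := by decide

namespace Quad
variable {x : Fin 4 → SL (ZMod p)} {H : Fin 4 → Subgroup (SL (ZMod p))}

theorem dick (Q : Quad x H) (i : Fin 4) : Red (H i) ∨ Small (H i) :=
  dickson (H i) (fun h => Q.nmem i (h ▸ trivial)) (Q.neg i)

theorem nc (Q : Quad x H) (i : Fin 4) : NC (x i) :=
  ⟨fun h => Q.nmem i (h ▸ (H i).one_mem), fun h => Q.nmem i (h ▸ Q.neg i)⟩

theorem conflict (Q : Quad x H) {i : Fin 4} {X : Mat (ZMod p)} (h0 : X ≠ 0) (ht : X.trace = 0)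
    (h : H i ≤ Stab X) : ¬ Fixes (mat (x i)) X := fun hf =>
  Stab_ne_top h0 ht (Q.top i _ h (mem_Stab.2 hf))

theorem fixes {X : Mat (ZMod p)} (Q : Quad x H) {i j : Fin 4} (hij : i ≠ j) (h : H i ≤ Stab X) :
    Fixes (mat (x j)) X := mem_Stab.1 (h (Q.mem i j hij))

theorem npr (Q : Quad x H) {i j : Fin 4} (hij : i ≠ j) : ¬ Pr (mat (x i)) (mat (x j)) := by
  rintro ⟨s, hs⟩
  have hd := mat_det (x j)
  rw [hs, det_smul, mat_det, Fintype.card_fin, mul_one] at hd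
  exact Q.nmem j (mem_of_sign (Q.neg j) (Q.mem j i hij.symm) (by rw [← hd, sq]) hs)

theorem nc2 (Q : Quad x H) {i j : Fin 4} (hij : i ≠ j) : NC (x i * x j) :=
  nc_mul (Q.neg i) (Q.nmem i) (Q.mem i j hij)

theorem nc2' (Q : Quad x H) {i j : Fin 4} (hij : i ≠ j) : NC ((x i)⁻¹ * x j) :=
  nc_mul' (Q.neg j) (Q.nmem j) ((H j).inv_mem (Q.mem j i hij.symm))

theorem nc3 (Q : Quad x H) {i j k : Fin 4} (hij : i ≠ j) (hik : i ≠ k) :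
    NC (x i * x j * x k) := by
  rw [mul_assoc]
  exact nc_mul (Q.neg i) (Q.nmem i) ((H i).mul_mem (Q.mem i j hij) (Q.mem i k hik))

theorem nc3' (Q : Quad x H) {i j k : Fin 4} (hik : i ≠ k) (hjk : j ≠ k) :
    NC ((x i)⁻¹ * x j * x k) :=
  nc_mul' (Q.neg k) (Q.nmem k)
    ((H k).mul_mem ((H k).inv_mem (Q.mem k i hik.symm)) (Q.mem k j hjk.symm))

variable (C : Consts (ZMod p))

include C in
/-- An element of an irreducible `H i` has order two or three modulo `-1`. -/
theorem order (Q : Quad x H) {i j : Fin 4} (hi : ¬ Red (H i)) (hij : j ≠ i) :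
    (mat (x j)).trace = 0 ∨ (mat (x j)).trace ^ 2 = 1 := by
  by_contra hcon
  have hS : Small (H i) := (Q.dick i).resolve_left hi
  have hn := Q.nc j
  have ht0 : (mat (x j)).trace ≠ 0 := fun h => hcon (Or.inl h)
  apply hi
  refine ⟨ax (mat (x j)), ax_ne hn.not_scal, ax_tr _, Q.gen i j hij _ ?_⟩
  rintro b hb ⟨l, hli, hlj, hbl⟩
  have haH := Q.mem i j hij.symm
  have hcomm : x j * b = b * x j → b ∈ Stab (ax (mat (x j))) := by
    intro h
    rw [mem_Stab]
    exact ⟨1, by rw [one_smul, ax_comm (mat_comm.1 h)]⟩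
  have hK : ∀ L : Subgroup (SL (ZMod p)), -1 ∈ L → x j ∈ L → b ∈ L →
      Subgroup.closure {-1, x j, b} ≤ L := by
    intro L h1 h2 h3
    rw [Subgroup.closure_le]
    rintro y (rfl | rfl | rfl) <;> assumption
  have m1 : (-1 : SL (ZMod p)) ∈ Subgroup.closure {-1, x j, b} :=
    Subgroup.subset_closure (by simp)
  have m2 : x j ∈ Subgroup.closure {-1, x j, b} := Subgroup.subset_closure (by simp)
  have m3 : b ∈ Subgroup.closure {-1, x j, b} := Subgroup.subset_closure (by simp)
  rcases sub_small hS (hK _ (Q.neg i) haH hb) (Q.mem i l hli.symm)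
    (fun h => Q.nmem l (hK _ (Q.neg l) (Q.mem l j hlj) hbl h)) m1 with ⟨X, h0, ht, hX⟩ | hT
  · rcases fix_cases hn.not_scal h0 ht ht0 (mem_Stab.1 (hX m2)) with h | ⟨hd, -⟩
    · have : Pr (ax (mat (x j))) X := h
      exact (this.symm h0).fixes (mem_Stab.1 (hX m3))
    · exact hcomm (small_comm C hS haH hb h0 ht hd (mem_Stab.1 (hX m2)) (mem_Stab.1 (hX m3)))
  · exact absurd (hT.2.1 _ m2 hn) hcon

include C in
theorem ax_unique {g : SL (ZMod p)} (hn : NC g) (h1 : (mat g).trace ^ 2 = 1) {X : Mat (ZMod p)}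
    (h0 : X ≠ 0) (ht : X.trace = 0) (hf : Fixes (mat g) X) : Pr (ax (mat g)) X := by
  rcases fix_cases hn.not_scal h0 ht (by intro h; simp [h] at h1) hf with h | ⟨-, k, -, hk, -⟩
  · exact h
  · exfalso
    rw [mat_det, h1] at hk
    exact C.n3 k (by rw [sq, hk]; ring)

include C in
/-- The three fixed lines are distinct, which forces all four elements to be half-turns; this is
excluded by `inv_lines`. -/
theorem three_red (Q : Quad x H) {a b c d : Fin 4} (hab : a ≠ b) (hac : a ≠ c) (had : a ≠ d)
    (hbc : b ≠ c) (hbd : b ≠ d) (hcd : c ≠ d) (ha : Red (H a)) (hb : Red (H b)) (hc : Red (H c)) :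
    False := by
  obtain ⟨X, X0, Xt, hX⟩ := ha
  obtain ⟨Y, Y0, Yt, hY⟩ := hb
  obtain ⟨Z, Z0, Zt, hZ⟩ := hc
  have np : ∀ {i j : Fin 4} {U V : Mat (ZMod p)}, i ≠ j → V ≠ 0 → V.trace = 0 → H i ≤ Stab U →
      H j ≤ Stab V → ¬ Pr U V := by
    intro i j U V hij V0 Vt hU hV hP
    exact Q.conflict V0 Vt hV (hP.fixes (Q.fixes hij hU))
  have trd : (mat (x d)).trace = 0 := by
    by_contra h
    exact Q.conflict X0 Xt hX (three_lines (Q.nc d) h Y0 Z0 X0 Yt Zt Xt (Q.fixes hbd hY)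
      (Q.fixes hcd hZ) (Q.fixes had hX) (np hbc Z0 Zt hY hZ) (Q.fixes hab.symm hY)
      (Q.fixes hac.symm hZ))
  -- any of the three other elements is a half-turn as well
  have key : ∀ {i j k : Fin 4} {U V : Mat (ZMod p)}, i ≠ d → j ≠ i → k ≠ i → j ≠ k → j ≠ d → k ≠ d →
      U ≠ 0 → V ≠ 0 → U.trace = 0 → V.trace = 0 → H j ≤ Stab U → H k ≤ Stab V →
      (mat (x i)).trace = 0 := by
    intro i j k U V hid hji hki hjk hjd hkd U0 V0 Ut Vt hU hV
    by_contra htr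
    by_cases hR : Red (H d)
    · obtain ⟨T, T0, Tt, hT⟩ := hR
      exact Q.conflict T0 Tt hT (three_lines (Q.nc i) htr U0 V0 T0 Ut Vt Tt (Q.fixes hji hU)
        (Q.fixes hki hV) (Q.fixes hid.symm hT) (np hjk V0 Vt hU hV) (Q.fixes hjd hU)
        (Q.fixes hkd hV))
    · have h1 := (Q.order C hR hid).resolve_left htr
      have p1 := ax_unique C (Q.nc i) h1 U0 Ut (Q.fixes hji hU)
      have p2 := ax_unique C (Q.nc i) h1 V0 Vt (Q.fixes hki hV)
      exact np hjk V0 Vt hU hV ((p1.symm U0).trans p2)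
  have tra := key had hab.symm hac.symm hbc hbd hcd Y0 Z0 Yt Zt hY hZ
  have trb := key hbd hab hbc.symm hac had hcd X0 Z0 Xt Zt hX hZ
  have trc := key hcd hac hbc hab had hbd X0 Y0 Xt Yt hX hY
  exact inv_lines tra trb trc trd X0 Y0 Z0 Xt Yt Zt
    (Q.fixes hab hX) (Q.fixes hac hX) (Q.fixes had hX) (Q.conflict X0 Xt hX)
    (Q.fixes hab.symm hY) (Q.fixes hbc hY) (Q.fixes hbd hY) (Q.conflict Y0 Yt hY)
    (Q.fixes hac.symm hZ) (Q.fixes hbc.symm hZ) (Q.fixes hcd hZ) (Q.conflict Z0 Zt hZ)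
    (Q.npr hab) (Q.npr hac) (Q.npr had) (Q.npr hbc) (Q.npr hbd) (Q.npr hcd)

include C in
/-- All four elements have order two or three modulo `-1`. -/
theorem order' (Q : Quad x H) (j : Fin 4) :
    (mat (x j)).trace = 0 ∨ (mat (x j)).trace ^ 2 = 1 := by
  obtain ⟨a, b, c, hja, hjb, hjc, hab, hac, hbc⟩ : ∃ a b c : Fin 4, j ≠ a ∧ j ≠ b ∧ j ≠ c ∧ a ≠ b ∧
      a ≠ c ∧ b ≠ c := by revert j; decide
  by_cases ha : Red (H a)
  · by_cases hb : Red (H b)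
    · by_cases hc : Red (H c)
      · exact (Q.three_red C hab hac hja.symm hbc hjb.symm hjc.symm ha hb hc).elim
      · exact Q.order C hc hjc
    · exact Q.order C hb hjb
  · exact Q.order C ha hja

end Quad
end Quad

/-! ### Pairs and triples in an irredundant quadruple -/

section Pairs
variable {p : ℕ} [hp : Fact p.Prime] [NeZero (2 : ZMod p)] (C : Consts (ZMod p))

theorem inv_dich {g : SL (ZMod p)} {X : Mat (ZMod p)} (hg : (mat g).trace = 0) (hX : X.trace = 0)
    (h : Fixes (mat g) X) : D X (mat g) = 0 ∨ Pr (mat g) X := by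
  rcases fix_inv hg (mat_det g) hX h with h | h
  · left; rw [D_comm, D, h, neg_zero]
  · exact Or.inr h

include C in
theorem fix_W {m : SL (ZMod p)} (hm : NC m) (h1 : (mat m).trace = 1) {X : Mat (ZMod p)}
    (h0 : X ≠ 0) (ht : X.trace = 0) (hf : Fixes (mat m) X) : Pr (W m) X := by
  have := Quad.ax_unique C hm (by rw [h1, one_pow]) h0 ht hf
  rwa [ax, h1] at this

theorem W_ne (C : Consts (ZMod p)) {m : SL (ZMod p)} (h1 : (mat m).trace = 1) : W m ≠ 0 := by
  intro h
  have := D_W h1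
  rw [h] at this
  simp [D] at this
  exact mul_ne_zero C.h2 C.h3 (by linear_combination -this)

theorem W_perp (C : Consts (ZMod p)) {m b : SL (ZMod p)} (h1 : (mat m).trace = 1)
    (hb : (mat b).trace = 0) (hf : Fixes (mat b) (W m)) : D (W m) (mat b) = 0 := by
  rcases inv_dich hb (W_tr h1) hf with h | ⟨s, h⟩
  · exact h
  · exfalso
    have := D_W h1
    rw [h, D_smul, D_smul', D_inv hb] at this
    apply C.n3 (C.i * s)
    rw [mul_pow, C.i2]
    apply mul_left_cancel₀ C.h2
    linear_combination -this

theorem W_pr (C : Consts (ZMod p)) {m n : SL (ZMod p)} (h1 : (mat m).trace = 1)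
    (h2 : (mat n).trace = 1) (h : Pr (W m) (W n)) : n = m ∨ n = m⁻¹ := by
  obtain ⟨s, h⟩ := h
  have e := D_W h2
  rw [h, D_smul, D_smul', D_W h1] at e
  have h6 : (6 : ZMod p) ≠ 0 := by
    intro h; exact mul_ne_zero C.h2 C.h3 (by linear_combination h)
  have inj : ∀ {a b : SL (ZMod p)}, W a = W b → a = b := by
    intro a b hab
    rw [W, W] at hab
    exact mat_inj (smul_right_injective _ C.h2 (sub_left_injective hab))
  have hs : s ^ 2 = 1 := mul_right_cancel₀ h6 (by linear_combination e)
  rcases sq_one_cases hs with rfl | rfl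
  · left; exact inj (by rw [h, one_smul])
  · right; exact inj (by rw [h, W_inv h1, neg_smul, one_smul])

namespace Quad
variable {x : Fin 4 → SL (ZMod p)} {H : Fin 4 → Subgroup (SL (ZMod p))}

theorem ne_inv (Q : Quad x H) {i j : Fin 4} (hij : i ≠ j) (h : x j = x i ∨ x j = (x i)⁻¹) :
    False := by
  apply Q.nmem j
  rcases h with h | h <;> rw [h]
  · exact Q.mem j i hij.symm
  · exact (H j).inv_mem (Q.mem j i hij.symm)

theorem D_tr {a b : SL (ZMod p)} (ha : (mat a).trace = 0) :
    D (mat a) (mat b) = (mat (a⁻¹ * b)).trace := by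
  rw [mat_mul, mat_inv, ha, zero_smul, zero_sub, neg_mul, trace_neg, D]

/-- The possible values of the pairing of two half-turns. -/
def In22 (t : ZMod p) : Prop := InL C lO t ∨ InL C lI t

theorem pair22 (Q : Quad x H) {i j : Fin 4} (hij : i ≠ j) (hi : (mat (x i)).trace = 0)
    (hj : (mat (x j)).trace = 0) : In22 C (D (mat (x i)) (mat (x j))) := by
  obtain ⟨k, l, hki, hkj, hli, hlj, hkl⟩ := fin4_two i j
  have sm : ∀ {k : Fin 4}, k ≠ i → k ≠ j → ¬ Red (H k) → In22 C (D (mat (x i)) (mat (x j))) := by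
    intro k hki hkj hk
    obtain ⟨T, hT, h⟩ := small_trace C ((Q.dick k).resolve_left hk)
    rw [D_tr hi]
    have := h _ ((H k).mul_mem ((H k).inv_mem (Q.mem k i hki)) (Q.mem k j hkj)) (Q.nc2' hij)
    simp only [List.mem_cons, List.not_mem_nil, or_false] at hT
    rcases hT with rfl | rfl
    · exact Or.inl this
    · exact Or.inr this
  by_cases hk : Red (H k)
  · by_cases hl : Red (H l)
    · suffices h : D (mat (x i)) (mat (x j)) = 0 by
        rw [h]; exact Or.inl (mem_lO C (Or.inl rfl))
      by_contra hD
      obtain ⟨X, X0, Xt, hX⟩ := hk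
      obtain ⟨Y, Y0, Yt, hY⟩ := hl
      have npr : ∀ {U : Mat (ZMod p)}, U ≠ 0 → U.trace = 0 → Fixes (mat (x i)) U →
          Fixes (mat (x j)) U → D U (mat (x i)) = 0 ∧ D U (mat (x j)) = 0 := by
        intro U U0 Ut fi fj
        rcases inv_dich hi Ut fi with h1 | h1
        · rcases inv_dich hj Ut fj with h2 | h2
          · exact ⟨h1, h2⟩
          · exact absurd ((D_comm _ _).trans ((h2.symm U0).perp h1)) hD
        · rcases inv_dich hj Ut fj with h2 | h2
          · exact absurd ((h1.symm U0).perp h2) hD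
          · exact (Q.npr hij (h1.trans (h2.symm U0))).elim
      obtain ⟨a1, a2⟩ := npr X0 Xt (Q.fixes hki hX) (Q.fixes hkj hX)
      obtain ⟨b1, b2⟩ := npr Y0 Yt (Q.fixes hli hY) (Q.fixes hlj hY)
      have hn0 : mat (x i) ≠ 0 := fun h => by
        have := mat_det (x i); rw [h] at this; simp at this
      have : Pr X Y := perp_unique hi hj Xt Yt a1 a2 b1 b2 hn0 (Q.npr hij) X0
      exact Q.conflict Y0 Yt hY (this.fixes (Q.fixes hkl hX))
    · exact sm hli hlj hl
  · exact sm hki hkj hk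

/-- The group generated by two of the elements is reducible or lies in a binary tetrahedral
group: it lies in two of the `H k`, and is proper in each of them. -/
theorem pair_aux (Q : Quad x H) {i j : Fin 4} :
    (∃ X : Mat (ZMod p), X ≠ 0 ∧ X.trace = 0 ∧ Fixes (mat (x i)) X ∧ Fixes (mat (x j)) X) ∨
    ∃ K, TypeT K ∧ x i ∈ K ∧ x j ∈ K := by
  obtain ⟨k, l, hki, hkj, hli, hlj, hkl⟩ := fin4_two i j
  by_cases hk : Red (H k)
  · obtain ⟨X, X0, Xt, hX⟩ := hk
    exact Or.inl ⟨X, X0, Xt, Q.fixes hki hX, Q.fixes hkj hX⟩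
  have hS := (Q.dick k).resolve_left hk
  have hK : ∀ L : Subgroup (SL (ZMod p)), -1 ∈ L → x i ∈ L → x j ∈ L →
      Subgroup.closure {-1, x i, x j} ≤ L := by
    intro L h1 h2 h3
    rw [Subgroup.closure_le]
    rintro y (rfl | rfl | rfl) <;> assumption
  have m1 : (-1 : SL (ZMod p)) ∈ Subgroup.closure {-1, x i, x j} :=
    Subgroup.subset_closure (by simp)
  have m2 : x i ∈ Subgroup.closure {-1, x i, x j} := Subgroup.subset_closure (by simp)
  have m3 : x j ∈ Subgroup.closure {-1, x i, x j} := Subgroup.subset_closure (by simp)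
  rcases sub_small hS (hK _ (Q.neg k) (Q.mem k i hki) (Q.mem k j hkj)) (Q.mem k l hkl)
    (fun h => Q.nmem l (hK _ (Q.neg l) (Q.mem l i hli) (Q.mem l j hlj) h)) m1 with
    ⟨X, h0, ht, hX⟩ | hT
  · exact Or.inl ⟨X, h0, ht, mem_Stab.1 (hX m2), mem_Stab.1 (hX m3)⟩
  · exact Or.inr ⟨_, hT, m2, m3⟩

include C in
theorem pair32 (Q : Quad x H) {i j : Fin 4} (hij : i ≠ j) (hi : (mat (x i)).trace = 1)
    (hj : (mat (x j)).trace = 0) : D (W (x i)) (mat (x j)) = 0 ∨ D (W (x i)) (mat (x j)) = 2 ∨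
      D (W (x i)) (mat (x j)) = -2 := by
  rcases Q.pair_aux (i := i) (j := j) with ⟨X, X0, Xt, h1, h2⟩ | ⟨K, hK, h1, h2⟩
  · left
    exact W_perp C hi hj (((fix_W C (Q.nc i) hi X0 Xt h1).symm X0).fixes h2)
  · rw [D_Wb _ _ hj]
    rcases hK.2.1 _ (K.mul_mem h1 h2) (Q.nc2 hij) with h | h
    · left; rw [h, mul_zero]
    · rcases sq_one_cases h with h | h <;> rw [h]
      · right; right; ring
      · right; left; ring

include C in
theorem pair33 (Q : Quad x H) {i j : Fin 4} (hij : i ≠ j) (hi : (mat (x i)).trace = 1)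
    (hj : (mat (x j)).trace = 1) : D (W (x i)) (W (x j)) = 2 ∨ D (W (x i)) (W (x j)) = -2 := by
  rcases Q.pair_aux (i := i) (j := j) with ⟨X, X0, Xt, h1, h2⟩ | ⟨K, hK, h1, h2⟩
  · exfalso
    have a := fix_W C (Q.nc i) hi X0 Xt h1
    have b := fix_W C (Q.nc j) hj X0 Xt h2
    exact Q.ne_inv hij (W_pr C hi hj (a.trans (b.symm X0)))
  · rw [D_WW hi hj]
    rcases hK.2.1 _ (K.mul_mem h1 h2) (Q.nc2 hij) with h | h
    · left; rw [h]; ring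
    · rcases sq_one_cases h with h | h
      · right; rw [h]; ring
      · exfalso
        have e : (mat ((x i)⁻¹ * x j)).trace = 2 := by
          rw [mat_mul] at h ⊢
          rw [mat_inv, hi, one_smul, sub_mul, one_mul, trace_sub, h, hj]; ring
        have := small_two C (Or.inl hK) (K.mul_mem (K.inv_mem h1) h2) e
        exact Q.ne_inv hij (Or.inl (inv_mul_eq_one.1 this).symm)

theorem trip222 (Q : Quad x H) {i j k : Fin 4} (hij : i ≠ j) (hik : i ≠ k) (hjk : j ≠ k)
    (hi : (mat (x i)).trace = 0) (hj : (mat (x j)).trace = 0) (hk : (mat (x k)).trace = 0)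
    {a b c : ZMod p} (ha : D (mat (x i)) (mat (x j)) = a) (hb : D (mat (x i)) (mat (x k)) = b)
    (hc : D (mat (x j)) (mat (x k)) = c) :
    gd3 2 2 2 a b c = 0 ∨ (a = 0 ∧ b = 0) ∨ (a = 0 ∧ c = 0) ∨ (b = 0 ∧ c = 0) ∨
      ∃ T ∈ [lO, lI], InL C T a ∧ InL C T b ∧ InL C T c ∧ ∃ t, InL C T t ∧
        2 * t ^ 2 = gd3 2 2 2 a b c := by
  have G := gd3_eq hi hj hk
  rw [D_inv hi, D_inv hj, D_inv hk, ha, hb, hc] at G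
  have tri : ∀ {g h : SL (ZMod p)} {X : Mat (ZMod p)}, (mat g).trace = 0 → (mat h).trace = 0 →
      X ≠ 0 → Pr (mat g) X → Fixes (mat h) X → ¬ Pr (mat h) (mat g) → D (mat g) (mat h) = 0 := by
    intro g h X hg hh X0 hP hf hn
    rcases inv_dich hh hg ((hP.symm X0).fixes hf) with h | h
    · exact h
    · exact absurd h hn
  obtain ⟨l, hli, hlj, hlk⟩ := fin4_one i j k
  by_cases hl : Red (H l)
  · obtain ⟨X, X0, Xt, hX⟩ := hl
    have fi := Q.fixes hli hX
    have fj := Q.fixes hlj hX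
    have fk := Q.fixes hlk hX
    rcases inv_dich hi Xt fi with h1 | h1
    · rcases inv_dich hj Xt fj with h2 | h2
      · rcases inv_dich hk Xt fk with h3 | h3
        · left
          rw [G, perp_cramer hi hj hk Xt h1 h2 h3 X0]; ring
        · right; right; right; left
          rw [← hb, ← hc, D_comm, D_comm (mat (x j))]
          exact ⟨tri hk hi X0 h3 fi (Q.npr hik), tri hk hj X0 h3 fj (Q.npr hjk)⟩
      · right; right; left
        rw [← ha, ← hc, D_comm]
        exact ⟨tri hj hi X0 h2 fi (Q.npr hij), tri hj hk X0 h2 fk (Q.npr hjk.symm)⟩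
    · right; left
      rw [← ha, ← hb]
      exact ⟨tri hi hj X0 h1 fj (Q.npr hij.symm), tri hi hk X0 h1 fk (Q.npr hik.symm)⟩
  · right; right; right; right
    obtain ⟨T, hT, h⟩ := small_trace C ((Q.dick l).resolve_left hl)
    have mi := Q.mem l i hli
    have mj := Q.mem l j hlj
    have mk := Q.mem l k hlk
    refine ⟨T, hT, ?_, ?_, ?_, (mat (x i * x j * x k)).trace, ?_, ?_⟩
    · rw [← ha, D_tr hi]; exact h _ ((H l).mul_mem ((H l).inv_mem mi) mj) (Q.nc2' hij)
    · rw [← hb, D_tr hi]; exact h _ ((H l).mul_mem ((H l).inv_mem mi) mk) (Q.nc2' hik)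
    · rw [← hc, D_tr hj]; exact h _ ((H l).mul_mem ((H l).inv_mem mj) mk) (Q.nc2' hjk)
    · exact h _ ((H l).mul_mem ((H l).mul_mem mi mj) mk) (Q.nc3 hij hik)
    · rw [G, mat_mul, mat_mul]

theorem trip322 (Q : Quad x H) {i j k : Fin 4} (hij : i ≠ j) (hik : i ≠ k) (hjk : j ≠ k)
    (hi : (mat (x i)).trace = 1) (hj : (mat (x j)).trace = 0) (hk : (mat (x k)).trace = 0)
    {a b c : ZMod p} (ha : D (W (x i)) (mat (x j)) = a) (hb : D (W (x i)) (mat (x k)) = b)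
    (hc : D (mat (x j)) (mat (x k)) = c) :
    (a = 0 ∧ b = 0) ∨ ∃ T ∈ [lO, lI], InL C T c ∧ ∃ t, InL C T t ∧ InL C T (-(t + c)) ∧
        2 * (2 * t + c) ^ 2 = gd3 6 2 2 a b c := by
  have G := gd3_eq (W_tr hi) hj hk
  rw [D_W hi, D_inv hj, D_inv hk, ha, hb, hc] at G
  obtain ⟨l, hli, hlj, hlk⟩ := fin4_one i j k
  by_cases hl : Red (H l)
  · obtain ⟨X, X0, Xt, hX⟩ := hl
    have hP := (fix_W C (Q.nc i) hi X0 Xt (Q.fixes hli hX)).symm X0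
    left
    rw [← ha, ← hb]
    exact ⟨W_perp C hi hj (hP.fixes (Q.fixes hlj hX)), W_perp C hi hk (hP.fixes (Q.fixes hlk hX))⟩
  · right
    obtain ⟨T, hT, h⟩ := small_trace C ((Q.dick l).resolve_left hl)
    have mi := Q.mem l i hli
    have mj := Q.mem l j hlj
    have mk := Q.mem l k hlk
    refine ⟨T, hT, ?_, (mat (x i * x j * x k)).trace, ?_, ?_, ?_⟩
    · rw [← hc, D_tr hj]; exact h _ ((H l).mul_mem ((H l).inv_mem mj) mk) (Q.nc2' hjk)
    · exact h _ ((H l).mul_mem ((H l).mul_mem mi mj) mk) (Q.nc3 hij hik)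
    · have e : -((mat (x i * x j * x k)).trace + c) = (mat ((x i)⁻¹ * x j * x k)).trace := by
        rw [mat_mul, mat_mul, mat_mul, mat_mul, mat_inv, hi, one_smul, sub_mul, sub_mul, one_mul,
          trace_sub, ← hc, D]
        ring
      rw [e]
      exact h _ ((H l).mul_mem ((H l).mul_mem ((H l).inv_mem mi) mj) mk) (Q.nc3' hik hjk)
    · have e : (W (x i) * mat (x j) * mat (x k)).trace = 2 * (mat (x i * x j * x k)).trace + c := by
        rw [mat_mul, mat_mul, W, sub_mul, sub_mul, one_smul, one_mul, smul_mul_assoc,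
          smul_mul_assoc, trace_sub, trace_smul, ← hc, D, smul_eq_mul]
        ring
      rw [G, e]

theorem trip332 (Q : Quad x H) {i j k : Fin 4} (hij : i ≠ j) (hik : i ≠ k) (hjk : j ≠ k)
    (hi : (mat (x i)).trace = 1) (hj : (mat (x j)).trace = 1) (hk : (mat (x k)).trace = 0)
    {a b c : ZMod p} (ha : D (W (x i)) (W (x j)) = a) (hb : D (W (x i)) (mat (x k)) = b)
    (hc : D (W (x j)) (mat (x k)) = c) :
    ∃ T ∈ [lO, lI], ∃ t, InL C T t ∧ (∃ q, InL C T q ∧ 2 * q = -(2 * t + b + c)) ∧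
        2 * (4 * t + b + c) ^ 2 = gd3 6 6 2 a b c := by
  have G := gd3_eq (W_tr hi) (W_tr hj) hk
  rw [D_W hi, D_W hj, D_inv hk, ha, hb, hc] at G
  obtain ⟨l, hli, hlj, hlk⟩ := fin4_one i j k
  by_cases hl : Red (H l)
  · exfalso
    obtain ⟨X, X0, Xt, hX⟩ := hl
    have hP := (fix_W C (Q.nc j) hj X0 Xt (Q.fixes hlj hX)).symm X0
    have hP' := fix_W C (Q.nc i) hi X0 Xt (Q.fixes hli hX)
    exact Q.ne_inv hij (W_pr C hi hj (hP'.trans hP))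
  · obtain ⟨T, hT, h⟩ := small_trace C ((Q.dick l).resolve_left hl)
    have mi := Q.mem l i hli
    have mj := Q.mem l j hlj
    have mk := Q.mem l k hlk
    have e : (W (x i) * W (x j) * mat (x k)).trace =
        4 * (mat (x i * x j * x k)).trace + b + c := by
      rw [← hb, ← hc, D_Wb _ _ hk, D_Wb _ _ hk]
      simp only [mat_mul, W, sub_mul, mul_sub, one_smul, one_mul, mul_one, smul_mul_assoc,
        mul_smul_comm, trace_sub, trace_smul, smul_eq_mul, hk]
      ring
    have e2 : 2 * (mat (x j * x i * x k)).trace = -(2 * (mat (x i * x j * x k)).trace + b + c) := by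
      rw [← hb, ← hc, D_Wb _ _ hk, D_Wb _ _ hk]
      have := anticomm (mat (x i)) (W (x j)) (W_tr hj)
      have := congrArg (fun M => (M * mat (x k)).trace) this
      simp only [W, sub_mul, mul_sub, add_mul, one_smul, one_mul, mul_one, smul_mul_assoc,
        mul_smul_comm, trace_sub, trace_add, trace_smul, smul_eq_mul, hk, hi] at this
      simp only [mat_mul]
      linear_combination this
    refine ⟨T, hT, (mat (x i * x j * x k)).trace, ?_, ⟨_, ?_, e2⟩, ?_⟩
    · exact h _ ((H l).mul_mem ((H l).mul_mem mi mj) mk) (Q.nc3 hij hik)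
    · exact h _ ((H l).mul_mem ((H l).mul_mem mj mi) mk) (Q.nc3 hij.symm hjk)
    · rw [G, e]

end Quad
end Pairs

/-! ### Gram matrices of irredundant quadruples -/

section NoQuad
variable {p : ℕ} [hp : Fact p.Prime] [NeZero (2 : ZMod p)] (C : Consts (ZMod p))

theorem codes22 {k i j : ℕ} (h : k ≤ i) (hij : i < j) : codes k i j = codes 0 0 1 := by
  have h1 : j.blt k = false := by rw [Bool.eq_false_iff, Ne, blt_iff]; omega
  have h2 : i.blt k = false := by rw [Bool.eq_false_iff, Ne, blt_iff]; omega
  simp only [codes, h1, h2]; rfl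
theorem codes32 {k i j : ℕ} (h : i < k) (hj : k ≤ j) : codes k i j = codes 1 0 1 := by
  have h1 : j.blt k = false := by rw [Bool.eq_false_iff, Ne, blt_iff]; omega
  have h2 : i.blt k = true := blt_iff.2 h
  simp only [codes, h1, h2]; rfl
theorem codes33 {k i j : ℕ} (h : j < k) : codes k i j = codes 2 0 1 := by
  have h1 : j.blt k = true := blt_iff.2 h
  simp only [codes, h1]; rfl
theorem codesP22 {k i j : ℕ} (h : k ≤ i) (hij : i < j) : codesP k i j = [0, 1, 3, 5, 7] := by
  have h1 : j.blt k = false := by rw [Bool.eq_false_iff, Ne, blt_iff]; omega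
  have h2 : i.blt k = false := by rw [Bool.eq_false_iff, Ne, blt_iff]; omega
  simp only [codesP, h1, h2]; rfl
theorem codesP32 {k i j : ℕ} (h : i < k) (hj : k ≤ j) : codesP k i j = [0, 9] := by
  have h1 : j.blt k = false := by rw [Bool.eq_false_iff, Ne, blt_iff]; omega
  have h2 : i.blt k = true := blt_iff.2 h
  simp only [codesP, h1, h2]; rfl
theorem codesP33 {k i j : ℕ} (h : j < k) : codesP k i j = [9] := by
  have h1 : j.blt k = true := blt_iff.2 h
  simp only [codesP, h1]; rfl

open Classical in
/-- The class up to sign of a pairing of half-turns. -/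
noncomputable def clF (t : ZMod p) : ℕ :=
  if t = 0 then 0 else if t = 1 ∨ t = -1 then 1 else if t = C.r ∨ t = -C.r then 2 else
    if t = C.f ∨ t = -C.f then 3 else 4

theorem clF_neg (t : ZMod p) : clF C (-t) = clF C t := by
  have h : ∀ a : ZMod p, (-t = a ∨ -t = -a) ↔ (t = a ∨ t = -a) := by
    intro a; rw [neg_inj, neg_eq_iff_eq_neg, or_comm]
  simp only [clF, h, neg_eq_zero]

/-- `t` is the value of one of the codes in `l`. -/
def Cod (l : List ℕ) (k : ℕ) (t : ZMod p) : Prop :=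
  ∃ c ∈ l, t = e C (val c) ∧ (k = 0 → cls c = clF C t)

theorem cod22 {t : ZMod p} (h : Quad.In22 C t) (k : ℕ) :
    Cod C (codes 0 0 1) k t ∧ (Cod C [0, 1, 3, 5, 7] k t ∨ Cod C [0, 1, 3, 5, 7] k (-t)) := by
  obtain ⟨e0, e1, e2, e3, e4, e5, e6, e7, e8, -⟩ := e_vals C
  have hc : codes 0 0 1 = [0, 1, 2, 3, 4, 5, 6, 7, 8] := rfl
  rw [hc]
  have hneg : clF C (-t) = clF C t := clF_neg C t
  by_cases h0 : t = 0
  · have hcl : clF C t = 0 := by simp [clF, h0]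
    exact ⟨⟨0, by simp, by rw [e0, h0], fun _ => by rw [hcl]; rfl⟩,
      Or.inl ⟨0, by simp, by rw [e0, h0], fun _ => by rw [hcl]; rfl⟩⟩
  by_cases h1 : t = 1 ∨ t = -1
  · have hcl : clF C t = 1 := by rw [clF, if_neg h0, if_pos h1]
    rcases h1 with h1 | h1
    · exact ⟨⟨1, by simp, by rw [e1, h1], fun _ => by rw [hcl]; rfl⟩,
        Or.inl ⟨1, by simp, by rw [e1, h1], fun _ => by rw [hcl]; rfl⟩⟩
    · exact ⟨⟨2, by simp, by rw [e2, h1], fun _ => by rw [hcl]; rfl⟩,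
        Or.inr ⟨1, by simp, by rw [e1, h1, neg_neg], fun _ => by rw [hneg, hcl]; rfl⟩⟩
  by_cases h2 : t = C.r ∨ t = -C.r
  · have hcl : clF C t = 2 := by rw [clF, if_neg h0, if_neg h1, if_pos h2]
    rcases h2 with h1 | h1
    · exact ⟨⟨3, by simp, by rw [e3, h1], fun _ => by rw [hcl]; rfl⟩,
        Or.inl ⟨3, by simp, by rw [e3, h1], fun _ => by rw [hcl]; rfl⟩⟩
    · exact ⟨⟨4, by simp, by rw [e4, h1], fun _ => by rw [hcl]; rfl⟩,
        Or.inr ⟨3, by simp, by rw [e3, h1, neg_neg], fun _ => by rw [hneg, hcl]; rfl⟩⟩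
  by_cases h3 : t = C.f ∨ t = -C.f
  · have hcl : clF C t = 3 := by rw [clF, if_neg h0, if_neg h1, if_neg h2, if_pos h3]
    rcases h3 with h1 | h1
    · exact ⟨⟨5, by simp, by rw [e5, h1], fun _ => by rw [hcl]; rfl⟩,
        Or.inl ⟨5, by simp, by rw [e5, h1], fun _ => by rw [hcl]; rfl⟩⟩
    · exact ⟨⟨6, by simp, by rw [e6, h1], fun _ => by rw [hcl]; rfl⟩,
        Or.inr ⟨5, by simp, by rw [e5, h1, neg_neg], fun _ => by rw [hneg, hcl]; rfl⟩⟩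
  have hcl : clF C t = 4 := by rw [clF, if_neg h0, if_neg h1, if_neg h2, if_neg h3]
  have h4 : t = 1 - C.f ∨ t = C.f - 1 := by
    rcases h with ⟨y, hy, h⟩ | ⟨y, hy, h⟩ <;>
      simp only [lO, lI, List.mem_cons, List.not_mem_nil, or_false] at hy
    · rcases hy with rfl | rfl | rfl | rfl | rfl <;> simp_all
    · rcases hy with rfl | rfl | rfl | rfl | rfl | rfl | rfl <;> simp_all
  rcases h4 with h1 | h1
  · exact ⟨⟨7, by simp, by rw [e7, h1], fun _ => by rw [hcl]; rfl⟩,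
      Or.inl ⟨7, by simp, by rw [e7, h1], fun _ => by rw [hcl]; rfl⟩⟩
  · exact ⟨⟨8, by simp, by rw [e8, h1], fun _ => by rw [hcl]; rfl⟩,
      Or.inr ⟨7, by simp, by rw [e7, h1]; ring, fun _ => by rw [hneg, hcl]; rfl⟩⟩

/-- The first `k` elements have order three modulo `-1`, the other ones order two. -/
def Nf (k : ℕ) (x : Fin 4 → SL (ZMod p)) : Prop :=
  ∀ i : Fin 4, (mat (x i)).trace = if (i : ℕ) < k then 1 else 0

theorem Nf.lt {k : ℕ} {x : Fin 4 → SL (ZMod p)} (h : Nf k x) {i : Fin 4} (hi : (i : ℕ) < k) :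
    (mat (x i)).trace = 1 := by rw [h i, if_pos hi]
theorem Nf.ge {k : ℕ} {x : Fin 4 → SL (ZMod p)} (h : Nf k x) {i : Fin 4} (hi : k ≤ (i : ℕ)) :
    (mat (x i)).trace = 0 := by rw [h i, if_neg (by omega)]

/-- The pairing of the vectors attached to two elements. -/
def pr (k : ℕ) (x : Fin 4 → SL (ZMod p)) (i j : Fin 4) : ZMod p :=
  D (vec k i (x i)) (vec k j (x j))

namespace Quad
variable {x : Fin 4 → SL (ZMod p)} {H : Fin 4 → Subgroup (SL (ZMod p))}

theorem congr (Q : Quad x H) {x' : Fin 4 → SL (ZMod p)}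
    (h : ∀ i, ∀ K : Subgroup (SL (ZMod p)), -1 ∈ K → (x i ∈ K ↔ x' i ∈ K)) : Quad x' H where
  neg := Q.neg
  mem i j hij := (h j _ (Q.neg i)).1 (Q.mem i j hij)
  nmem i hi := Q.nmem i ((h i _ (Q.neg i)).2 hi)
  top i K hK hx := Q.top i K hK ((h i K (hK (Q.neg i))).2 hx)
  gen := Q.gen

theorem perm (Q : Quad x H) (σ : Equiv.Perm (Fin 4)) :
    Quad (fun i => x (σ i)) (fun i => H (σ i)) where
  neg i := Q.neg _
  mem i j hij := Q.mem _ _ (σ.injective.ne hij)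
  nmem i := Q.nmem _
  top i := Q.top _
  gen i j hij K h := Q.gen _ _ (σ.injective.ne hij) K fun b hb => by
    rintro ⟨l, h1, h2, h3⟩
    refine h b hb ⟨σ.symm l, ?_, ?_, by simpa using h3⟩
    · rintro rfl; simp at h1
    · rintro rfl; simp at h2

theorem cod (Q : Quad x H) {k : ℕ} (hN : Nf k x) {i j : Fin 4} (hij : i < j) :
    Cod C (codes k i j) k (pr k x i j) ∧
      (Cod C (codesP k i j) k (pr k x i j) ∨ Cod C (codesP k i j) k (-pr k x i j)) := by
  obtain ⟨e0, -, -, -, -, -, -, -, -, e9, e10⟩ := e_vals C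
  have hij' : (i : ℕ) < j := hij
  unfold pr
  by_cases hj : (j : ℕ) < k
  · have hi : (i : ℕ) < k := by omega
    have hk : k ≠ 0 := by omega
    rw [codes33 hj, codesP33 hj, vec_lt hi, vec_lt hj]
    have hc : codes 2 0 1 = [9, 10] := rfl
    rw [hc]
    rcases Q.pair33 C hij.ne (hN.lt hi) (hN.lt hj) with h | h <;> rw [h]
    · exact ⟨⟨9, by simp, e9.symm, fun h => absurd h hk⟩,
        Or.inl ⟨9, by simp, e9.symm, fun h => absurd h hk⟩⟩
    · exact ⟨⟨10, by simp, e10.symm, fun h => absurd h hk⟩,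
        Or.inr ⟨9, by simp, by rw [neg_neg, e9], fun h => absurd h hk⟩⟩
  · rw [not_lt] at hj
    by_cases hi : (i : ℕ) < k
    · have hk : k ≠ 0 := by omega
      rw [codes32 hi hj, codesP32 hi hj, vec_lt hi, vec_ge hj]
      have hc : codes 1 0 1 = [0, 9, 10] := rfl
      rw [hc]
      rcases Q.pair32 C hij.ne (hN.lt hi) (hN.ge hj) with h | h | h <;> rw [h]
      · exact ⟨⟨0, by simp, e0.symm, fun h => absurd h hk⟩,
          Or.inl ⟨0, by simp, e0.symm, fun h => absurd h hk⟩⟩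
      · exact ⟨⟨9, by simp, e9.symm, fun h => absurd h hk⟩,
          Or.inl ⟨9, by simp, e9.symm, fun h => absurd h hk⟩⟩
      · exact ⟨⟨10, by simp, e10.symm, fun h => absurd h hk⟩,
          Or.inr ⟨9, by simp, by rw [neg_neg, e9], fun h => absurd h hk⟩⟩
    · rw [not_lt] at hi
      rw [codes22 hi hij', codesP22 hi hij', vec_ge hi, vec_ge hj]
      exact cod22 C (Q.pair22 C hij.ne (hN.ge hi) (hN.ge hj)) k

theorem triQ (h41 : 41 ≤ p) (Q : Quad x H) {k : ℕ} (hN : Nf k x) {i j l : Fin 4} (hij : i < j)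
    (hjl : j < l) {a b c : ℕ} (ha : a ∈ codes k i j) (hb : b ∈ codes k i l) (hc : c ∈ codes k j l)
    (ea : pr k x i j = e C (val a)) (eb : pr k x i l = e C (val b))
    (ec : pr k x j l = e C (val c)) : tri k i j l a b c = true := by
  have hij' : (i : ℕ) < j := hij
  have hjl' : (j : ℕ) < l := hjl
  have hil := hij.trans hjl
  unfold pr at ea eb ec
  unfold tri
  by_cases hl : (l : ℕ) < k
  · rw [blt_iff.2 hl]; rfl
  have h1 : Nat.blt l k = false := by rw [Bool.eq_false_iff, Ne, blt_iff]; exact hl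
  rw [not_lt] at hl
  rw [h1, cond_false]
  by_cases hj : (j : ℕ) < k
  · have hi : (i : ℕ) < k := by omega
    rw [codes33 hj] at ha
    rw [codes32 hi hl] at hb
    rw [codes32 hj hl] at hc
    rw [vec_lt hi] at ea eb
    rw [vec_lt hj] at ea ec
    rw [vec_ge hl] at eb ec
    rw [blt_iff.2 hj, cond_true]
    exact bit332 C h41 ha hb hc
      (Q.trip332 C hij.ne hil.ne hjl.ne (hN.lt hi) (hN.lt hj) (hN.ge hl) ea eb ec)
  have h2 : Nat.blt j k = false := by rw [Bool.eq_false_iff, Ne, blt_iff]; exact hj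
  rw [not_lt] at hj
  rw [h2, cond_false]
  by_cases hi : (i : ℕ) < k
  · rw [codes32 hi hj] at ha
    rw [codes32 hi hl] at hb
    rw [codes22 hj hjl'] at hc
    rw [vec_lt hi] at ea eb
    rw [vec_ge hj] at ea ec
    rw [vec_ge hl] at eb ec
    rw [blt_iff.2 hi, cond_true]
    exact bit322 C h41 ha hb hc
      (Q.trip322 C hij.ne hil.ne hjl.ne (hN.lt hi) (hN.ge hj) (hN.ge hl) ea eb ec)
  have h3 : Nat.blt i k = false := by rw [Bool.eq_false_iff, Ne, blt_iff]; exact hi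
  rw [not_lt] at hi
  rw [h3, cond_false]
  rw [codes22 hi hij'] at ha
  rw [codes22 hi hil] at hb
  rw [codes22 hj hjl'] at hc
  rw [vec_ge hi] at ea eb
  rw [vec_ge hj] at ea ec
  rw [vec_ge hl] at eb ec
  exact bit222 C h41 ha hb hc
    (Q.trip222 C hij.ne hil.ne hjl.ne (hN.ge hi) (hN.ge hj) (hN.ge hl) ea eb ec)

theorem codesP_sub {k i j c : ℕ} (h : c ∈ codesP k i j) : c ∈ codes k i j := by
  unfold codesP at h
  unfold codes
  revert h
  have H : ∀ (l m : List ℕ), (l.all fun c => m.contains c) = true → c ∈ l → c ∈ m := by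
    intro l m h hc
    rw [List.all_eq_true] at h
    simpa using h c hc
  cases j.blt k <;> cases i.blt k <;> exact H _ _ rfl

theorem pr_comm (k : ℕ) (x : Fin 4 → SL (ZMod p)) (i j : Fin 4) : pr k x i j = pr k x j i :=
  D_comm _ _

theorem pr_self {k : ℕ} (hN : Nf k x) (i : Fin 4) : pr k x i i = e C (dg k i) :=
  e_dg C (hN i)

include C in
/-- The codes of the six inner products form a configuration covered by `check k`. The hypotheses `hmax`
and `hpos` are the normalisation, by permutations and signs, that is built into the search. -/
theorem no_nf (h41 : 41 ≤ p) (Q : Quad x H) {k : ℕ} (hk : k < 4) (hN : Nf k x)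
    (hmax : k = 0 → ∀ i j, i ≠ j → clF C (pr k x i j) ≤ clF C (pr k x 0 1))
    (hpos : ∀ j : Fin 4, 0 < j → Cod C (codesP k 0 j) k (pr k x 0 j)) : False := by
  obtain ⟨a, ha, ea, ca⟩ := hpos 1 (by decide)
  obtain ⟨b, hb, eb, cb⟩ := hpos 2 (by decide)
  obtain ⟨c, hc, ec, cc⟩ := hpos 3 (by decide)
  obtain ⟨u, hu, eu, cu⟩ := (Q.cod C hN (show (1 : Fin 4) < 2 by decide)).1
  obtain ⟨y, hy, ey, cy⟩ := (Q.cod C hN (show (1 : Fin 4) < 3 by decide)).1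
  obtain ⟨z, hz, ez, cz⟩ := (Q.cod C hN (show (2 : Fin 4) < 3 by decide)).1
  have hck : check k = true := by
    interval_cases k
    · exact check0
    · exact check1
    · exact check2
    · exact check3
  have hle : ∀ {w : ℕ} {i j : Fin 4}, i ≠ j → (k = 0 → cls w = clF C (pr k x i j)) →
      le k a w = true := by
    intro w i j hij hw
    unfold le
    rcases Nat.eq_zero_or_pos k with h0 | h0
    · rw [h0]
      have := hmax h0 i j hij
      rw [← hw h0, ← ca h0] at this
      exact Nat.ble_eq_true_of_le this
    · rw [blt_iff.2 h0]; rfl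
  have t0 : ∀ i : Fin 4, (vec k i (x i)).trace = 0 := fun i => vec_tr (hN i)
  have hdet := gd4_eq (t0 0) (t0 1) (t0 2) (t0 3)
  have hdep := check_sound C h41 hck ha hb hu hc hy hz
    (by
      simp only [List.mem_cons, List.not_mem_nil, or_false, forall_eq_or_imp, forall_eq]
      exact ⟨hle (by decide) cb, hle (by decide) cu, hle (by decide) cc, hle (by decide) cy,
        hle (by decide) cz⟩)
    (Q.triQ C h41 hN (i := 0) (j := 1) (l := 2) (by decide) (by decide) (codesP_sub ha)
      (codesP_sub hb) hu ea eb eu)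
    (Q.triQ C h41 hN (i := 0) (j := 1) (l := 3) (by decide) (by decide) (codesP_sub ha)
      (codesP_sub hc) hy ea ec ey)
    (Q.triQ C h41 hN (i := 0) (j := 2) (l := 3) (by decide) (by decide) (codesP_sub hb)
      (codesP_sub hc) hz eb ec ez)
    (Q.triQ C h41 hN (i := 1) (j := 2) (l := 3) (by decide) (by decide) hu hy hz eu ey ez)
    (by
      rw [← ea, ← eb, ← ec, ← eu, ← ey, ← ez]
      have s0 := pr_self C hN 0
      have s1 := pr_self C hN 1
      have s2 := pr_self C hN 2
      have s3 := pr_self C hN 3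
      simp only [Fin.val_zero, Fin.val_one, Fin.val_two, show ((3 : Fin 4) : ℕ) = 3 from rfl]
        at s0 s1 s2 s3
      rw [← s0, ← s1, ← s2, ← s3]
      exact hdet)
  let x' : ℕ → SL (ZMod p) := fun n => if h : n < 4 then x ⟨n, h⟩ else 1
  have hx' : ∀ i : Fin 4, x' i = x i := fun i => by simp [x']
  have hG : ∀ i j : Fin 4, pr k x i j = e C (((gram k a b u c y z).row i).get j) := by
    intro i j
    fin_cases i <;> fin_cases j
    · exact pr_self C hN 0
    · exact ea
    · exact eb
    · exact ec
    · exact (pr_comm k x _ _).trans ea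
    · exact pr_self C hN 1
    · exact eu
    · exact ey
    · exact (pr_comm k x _ _).trans eb
    · exact (pr_comm k x _ _).trans eu
    · exact pr_self C hN 2
    · exact ez
    · exact (pr_comm k x _ _).trans ec
    · exact (pr_comm k x _ _).trans ey
    · exact (pr_comm k x _ _).trans ez
    · exact pr_self C hN 3
  obtain ⟨t, ht, hmem⟩ := dep_sound C (x := x') h41 hk
    (fun i hi => by rw [hx' ⟨i, hi⟩]; exact hN ⟨i, hi⟩)
    (fun i hi j hj => by
      have := hG ⟨i, hi⟩ ⟨j, hj⟩
      unfold pr at this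
      rwa [← hx', ← hx'] at this) hdep
  have hO : Oth x' t ≤ H ⟨t, ht⟩ := by
    unfold Oth
    rw [Subgroup.closure_le, Set.insert_subset_iff]
    refine ⟨Q.neg _, ?_⟩
    rintro _ ⟨i, ⟨hi, hit⟩, rfl⟩
    rw [hx' ⟨i, hi⟩]
    exact Q.mem _ _ (by rintro h; exact hit (by simpa using congrArg Fin.val h.symm))
  rw [hx' ⟨t, ht⟩] at hmem
  exact Q.nmem _ (hO hmem)

end Quad
end NoQuad

/-! ### Nonexistence of irredundant quadruples -/

section K4
variable {F : Type*} [Field F] [NeZero (2 : F)]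

theorem eq_of_WW {m n y v : SL F} (hm : (mat m).trace = 1) (hn : (mat n).trace = 1)
    (hy : (mat y).trace = 1) (hv : (mat v).trace = 1) (h1 : D (W m) (W n) = 2)
    (h2 : D (W y) (W m) = D (W v) (W m)) (h3 : D (W y) (W n) = D (W v) (W n))
    (h4 : D (W y) (W v) = 6) : y = v := by
  have h2F : (2 : F) ≠ 0 := two_ne_zero
  have h0 : W y - W v = 0 := by
    refine null_perp (W_tr hm) (W_tr hn) (by rw [trace_sub, W_tr hy, W_tr hv, sub_zero]) ?_ ?_ ?_ ?_
    · rw [D_sub, D_sub', D_sub', D_comm (W v) (W y), h4, D_W hy, D_W hv]; ring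
    · rw [D_sub, h2, sub_self]
    · rw [D_sub, h3, sub_self]
    · rw [D_W hm, D_W hn, h1]
      have : (6 * 6 - 2 ^ 2 : F) = 2 ^ 5 := by norm_num
      rw [this]; exact pow_ne_zero _ h2F
  rw [W, W, sub_sub_sub_cancel_right, ← smul_sub, smul_eq_zero] at h0
  exact mat_inj (sub_eq_zero.1 (h0.resolve_left h2F))

/-- A third element of order three whose axis has inner products `2` and `-2` with those of `m` and `n`
is one of the two conjugates of `n` by `m` and its inverse. -/
theorem r5 {K : Subgroup (SL F)} {m n y : SL F} (hmK : m ∈ K) (hnK : n ∈ K)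
    (hm : (mat m).trace = 1) (hn : (mat n).trace = 1) (hy : (mat y).trace = 1)
    (h1 : D (W m) (W n) = 2) (h2 : D (W m) (W y) = 2) (h3 : D (W n) (W y) = -2) : y ∈ K := by
  have h2F : (2 : F) ≠ 0 := two_ne_zero
  have h4F : (4 : F) ≠ 0 := by
    have : (4 : F) = 2 * 2 := by norm_num
    rw [this]; exact mul_ne_zero h2F h2F
  have tmn : (mat (m * n)).trace = 0 := by
    rw [D_WW hm hn] at h1
    exact (mul_eq_zero.1 (show 4 * (mat (m * n)).trace = 0 by linear_combination -h1)).resolve_left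
      h4F
  have tym : (mat y * mat m).trace = 0 := by
    rw [D_comm, D_WW hy hm, mat_mul] at h2
    exact (mul_eq_zero.1 (show 4 * (mat y * mat m).trace = 0 by linear_combination -h2)).resolve_left
      h4F
  have tyn : (mat y * mat n).trace = 1 := by
    rw [D_comm, D_WW hy hn, mat_mul] at h3
    have := (mul_eq_zero.1 (show 4 * ((mat y * mat n).trace - 1) = 0 by
      linear_combination -h3)).resolve_left h4F
    linear_combination this
  have im : mat m⁻¹ = 1 - mat m := by rw [mat_inv, hm, one_smul]
  have inn : mat n⁻¹ = 1 - mat n := by rw [mat_inv, hn, one_smul]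
  have emnm : mat m * mat n * mat m = mat n - 1 := by
    rw [← mat_mul, ← mat_mul, aba, tmn, inn, zero_smul]; abel
  have tnm : (mat (n * m)).trace = 0 := by
    rw [mat_mul, trace_mul_comm, ← mat_mul, tmn]
  have enmn : mat n * mat m * mat n = mat m - 1 := by
    rw [← mat_mul, ← mat_mul, aba, tnm, im, zero_smul]; abel
  have msq : mat m * mat m = mat m - 1 := by
    have := cayley (mat m)
    rwa [hm, mat_det, one_smul, one_smul] at this
  have nsq : mat n * mat n = mat n - 1 := by
    have := cayley (mat n)
    rwa [hn, mat_det, one_smul, one_smul] at this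
  have esum : mat m * mat n + mat n * mat m = mat m + mat n - 1 := by
    have := cayley (mat m + mat n)
    have hd : (mat m + mat n).det = 2 + (1 - (mat (m * n)).trace) := by
      have d1 := mat_det m
      have d2 := mat_det n
      rw [mat_mul]
      rw [trace_fin_two] at hm hn
      rw [det_fin_two] at d1 d2 ⊢
      simp only [trace_fin_two, Matrix.add_apply, mul_apply, Fin.sum_univ_two]
      linear_combination d1 + d2 + hm * (mat n 0 0 + mat n 1 1) + hn
    rw [hd, tmn, trace_add, hm, hn, add_mul, mul_add, mul_add, msq, nsq] at this
    have e3 : (2 + (1 - 0) : F) • (1 : Mat F) = (3 : F) • 1 := by norm_num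
    have e2 : (1 + 1 : F) • (mat m + mat n) = (mat m + mat n) + (mat m + mat n) := by
      rw [add_smul, one_smul]
    have e33 : (3 : F) • (1 : Mat F) = 1 + 1 + 1 := by
      rw [show (3 : F) = 1 + 1 + 1 by norm_num, add_smul, add_smul, one_smul]
    rw [e3, e2, e33] at this
    rw [← sub_eq_zero] at this ⊢
    rw [← this]; abel
  set v := m * n * m⁻¹ with hv
  set v' := m⁻¹ * n * m with hv'
  have ev : mat v = mat m * mat n - mat m * mat n * mat m := by
    rw [hv, mat_mul, mat_mul, im, mul_sub, mul_one]
  have ev' : mat v' = mat n * mat m - mat m * mat n * mat m := by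
    rw [hv', mat_mul, mat_mul, im, sub_mul, sub_mul, one_mul]
  rw [emnm] at ev ev'
  rw [mat_mul] at tmn tnm
  have tv : (mat v).trace = 1 := by
    rw [ev, trace_sub, trace_sub, tmn, hn, trace_one]; simp; norm_num
  have tv' : (mat v').trace = 1 := by
    rw [ev', trace_sub, trace_sub, tnm, hn, trace_one]; simp; norm_num
  have tmv : (mat (v * m)).trace = 0 := by
    rw [hv, inv_mul_cancel_right, mat_mul, tmn]
  have tmv' : (mat (m * v')).trace = 0 := by
    rw [hv', ← mul_assoc, ← mul_assoc, mul_inv_cancel, one_mul, mat_mul, tnm]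
  have tnv : (mat (n * v)).trace = 1 := by
    rw [mat_mul, ev, mul_sub, ← mul_assoc, enmn, mul_sub, nsq, mul_one]
    simp [hm]
  have tnv' : (mat (v' * n)).trace = 1 := by
    rw [mat_mul, ev', sub_mul, enmn, sub_mul, nsq, one_mul]
    simp [hm]
  have dmv : D (W v) (W m) = 2 := by rw [D_WW tv hm, tmv]; ring
  have dmv' : D (W v') (W m) = 2 := by rw [D_comm, D_WW hm tv', tmv']; ring
  have dnv : D (W v) (W n) = -2 := by rw [D_comm, D_WW hn tv, tnv]; ring
  have dnv' : D (W v') (W n) = -2 := by rw [D_WW tv' hn, tnv']; ring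
  have hsum : D (W y) (W v) + D (W y) (W v') = 4 := by
    rw [D_WW hy tv, D_WW hy tv', mat_mul y v, mat_mul y v']
    have : (mat y * mat v).trace + (mat y * mat v').trace = 0 := by
      rw [← trace_add, ← mul_add]
      have : mat v + mat v' = mat m - mat n + 1 := by
        rw [ev, ev']
        rw [← sub_eq_zero] at esum ⊢
        rw [← esum]; abel
      rw [this, mul_add, mul_sub, trace_add, trace_sub, tym, tyn, mul_one, hy]; ring
    linear_combination -4 * this
  have hg := gd4_eq (W_tr hm) (W_tr hn) (W_tr hy) (W_tr tv)
  rw [D_W hm, D_W hn, D_W hy, D_W tv, h1, h2, h3, D_comm (W m) (W v), D_comm (W n) (W v), dmv, dnv]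
    at hg
  have hq : (D (W y) (W v) - 6) * (D (W y) (W v) + 2) = 0 := by
    have : (2 : F) ^ 5 * ((D (W y) (W v) - 6) * (D (W y) (W v) + 2)) = 0 := by
      simp only [gd4, gd3] at hg
      linear_combination -hg
    exact (mul_eq_zero.1 this).resolve_left (pow_ne_zero _ h2F)
  rw [D_comm] at h2 h3
  rcases mul_eq_zero.1 hq with h | h
  · rw [eq_of_WW hm hn hy tv h1 (h2.trans dmv.symm) (h3.trans dnv.symm) (by linear_combination h)]
    exact K.mul_mem (K.mul_mem hmK hnK) (K.inv_mem hmK)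
  · rw [eq_of_WW hm hn hy tv' h1 (h2.trans dmv'.symm) (h3.trans dnv'.symm)
      (by linear_combination hsum - h)]
    exact K.mul_mem (K.mul_mem (K.inv_mem hmK) hnK) hmK

end K4

section NoQuad
variable {p : ℕ} [hp : Fact p.Prime] [NeZero (2 : ZMod p)] (C : Consts (ZMod p))
namespace Quad
variable {x : Fin 4 → SL (ZMod p)} {H : Fin 4 → Subgroup (SL (ZMod p))}

theorem flip (Q : Quad x H) {k : ℕ} (hN : Nf k x) :
    ∃ (x' : Fin 4 → SL (ZMod p)) (s : Fin 4 → ZMod p), (∀ i, s i = 1 ∨ s i = -1) ∧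
      Nf k x' ∧ Quad x' H ∧ (∀ i j, pr k x' i j = s i * s j * pr k x i j) ∧
      ∀ j : Fin 4, 0 < j → Cod C (codesP k 0 j) k (pr k x' 0 j) := by
  have key : ∀ j : Fin 4, ∃ (y : SL (ZMod p)) (s : ZMod p), (s = 1 ∨ s = -1) ∧ (j = 0 → s = 1) ∧
      vec k j y = s • vec k j (x j) ∧ (mat y).trace = (mat (x j)).trace ∧
      (∀ K : Subgroup (SL (ZMod p)), -1 ∈ K → (x j ∈ K ↔ y ∈ K)) ∧
      (0 < j → Cod C (codesP k 0 j) k (s * pr k x 0 j)) := by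
    intro j
    by_cases h : j = 0 ∨ Cod C (codesP k 0 j) k (pr k x 0 j)
    · refine ⟨x j, 1, Or.inl rfl, fun _ => rfl, by rw [one_smul], rfl, fun _ _ => Iff.rfl, ?_⟩
      intro h0
      rw [one_mul]
      exact h.resolve_left h0.ne'
    · rw [not_or] at h
      have hj0 : 0 < j := Fin.pos_of_ne_zero h.1
      have hC : Cod C (codesP k 0 j) k (-1 * pr k x 0 j) := by
        rw [neg_one_mul]
        exact (Q.cod C hN hj0).2.resolve_left h.2
      by_cases hj : (j : ℕ) < k
      · refine ⟨(x j)⁻¹, -1, Or.inr rfl, fun h0 => absurd h0 h.1, ?_, tr_inv _,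
          fun _ _ => inv_mem_iff.symm, fun _ => hC⟩
        rw [vec_lt hj, vec_lt hj, W_inv (hN.lt hj), neg_one_smul]
      · rw [not_lt] at hj
        refine ⟨-x j, -1, Or.inr rfl, fun h0 => absurd h0 h.1, ?_, ?_, ?_, fun _ => hC⟩
        · rw [vec_ge hj, vec_ge hj, mat_neg, neg_one_smul]
        · rw [mat_neg, trace_neg, hN.ge hj, neg_zero]
        · intro K hK
          rw [← neg_one_mul (x j)]
          exact (K.mul_mem_cancel_left hK).symm
  choose x' s hs hs0 hv ht hK hC using key
  have hpr : ∀ i j, pr k x' i j = s i * s j * pr k x i j := by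
    intro i j
    unfold pr
    rw [hv, hv, D_smul, D_smul', mul_assoc]
  refine ⟨x', s, hs, fun i => (ht i).trans (hN i), Q.congr hK, hpr, fun j hj => ?_⟩
  rw [hpr, hs0 0 rfl, one_mul]
  exact hC j hj

include C in
/-- Four elements of order three: up to signs all inner products of their axes equal `2`, so the Gram
determinant is `2 ^ 8 * 3`. -/
theorem no_four (Q : Quad x H) (hN : Nf 4 x) : False := by
  obtain ⟨x', s, -, hN', Q', -, hC⟩ := Q.flip C hN
  have t1 : ∀ i, (mat (x' i)).trace = 1 := fun i => hN'.lt i.2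
  have hv : ∀ i : Fin 4, vec 4 i (x' i) = W (x' i) := fun i => vec_lt i.2 _
  obtain ⟨-, -, -, -, -, -, -, -, -, e9, -⟩ := e_vals C
  have h0 : ∀ j : Fin 4, 0 < j → D (W (x' 0)) (W (x' j)) = 2 := by
    intro j hj
    obtain ⟨c, hc, e, -⟩ := hC j hj
    rw [codesP33 j.2, List.mem_singleton] at hc
    rw [pr, hv, hv, hc, e9] at e
    exact e
  have h1 : ∀ j l : Fin 4, 0 < j → 0 < l → j ≠ l → D (W (x' j)) (W (x' l)) = 2 := by
    intro j l hj hl hjl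
    refine (Q'.pair33 C hjl (t1 j) (t1 l)).resolve_right fun h => ?_
    exact Q'.nmem l (r5 (Q'.mem l 0 hl.ne') (Q'.mem l j hjl.symm) (t1 0) (t1 j) (t1 l) (h0 j hj)
      (h0 l hl) h)
  have hg := gd4_eq (W_tr (t1 0)) (W_tr (t1 1)) (W_tr (t1 2)) (W_tr (t1 3))
  rw [D_W (t1 0), D_W (t1 1), D_W (t1 2), D_W (t1 3), h0 1 (by decide), h0 2 (by decide),
    h0 3 (by decide), h1 1 2 (by decide) (by decide) (by decide),
    h1 1 3 (by decide) (by decide) (by decide), h1 2 3 (by decide) (by decide) (by decide)] at hg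
  simp only [gd4, gd3] at hg
  have : (2 : ZMod p) ^ 8 * 3 = 0 := by linear_combination hg
  exact mul_ne_zero (pow_ne_zero _ C.h2) C.h3 this

include C in
theorem no_nf' (h41 : 41 ≤ p) (Q : Quad x H) {k : ℕ} (hk : k ≤ 4) (hN : Nf k x)
    (hmax : k = 0 → ∀ i j, i ≠ j → clF C (pr k x i j) ≤ clF C (pr k x 0 1)) : False := by
  rcases hk.lt_or_eq with hk | rfl
  · obtain ⟨x', s, hs, hN', Q', hpr, hC⟩ := Q.flip C hN
    refine Q'.no_nf C h41 hk hN' ?_ hC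
    have hcl : ∀ i j, clF C (pr k x' i j) = clF C (pr k x i j) := by
      intro i j
      rw [hpr]
      rcases hs i with h | h <;> rcases hs j with h' | h' <;> rw [h, h'] <;> simp [clF_neg]
    intro h i j hij
    rw [hcl, hcl]
    exact hmax h i j hij
  · exact Q.no_four C hN

theorem exists_perm (P : Fin 4 → Bool) :
    ∃ (σ : Equiv.Perm (Fin 4)) (k : Fin 5), ∀ i, P (σ i) = decide (i.val < k.val) := by
  revert P; decide +revert

theorem exists_perm2 (a b : Fin 4) (h : a ≠ b) : ∃ σ : Equiv.Perm (Fin 4), σ 0 = a ∧ σ 1 = b := by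
  revert a b; decide

include C in
/-- After changes of sign and a permutation the quadruple satisfies the normalisation of `no_nf`. -/
theorem no_quad (h41 : 41 ≤ p) (Q : Quad x H) : False := by
  -- change signs so that all traces are `0` or `1`
  obtain ⟨x, ht, Q⟩ : ∃ x' : Fin 4 → SL (ZMod p),
      (∀ i, (mat (x' i)).trace = 0 ∨ (mat (x' i)).trace = 1) ∧ Quad x' H := by
    have key : ∀ j, ∃ y : SL (ZMod p), ((mat y).trace = 0 ∨ (mat y).trace = 1) ∧
        (∀ K : Subgroup (SL (ZMod p)), -1 ∈ K → (x j ∈ K ↔ y ∈ K)) := by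
      intro j
      rcases Q.order' C j with h | h
      · exact ⟨x j, Or.inl h, fun _ _ => Iff.rfl⟩
      rcases sq_one_cases h with h | h
      · exact ⟨x j, Or.inr h, fun _ _ => Iff.rfl⟩
      · refine ⟨-x j, Or.inr (by rw [mat_neg, trace_neg, h, neg_neg]), fun K hK => ?_⟩
        rw [← neg_one_mul (x j)]
        exact (K.mul_mem_cancel_left hK).symm
    choose x' h1 h2 using key
    exact ⟨x', h1, Q.congr h2⟩
  classical
  obtain ⟨σ, k, hσ⟩ := exists_perm (fun i => decide ((mat (x i)).trace = 1))
  have hN : Nf k (fun i => x (σ i)) := by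
    intro i
    have := hσ i
    rw [decide_eq_decide] at this
    split_ifs with h
    · exact this.2 h
    · exact (ht _).resolve_right (mt this.1 h)
  have Q' := Q.perm σ
  rcases eq_or_ne (k : ℕ) 0 with h0 | h0
  · rw [h0] at hN
    obtain ⟨⟨a, b⟩, hab, hm⟩ := Finset.exists_max_image
      (Finset.univ.filter fun q : Fin 4 × Fin 4 => q.1 ≠ q.2)
      (fun q => clF C (pr 0 (fun i => x (σ i)) q.1 q.2)) ⟨(0, 1), by decide⟩
    obtain ⟨τ, h1, h2⟩ := exists_perm2 a b (by simpa using hab)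
    have hp0 : ∀ (z : Fin 4 → SL (ZMod p)) (i j : Fin 4),
        pr 0 z i j = D (mat (z i)) (mat (z j)) := fun z i j => by
      rw [pr, vec_ge (Nat.zero_le _), vec_ge (Nat.zero_le _)]
    refine (Q'.perm τ).no_nf' C h41 (k := 0) (by decide) ?_ ?_
    · intro i
      rw [if_neg (by omega)]
      exact hN.ge (i := τ i) (Nat.zero_le _)
    · intro _ i j hij
      have := hm (τ i, τ j) (by simpa using hij)
      simp only [hp0] at this ⊢
      rw [h1, h2]
      exact this
  · exact Q'.no_nf' C h41 (by omega) hN fun h => absurd h h0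

end Quad
end NoQuad

/-! ### Generation, and the value of `m` -/

section Abstract
variable {G : Type*} [Group G]

/-- `g` is conjugate to an element of `K`. -/
def CI (K : Subgroup G) (g : G) : Prop := ∃ c, c⁻¹ * g * c ∈ K

theorem CI.of_mem {K : Subgroup G} {g : G} (h : g ∈ K) : CI K g := ⟨1, by simpa using h⟩

theorem CI.conj {K : Subgroup G} {g : G} (h : CI K g) (a : G) : CI K (a * g * a⁻¹) := by
  obtain ⟨c, hc⟩ := h
  refine ⟨a * c, ?_⟩
  have : (a * c)⁻¹ * (a * g * a⁻¹) * (a * c) = c⁻¹ * g * c := by group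
  rwa [this]

theorem closure_iff {S : Set G} :
    Subgroup.closure S = ⊤ ↔ ∀ K : Subgroup G, K ≠ ⊤ → ∃ s ∈ S, s ∉ K := by
  constructor
  · intro h K hK
    by_contra! hc
    exact hK (top_le_iff.1 (h ▸ (Subgroup.closure_le K).2 hc))
  · intro h
    by_contra hc
    obtain ⟨s, hs, hn⟩ := h _ hc
    exact hn (Subgroup.subset_closure hs)

theorem invGen_iff {S : Set G} :
    InvGen S ↔ ∀ K : Subgroup G, K ≠ ⊤ → ∃ s ∈ S, ¬ CI K s := by
  constructor
  · intro h K hK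
    by_contra! hc
    choose! σ hσ using hc
    refine hK (top_le_iff.1 (h σ ▸ (Subgroup.closure_le K).2 ?_))
    rintro _ ⟨g, hg, rfl⟩
    exact hσ g hg
  · intro h σ
    by_contra hc
    obtain ⟨s, hs, hn⟩ := h _ hc
    exact hn ⟨σ s, Subgroup.subset_closure ⟨s, hs, rfl⟩⟩

theorem exists_four {S : Set G} (h : 3 < S.ncard) :
    ∃ s : Fin 4 → G, Function.Injective s ∧ ∀ i, s i ∈ S := by
  obtain ⟨t, ht, hc⟩ := Set.exists_subset_card_eq (Nat.succ_le_of_lt h)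
  have hf : Finite t := Set.finite_of_ncard_pos (by omega)
  have e := Finite.equivFinOfCardEq (α := t) (n := 4) hc
  exact ⟨fun i => (e.symm i : G), fun i j hij => e.symm.injective (Subtype.ext hij),
    fun i => ht (e.symm i).2⟩

theorem sdiff_ssubset {S : Set G} {s : G} (h : s ∈ S) : S \ {s} ⊂ S :=
  ⟨Set.sdiff_subset, fun hc => (hc h).2 rfl⟩

theorem sub_of_ssubset {S T : Set G} (h : T ⊂ S) : ∃ s ∈ S, T ⊆ S \ {s} := by
  obtain ⟨s, hs, hn⟩ := Set.exists_of_ssubset h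
  exact ⟨s, hs, fun t ht => ⟨h.1 ht, fun e => hn (by rw [← Set.mem_singleton_iff.1 e]; exact ht)⟩⟩

/-- Proper subgroups `M i` containing all `s j` but `s i` witness minimality. -/
theorem minGen_of {n : ℕ} (s : Fin n → G) (M : Fin n → Subgroup G) (hM : ∀ i, M i ≠ ⊤)
    (hs : ∀ i j, i ≠ j → s j ∈ M i) (h : ∀ K : Subgroup G, (∀ i, s i ∈ K) → K = ⊤) :
    MinGen (Set.range s) ∧ (Set.range s).ncard = n := by
  have hn : ∀ i, s i ∉ M i := fun i hi => hM i (h _ fun j => by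
    rcases eq_or_ne i j with rfl | hij
    · exact hi
    · exact hs i j hij)
  have hinj : Function.Injective s := by
    intro i j hij
    by_contra hc
    exact hn i (hij ▸ hs i j hc)
  refine ⟨⟨?_, ?_⟩, ?_⟩
  · exact h _ fun i => Subgroup.subset_closure ⟨i, rfl⟩
  · intro T hT hc
    obtain ⟨_, ⟨i, rfl⟩, hi⟩ := sub_of_ssubset hT
    obtain ⟨g, hg, hgn⟩ := closure_iff.1 hc _ (hM i)
    obtain ⟨⟨j, rfl⟩, hj⟩ := hi hg
    exact hgn (hs i j fun e => hj (by rw [e]; rfl))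
  · rw [← Set.image_univ, Set.ncard_image_of_injective _ hinj, Set.ncard_univ, Nat.card_fin]

/-- Proper subgroups `M i` meeting the classes of all `s j` but `s i` witness minimality. -/
theorem minInvGen_of {n : ℕ} (s : Fin n → G) (M : Fin n → Subgroup G) (hM : ∀ i, M i ≠ ⊤)
    (hs : ∀ i j, i ≠ j → CI (M i) (s j)) (h : ∀ K : Subgroup G, (∀ i, CI K (s i)) → K = ⊤) :
    MinInvGen (Set.range s) ∧ (Set.range s).ncard = n := by
  have hn : ∀ i, ¬ CI (M i) (s i) := fun i hi => hM i (h _ fun j => by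
    rcases eq_or_ne i j with rfl | hij
    · exact hi
    · exact hs i j hij)
  have hinj : Function.Injective s := by
    intro i j hij
    by_contra hc
    exact hn i (hij ▸ hs i j hc)
  refine ⟨⟨?_, ?_⟩, ?_⟩
  · rw [invGen_iff]
    intro K hK
    by_contra! hc
    exact hK (h K fun i => hc _ ⟨i, rfl⟩)
  · intro T hT hc
    obtain ⟨_, ⟨i, rfl⟩, hi⟩ := sub_of_ssubset hT
    obtain ⟨g, hg, hgn⟩ := invGen_iff.1 hc _ (hM i)
    obtain ⟨⟨j, rfl⟩, hj⟩ := hi hg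
    exact hgn (hs i j fun e => hj (by rw [e]; rfl))
  · rw [← Set.image_univ, Set.ncard_image_of_injective _ hinj, Set.ncard_univ, Nat.card_fin]

end Abstract

section Quot
variable {F : Type*} [Field F]

theorem mem_center {a : SL F} : a ∈ Subgroup.center (SL F) ↔ a = 1 ∨ a = -1 := by
  rw [← scal_iff, Matrix.SpecialLinearGroup.mem_center_iff]
  constructor
  · rintro ⟨r, -, h⟩
    refine ⟨r, ?_⟩
    rw [mat, ← h]
    exact (smul_one_eq_diagonal r).symm
  · rintro ⟨r, h⟩
    refine ⟨r, ?_, ?_⟩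
    · have := mat_det a
      rwa [h, det_smul, det_one, mul_one] at this
    · rw [show a.1 = mat a from rfl, h]
      exact (smul_one_eq_diagonal r).symm

/-- The group `PSL₂`. -/
abbrev P (F : Type*) [Field F] := SL F ⧸ Subgroup.center (SL F)

/-- The projection from `SL₂` to `PSL₂`. -/
def pj (F : Type*) [Field F] : SL F →* P F := QuotientGroup.mk' _

theorem pj_surj : Function.Surjective (pj F) := QuotientGroup.mk'_surjective _

theorem pj_neg_one : pj F (-1) = 1 := by
  rw [pj, QuotientGroup.mk'_apply, QuotientGroup.eq_one_iff, mem_center]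
  exact Or.inr rfl

theorem neg_one_mem_comap (K : Subgroup (P F)) : -1 ∈ K.comap (pj F) := by
  rw [Subgroup.mem_comap, pj_neg_one]; exact K.one_mem

theorem comap_ne_top {K : Subgroup (P F)} (h : K ≠ ⊤) : K.comap (pj F) ≠ ⊤ := by
  intro hc
  apply h
  rw [← Subgroup.map_comap_eq_self_of_surjective pj_surj K, hc,
    Subgroup.map_top_of_surjective _ pj_surj]

theorem comap_map {H : Subgroup (SL F)} (h : -1 ∈ H) : (H.map (pj F)).comap (pj F) = H := by
  apply Subgroup.comap_map_eq_self
  intro a ha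
  rw [pj, QuotientGroup.ker_mk', mem_center] at ha
  rcases ha with rfl | rfl
  · exact H.one_mem
  · exact h

theorem map_ne_top {H : Subgroup (SL F)} (h : -1 ∈ H) (hH : H ≠ ⊤) : H.map (pj F) ≠ ⊤ := by
  intro hc
  apply hH
  rw [← comap_map h, hc, Subgroup.comap_top]

theorem eq_top_of_comap {K : Subgroup (P F)} (h : K.comap (pj F) = ⊤) : K = ⊤ := by
  by_contra hc
  exact comap_ne_top hc h

theorem CI_comap {K : Subgroup (P F)} {g : SL F} : CI (K.comap (pj F)) g ↔ CI K (pj F g) := by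
  constructor
  · rintro ⟨c, hc⟩
    exact ⟨pj F c, by simpa using hc⟩
  · rintro ⟨c, hc⟩
    obtain ⟨c, rfl⟩ := pj_surj c
    exact ⟨c, by simpa using hc⟩

theorem CI_map {H : Subgroup (SL F)} {g : SL F} (h : CI H g) : CI (H.map (pj F)) (pj F g) := by
  obtain ⟨c, hc⟩ := h
  exact ⟨pj F c, by simpa using Subgroup.mem_map_of_mem (pj F) hc⟩

end Quot

section MGen
variable {p : ℕ} [hp : Fact p.Prime] [NeZero (2 : ZMod p)] (C : Consts (ZMod p))

include C in
theorem minGen_le (h41 : 41 ≤ p) {S : Set (P (ZMod p))} (hS : MinGen S) : S.ncard ≤ 3 := by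
  by_contra hc
  obtain ⟨s, hinj, hsS⟩ := exists_four (not_le.1 hc)
  choose g hg using pj_surj (F := ZMod p)
  let H : Fin 4 → Subgroup (SL (ZMod p)) := fun i => Subgroup.closure (insert (-1) (g '' (S \ {s i})))
  have hneg : ∀ i, -1 ∈ H i := fun i => Subgroup.subset_closure (Set.mem_insert _ _)
  have hmem : ∀ i t, t ∈ S → t ≠ s i → g t ∈ H i := fun i t ht hne =>
    Subgroup.subset_closure (Set.mem_insert_of_mem _ ⟨t, ⟨ht, hne⟩, rfl⟩)
  refine Quad.no_quad C h41 (x := fun i => g (s i)) (H := H)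
    { neg := hneg
      mem := fun i j hij => hmem i _ (hsS j) (hinj.ne hij.symm)
      nmem := ?_
      top := ?_
      gen := ?_ }
  · intro i hi
    have hle : H i ≤ (Subgroup.closure (S \ {s i})).comap (pj _) := by
      rw [Subgroup.closure_le, Set.insert_subset_iff]
      refine ⟨neg_one_mem_comap _, ?_⟩
      rintro _ ⟨t, ht, rfl⟩
      rw [SetLike.mem_coe, Subgroup.mem_comap, hg]
      exact Subgroup.subset_closure ht
    have h1 := hle hi
    rw [Subgroup.mem_comap, hg] at h1
    refine hS.2 _ (sdiff_ssubset (hsS i)) (top_le_iff.1 (hS.1 ▸ (Subgroup.closure_le _).2 ?_))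
    intro t ht
    by_cases e : t = s i
    · rw [e]; exact h1
    · exact Subgroup.subset_closure ⟨ht, e⟩
  · intro i K hK hi
    have hneg' := hK (hneg i)
    by_contra hne
    obtain ⟨t, ht, hn⟩ := closure_iff.1 hS.1 _ (map_ne_top hneg' hne)
    apply hn
    rw [← hg t]
    apply Subgroup.mem_map_of_mem
    by_cases e : t = s i
    · rw [e]; exact hi
    · exact hK (hmem i t ht e)
  · intro i j hij K hK
    obtain ⟨k, l, hki, hkj, hli, hlj, hkl⟩ := fin4_two i j
    rw [Subgroup.closure_le, Set.insert_subset_iff]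
    refine ⟨hK _ (hneg i) ⟨k, hki, hkj, hneg k⟩, ?_⟩
    rintro _ ⟨t, ⟨ht, hti⟩, rfl⟩
    refine hK _ (hmem i t ht hti) ?_
    by_cases e : t = s k
    · exact ⟨l, hli, hlj, hmem l t ht (by rw [e]; exact hinj.ne hkl)⟩
    · exact ⟨k, hki, hkj, hmem k t ht e⟩

/-- Three involutions any two of which fix a common line. -/
theorem minGen_ge (i : ZMod p) (hi : i ^ 2 = -1) :
    ∃ S : Set (P (ZMod p)), MinGen S ∧ S.ncard = 3 := by
  let a : Fin 3 → SL (ZMod p) := ![mk !![i, 0; 0, -i] (by simp [det_fin_two]; linear_combination -hi),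
    mk !![i, i; 0, -i] (by simp [det_fin_two]; linear_combination -hi), mk !![0, 1; -1, 0] (by simp)]
  let X : Fin 3 → Mat (ZMod p) := ![!![1, -2; -2, -1], !![0, 1; 1, 0], !![0, 1; 0, 0]]
  have hX0 : ∀ j, X j ≠ 0 := by
    intro j h
    fin_cases j
    · simpa [X] using congrFun (congrFun h 0) 0
    · simpa [X] using congrFun (congrFun h 0) 1
    · simpa [X] using congrFun (congrFun h 0) 1
  have hXt : ∀ j, (X j).trace = 0 := by
    intro j; fin_cases j <;> simp [X, trace_fin_two]
  refine ⟨_, minGen_of (fun j => pj _ (a j)) (fun j => (Stab (X j)).map (pj _))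
    (fun j => map_ne_top (neg_one_mem_Stab _) (Stab_ne_top (hX0 j) (hXt j))) ?_ ?_⟩
  · intro j l hjl
    apply Subgroup.mem_map_of_mem
    rw [mem_Stab]
    refine ⟨-1, ?_⟩
    fin_cases j <;> fin_cases l <;> first | exact absurd rfl hjl | skip
    all_goals apply ext2 <;> simp [X, a, mat_mk]
    all_goals try ring
  · intro K hK
    apply eq_top_of_comap
    have h0 : a 0 ∈ K.comap (pj _) := hK 0
    have h1 : a 1 ∈ K.comap (pj _) := hK 1
    have h2 : a 2 ∈ K.comap (pj _) := hK 2
    have hn := neg_one_mem_comap K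
    have hu : mk !![(1 : ZMod p), 1; 0, 1] (by simp) ∈ K.comap (pj _) := by
      have e : mk !![(1 : ZMod p), 1; 0, 1] (by simp) = -1 * (a 0 * a 1) := by
        apply mat_inj
        rw [mat_mul, mat_mul, mat_neg, mat_one]
        apply ext2 <;> simp [a, mat_mk] <;> linear_combination hi
      rw [e]
      exact Subgroup.mul_mem _ hn (Subgroup.mul_mem _ h0 h1)
    have hl : mk !![(1 : ZMod p), 0; -1, 1] (by simp) ∈ K.comap (pj _) := by
      have e : mk !![(1 : ZMod p), 0; -1, 1] (by simp) =
          a 2 * mk !![(1 : ZMod p), 1; 0, 1] (by simp) * (a 2)⁻¹ := by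
        apply mat_inj
        rw [mat_mul, mat_mul, mat_inv]
        apply ext2 <;> simp [a, mat_mk, trace_fin_two]
      rw [e]
      exact Subgroup.mul_mem _ (Subgroup.mul_mem _ h2 hu) (Subgroup.inv_mem _ h2)
    exact transv_gen _ one_ne_zero (neg_ne_zero.2 one_ne_zero) hu hl

end MGen

/-! ### Conjugacy into stabilisers of lines -/

section Inv
variable {p : ℕ} [hp : Fact p.Prime] [NeZero (2 : ZMod p)] (C : Consts (ZMod p))

/-- Stabilisers of lines that are conjugate contain the same elements up to conjugation. -/
theorem CI_Stab {X Y : Mat (ZMod p)} {c g : SL (ZMod p)} (h : mat c * X = Y * mat c)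
    (hg : Fixes (mat g) Y) : CI (Stab X) g := by
  refine ⟨c, ?_⟩
  obtain ⟨u, hu⟩ := hg
  refine ⟨u, ?_⟩
  have hX : X = mat c⁻¹ * Y * mat c := by
    rw [Matrix.mul_assoc, ← h, ← Matrix.mul_assoc, mat_inv_mul, one_mul]
  rw [hX, mat_mul, mat_mul]
  have e1 : mat c⁻¹ * mat g * mat c * (mat c⁻¹ * Y * mat c) = mat c⁻¹ * (mat g * Y) * mat c := by
    simp only [Matrix.mul_assoc]
    rw [← Matrix.mul_assoc (mat c) (mat c⁻¹), mat_mul_inv, one_mul]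
  have e2 : mat c⁻¹ * Y * mat c * (mat c⁻¹ * mat g * mat c) = mat c⁻¹ * (Y * mat g) * mat c := by
    simp only [Matrix.mul_assoc]
    rw [← Matrix.mul_assoc (mat c) (mat c⁻¹), mat_mul_inv, one_mul]
  rw [e1, e2, hu, mul_smul_comm, smul_mul_assoc]

theorem CI_Stab_mono {X Y : Mat (ZMod p)} {c g : SL (ZMod p)} (h : mat c * X = Y * mat c)
    (hg : CI (Stab Y) g) : CI (Stab X) g := by
  obtain ⟨b, hb⟩ := hg
  have := (CI_Stab h hb).conj b
  have e : b * (b⁻¹ * g * b) * b⁻¹ = g := by group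
  rwa [e] at this

theorem nilp_conj {a b : ZMod p} (h : a ≠ 0 ∨ b ≠ 0) :
    ∃ c : SL (ZMod p), mat c * nilp 1 0 = nilp a b * mat c := by
  by_cases ha : a = 0
  · have hb := h.resolve_left (not_not.2 ha)
    refine ⟨mk !![0, -b⁻¹; b, 0] (by simp [det_fin_two, hb]), ?_⟩
    rw [mat_mk]
    apply ext2 <;> simp [nilp, ha] <;> field_simp
  · refine ⟨mk !![a, 0; b, a⁻¹] (by simp [det_fin_two, ha]), ?_⟩
    rw [mat_mk]
    apply ext2 <;> simp [nilp] <;> field_simp <;> ring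

/-- Elements with a rational eigenvalue are conjugate into every Borel subgroup. -/
theorem CI_nil {X : Mat (ZMod p)} (ht : X.trace = 0) (hd : X.det = 0)
    {g : SL (ZMod p)} {k : ZMod p} (hk : k ^ 2 = (mat g).trace ^ 2 - 4) : CI (Stab X) g := by
  have h2 : (2 : ZMod p) ≠ 0 := two_ne_zero
  obtain ⟨a, b, s, hab, rfl⟩ := nilp_form ht hd
  obtain ⟨c, hc⟩ := nilp_conj hab
  set ν := ((mat g).trace + k) / 2 with hν
  have hdet : (mat g - ν • 1).det = 0 := by
    have hdg := mat_det g
    have e2 : 2 * ν = (mat g).trace + k := by rw [hν]; field_simp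
    have e3 : ν ^ 2 - (mat g).trace * ν + 1 = 0 := by
      have : 2 ^ 2 * (ν ^ 2 - (mat g).trace * ν + 1) = 0 := by
        linear_combination (2 * ν + (mat g).trace + k - 2 * (mat g).trace) * e2 + hk
      exact (mul_eq_zero.1 this).resolve_left (pow_ne_zero _ h2)
    rw [trace_fin_two] at e3
    rw [det_fin_two] at hdg ⊢
    simp
    linear_combination e3 + hdg
  obtain ⟨v, hv, h⟩ := Matrix.exists_mulVec_eq_zero_iff.2 hdet
  have e0 := congrFun h 0
  have e1 := congrFun h 1
  simp [mulVec, dotProduct, Fin.sum_univ_two] at e0 e1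
  have hv' : v 0 ≠ 0 ∨ v 1 ≠ 0 := by
    by_contra! hc
    apply hv
    ext i
    fin_cases i
    · exact hc.1
    · exact hc.2
  have hZ0 : nilp (v 0) (v 1) ≠ 0 := by
    intro h0
    have h01 := congrFun (congrFun h0 0) 1
    have h10 := congrFun (congrFun h0 1) 0
    simp [nilp] at h01 h10
    rcases hv' with h | h
    · exact h h01
    · exact h h10
  have hfix : Fixes (mat g) (nilp (v 0) (v 1)) := by
    refine fix_of_eig (μ := ν) hZ0 (by simp [nilp, trace_fin_two]) ?_
    apply ext2 <;> simp [nilp, mul_apply, Fin.sum_univ_two]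
    · linear_combination -(v 1) * e0
    · linear_combination (v 0) * e0
    · linear_combination -(v 1) * e1
    · linear_combination (v 0) * e1
  obtain ⟨d, hd'⟩ := nilp_conj hv'
  refine CI_Stab (Y := s • nilp (v 0) (v 1)) (c := d * c⁻¹) ?_ (fixes_smul s hfix)
  have : mat c⁻¹ * nilp a b = nilp 1 0 * mat c⁻¹ := by
    calc mat c⁻¹ * nilp a b = mat c⁻¹ * (nilp a b * mat c) * mat c⁻¹ := by
          simp only [Matrix.mul_assoc]; rw [mat_mul_inv, mul_one]
      _ = _ := by rw [← hc, ← Matrix.mul_assoc, mat_inv_mul, one_mul]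
  rw [mat_mul, mul_smul_comm, smul_mul_assoc, Matrix.mul_assoc, this, ← Matrix.mul_assoc, hd',
    Matrix.mul_assoc]

/-- An element conjugate into the stabiliser of the line of `X` is a half-turn, central, has an axis
in the same discriminant class as `X`, or is split with `X` nilpotent. -/
theorem stab_cases {X : Mat (ZMod p)} (h0 : X ≠ 0) (ht : X.trace = 0) {g : SL (ZMod p)}
    (h : CI (Stab X) g) : (mat g).trace = 0 ∨ (g = 1 ∨ g = -1) ∨
      (∃ b, b ≠ 0 ∧ -X.det = b ^ 2 * ((mat g).trace ^ 2 - 4)) ∨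
      (X.det = 0 ∧ ∃ k, k ^ 2 = (mat g).trace ^ 2 - 4) := by
  obtain ⟨c, hc⟩ := h
  have htr : (mat (c⁻¹ * g * c)).trace = (mat g).trace := by
    have := mat_trace_conj g c⁻¹
    rwa [inv_inv] at this
  by_cases h1 : (mat g).trace = 0
  · exact Or.inl h1
  by_cases hs : Scal (mat (c⁻¹ * g * c))
  · right; left
    rw [scal_iff] at hs
    have e : g = c * (c⁻¹ * g * c) * c⁻¹ := by group
    rcases hs with hs | hs
    · left; rw [e, hs]; group
    · right; rw [e, hs]; simp
  rw [← htr] at h1 ⊢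
  right; right
  rcases fix_cases hs h0 ht h1 hc with ⟨b, hb⟩ | ⟨hd, k, -, hk, -⟩
  · left
    have hb0 : b ≠ 0 := by
      rintro rfl
      exact h0 (by rw [hb, zero_smul])
    refine ⟨b, hb0, ?_⟩
    have hdet := mat_det (c⁻¹ * g * c)
    generalize mat (c⁻¹ * g * c) = A at *
    rw [hb, det_smul, Fintype.card_fin]
    rw [det_fin_two] at hdet
    simp [det_fin_two, trace_fin_two]
    linear_combination -4 * b ^ 2 * hdet
  · exact Or.inr ⟨hd, k, by rw [pow_two, hk, mat_det, mul_one]⟩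

include C in
theorem split_of_stab {X : Mat (ZMod p)} (h0 : X ≠ 0) (ht : X.trace = 0) {s : ZMod p}
    (hs : s ^ 2 = -X.det) {g : SL (ZMod p)} (h : CI (Stab X) g) :
    ∃ k, k ^ 2 = (mat g).trace ^ 2 - 4 := by
  rcases stab_cases h0 ht h with h | h | ⟨b, hb, h⟩ | ⟨-, h⟩
  · exact ⟨2 * C.i, by rw [h]; linear_combination 4 * C.i2⟩
  · refine ⟨0, ?_⟩
    rcases h with rfl | rfl
    · rw [mat_one]; simp [trace_fin_two]; norm_num
    · rw [mat_neg, mat_one]; simp [trace_fin_two]; norm_num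
  · refine ⟨s / b, ?_⟩
    rw [div_pow, hs, h]; field_simp
  · exact h

theorem not_scal_tl {X : Mat (ZMod p)} (h0 : X ≠ 0) (ht : X.trace = 0) : ¬ Scal X := by
  rintro ⟨a, rfl⟩
  have : a = 0 := by
    have h2 : (2 : ZMod p) ≠ 0 := two_ne_zero
    simp [trace_smul, trace_one] at ht
    exact ht.resolve_right h2
  exact h0 (by rw [this, zero_smul])

/-- Nonsingular lines of the same discriminant class are conjugate. -/
theorem nonsing {X Y : Mat (ZMod p)} (hX0 : X ≠ 0) (hXt : X.trace = 0) (hY0 : Y ≠ 0)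
    (hYt : Y.trace = 0) (hX : X.det ≠ 0) {q : ZMod p} (hq0 : q ≠ 0) (hq : Y.det = q ^ 2 * X.det)
    {g : SL (ZMod p)} (hg : CI (Stab Y) g) : CI (Stab X) g := by
  have h2 : (2 : ZMod p) ≠ 0 := two_ne_zero
  have ht : (q • X).trace = 0 := by rw [trace_smul, hXt, smul_zero]
  have hd : (q • X).det = Y.det := by rw [det_smul, Fintype.card_fin, hq]
  obtain ⟨c, hc⟩ := conj_mat (not_scal_tl (smul_ne_zero hq0 hX0) ht) (not_scal_tl hY0 hYt)
    (ht.trans hYt.symm) hd (by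
      rw [ht, hd, hq]
      have : (0 : ZMod p) ^ 2 - 4 * (q ^ 2 * X.det) = -((2 * q) ^ 2 * X.det) := by ring
      rw [this]
      exact neg_ne_zero.2 (mul_ne_zero (pow_ne_zero _ (mul_ne_zero h2 hq0)) hX))
  obtain ⟨b, u, hu⟩ := CI_Stab_mono hc hg
  refine ⟨b, u, ?_⟩
  rw [mul_smul_comm, smul_mul_assoc, smul_comm u q] at hu
  exact smul_right_injective _ hq0 hu

theorem nonsq_ratio {a b : ZMod p} (ha : ∀ s, s ^ 2 ≠ a) (hb : ∀ s, s ^ 2 ≠ b) :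
    ∃ q, q ≠ 0 ∧ b = q ^ 2 * a := by
  have h1 : ¬ IsSquare a := by rintro ⟨s, hs⟩; exact ha s (by rw [hs, pow_two])
  have h2 : ¬ IsSquare b := by rintro ⟨s, hs⟩; exact hb s (by rw [hs, pow_two])
  have hc2 : ringChar (ZMod p) ≠ 2 := by
    intro h
    apply two_ne_zero (α := ZMod p)
    have := ringChar.Nat.cast_ringChar (R := ZMod p)
    rw [h] at this
    exact_mod_cast this
  have ha0 : a ≠ 0 := by rintro rfl; exact ha 0 (by simp)
  have hb0 : b ≠ 0 := by rintro rfl; exact hb 0 (by simp)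
  have e1 := (quadraticChar_neg_one_iff_not_isSquare (F := ZMod p)).2 h1
  have e2 := (quadraticChar_neg_one_iff_not_isSquare (F := ZMod p)).2 h2
  have e3 : quadraticChar (ZMod p) (a * b) = 1 := by rw [map_mul, e1, e2]; norm_num
  obtain ⟨s, hs⟩ := (quadraticChar_one_iff_isSquare (mul_ne_zero ha0 hb0)).1 e3
  refine ⟨s / a, div_ne_zero ?_ ha0, ?_⟩
  · rintro rfl
    exact mul_ne_zero ha0 hb0 (by rw [hs, mul_zero])
  · field_simp
    linear_combination hs

theorem CI_of_trace {M : Subgroup (SL (ZMod p))} (hneg : -1 ∈ M) {x g : SL (ZMod p)} (hx : x ∈ M)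
    (hxn : NC x) (hg : NC g) (ht : (mat g).trace = (mat x).trace ∨ (mat g).trace = -(mat x).trace)
    (h4 : (mat g).trace ^ 2 ≠ 4) : CI M g := by
  rcases ht with ht | ht
  · obtain ⟨c, hc⟩ := conj_SL hg hxn ht h4
    refine ⟨c⁻¹, ?_⟩
    rw [inv_inv, hc]; exact hx
  · have hn : NC (-x) := ⟨fun h => hxn.2 (by rw [← h, neg_neg]), fun h => hxn.1 (neg_injective h)⟩
    obtain ⟨c, hc⟩ := conj_SL hg hn (by rw [ht, mat_neg, trace_neg]) h4
    refine ⟨c⁻¹, ?_⟩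
    rw [inv_inv, hc, ← neg_one_mul]; exact M.mul_mem hneg hx

theorem CI_scal {M : Subgroup (SL (ZMod p))} (hneg : -1 ∈ M) {g : SL (ZMod p)} (hg : ¬ NC g) :
    CI M g := by
  unfold NC at hg
  rw [not_and_or, not_not, not_not] at hg
  rcases hg with rfl | rfl
  · exact CI.of_mem M.one_mem
  · exact CI.of_mem hneg

theorem CI_iff {M : Subgroup (SL (ZMod p))} {g : SL (ZMod p)} (h : CI M g) :
    ∃ x ∈ M, (mat x).trace = (mat g).trace ∧ (NC g → NC x) := by
  obtain ⟨c, hc⟩ := h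
  refine ⟨_, hc, ?_, fun h => ?_⟩
  · have := mat_trace_conj g c⁻¹
    rwa [inv_inv] at this
  · have := h.conj c⁻¹
    rwa [inv_inv] at this

end Inv

/-! ### The four families of maximal obstructions -/

section InvUpper
variable {p : ℕ} [hp : Fact p.Prime] [NeZero (2 : ZMod p)] (C : Consts (ZMod p))

theorem CI_of_sq {M : Subgroup (SL (ZMod p))} (hneg : -1 ∈ M) {x g : SL (ZMod p)} (hx : x ∈ M)
    (hxn : NC x) (hg : NC g) (ht : (mat g).trace ^ 2 = (mat x).trace ^ 2)
    (h4 : (mat g).trace ^ 2 ≠ 4) : CI M g :=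
  CI_of_trace hneg hx hxn hg (sq_eq_sq_iff_eq_or_eq_neg.1 ht) h4

theorem trace_mul_self (x : SL (ZMod p)) : (mat (x * x)).trace = (mat x).trace ^ 2 - 2 := by
  have h := mat_det x
  rw [mat_mul]
  rw [det_fin_two] at h
  simp [trace_fin_two, mul_apply, Fin.sum_univ_two]
  linear_combination -2 * h

include C in
theorem golden_ne {t : ZMod p} (h : t ^ 2 = t + 1 ∨ t ^ 2 = -t + 1) : t ^ 2 ≠ 4 := by
  intro h4
  apply C.h5
  rcases h with h | h
  · linear_combination (t + 3) * (h - h4) + h4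
  · linear_combination (t - 3) * (h4 - h) + h4

include C in
/-- A binary icosahedral group contains, up to conjugacy, all elements of order five or ten:
both roots of `T ^ 2 = T + 1` occur, up to sign, as traces of an element and of its square. -/
theorem CI_golden {M : Subgroup (SL (ZMod p))} (hneg : -1 ∈ M) (hM : TypeI M) {g : SL (ZMod p)}
    (hg : NC g) (ht : (mat g).trace ^ 2 = (mat g).trace + 1 ∨
      (mat g).trace ^ 2 = -(mat g).trace + 1) : CI M g := by
  obtain ⟨-, -, -, -, x, hx, hxn, hxt⟩ := hM
  have h4 := golden_ne C ht
  have h4x := golden_ne C hxt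
  by_cases he : (mat g).trace ^ 2 = (mat x).trace ^ 2
  · exact CI_of_sq hneg hx hxn hg he h4
  have h2 := trace_mul_self x
  have hxx : NC (x * x) := by
    constructor
    · intro h
      rw [h, mat_one] at h2
      simp at h2
      exact h4x (by linear_combination -h2)
    · intro h
      rw [h, mat_neg, mat_one] at h2
      simp at h2
      have h0 : (mat x).trace = 0 := by
        have : (mat x).trace ^ 2 = 0 := by linear_combination -h2
        exact pow_eq_zero_iff (two_ne_zero) |>.1 this
      rw [h0] at hxt
      simp at hxt
  refine CI_of_sq hneg (M.mul_mem hx hx) hxx hg ?_ h4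
  rw [h2]
  generalize (mat g).trace = u at *
  generalize (mat x).trace = v at *
  -- The squares of the traces are the two roots of `T ^ 2 = 3 * T - 1`, whose sum is `3`.
  have hu : (u ^ 2) ^ 2 = 3 * u ^ 2 - 1 := by
    rcases ht with h | h
    · linear_combination (u ^ 2 + u - 1) * h
    · linear_combination (u ^ 2 - u - 1) * h
  have hv : (v ^ 2) ^ 2 = 3 * v ^ 2 - 1 := by
    rcases hxt with h | h
    · linear_combination (v ^ 2 + v - 1) * h
    · linear_combination (v ^ 2 - v - 1) * h
  have hs : u ^ 2 + v ^ 2 = 3 := by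
    have : (u ^ 2 - v ^ 2) * (u ^ 2 + v ^ 2 - 3) = 0 := by linear_combination hu - hv
    exact sub_eq_zero.1 ((mul_eq_zero.1 this).resolve_left (sub_ne_zero.2 he))
  linear_combination hs - hv

/-- The four families of proper subgroups of `SL₂` that occur as maximal obstructions:
stabilisers of split or singular lines, stabilisers of nonsplit lines, binary tetrahedral or
octahedral groups, binary icosahedral groups. -/
def Cl (k : Fin 4) (M : Subgroup (SL (ZMod p))) : Prop :=
  match k with
  | 0 => ∃ X : Mat (ZMod p), X ≠ 0 ∧ X.trace = 0 ∧ M = Stab X ∧ ∃ s, s ^ 2 = -X.det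
  | 1 => ∃ X : Mat (ZMod p), X ≠ 0 ∧ X.trace = 0 ∧ M = Stab X ∧ ∀ s, s ^ 2 ≠ -X.det
  | 2 => TypeT M ∨ TypeO M
  | 3 => TypeI M

include C in
theorem nested_split {X Y : Mat (ZMod p)} (hX0 : X ≠ 0) (hXt : X.trace = 0)
    (hX : ∃ s, s ^ 2 = -X.det) (hY0 : Y ≠ 0) (hYt : Y.trace = 0) (hY : ∃ s, s ^ 2 = -Y.det) :
    (∀ g, CI (Stab X) g → CI (Stab Y) g) ∨ ∀ g, CI (Stab Y) g → CI (Stab X) g := by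
  obtain ⟨s, hs⟩ := hX
  obtain ⟨t, ht⟩ := hY
  by_cases hdY : Y.det = 0
  · left
    intro g hg
    obtain ⟨k, hk⟩ := split_of_stab C hX0 hXt hs hg
    exact CI_nil hYt hdY hk
  · right
    intro g hg
    by_cases hdX : X.det = 0
    · obtain ⟨k, hk⟩ := split_of_stab C hY0 hYt ht hg
      exact CI_nil hXt hdX hk
    · have hs0 : s ≠ 0 := by rintro rfl; exact hdX (by linear_combination hs)
      have ht0 : t ≠ 0 := by rintro rfl; exact hdY (by linear_combination ht)
      refine nonsing hX0 hXt hY0 hYt hdX (div_ne_zero ht0 hs0) ?_ hg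
      rw [div_pow, hs, ht]
      field_simp

theorem nested_nonsplit {X Y : Mat (ZMod p)} (hX0 : X ≠ 0) (hXt : X.trace = 0)
    (hX : ∀ s, s ^ 2 ≠ -X.det) (hY0 : Y ≠ 0) (hYt : Y.trace = 0) (hY : ∀ s, s ^ 2 ≠ -Y.det) {g}
    (hg : CI (Stab X) g) : CI (Stab Y) g := by
  obtain ⟨q, hq, h⟩ := nonsq_ratio hY hX
  refine nonsing hY0 hYt hX0 hXt ?_ hq (by linear_combination -h) hg
  intro hd
  exact hY 0 (by rw [hd]; simp)

include C in
theorem four_ne {t : ZMod p} (h : t = 0 ∨ t ^ 2 = 1 ∨ t ^ 2 = 2) : t ^ 2 ≠ 4 := by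
  intro h4
  rcases h with rfl | h | h
  · exact pow_ne_zero 2 C.h2 (by linear_combination -h4)
  · exact C.h3 (by linear_combination h - h4)
  · exact C.h2 (by linear_combination h - h4)

include C in
theorem CI_TO {M : Subgroup (SL (ZMod p))} (hneg : -1 ∈ M) (hM : TypeT M ∨ TypeO M)
    {g : SL (ZMod p)} (hg : NC g) (ht : (mat g).trace = 0 ∨ (mat g).trace ^ 2 = 1) : CI M g := by
  have h4 := four_ne C (ht.imp_right Or.inl)
  have : (∃ x ∈ M, NC x ∧ (mat x).trace = 0) ∧ (∃ x ∈ M, NC x ∧ (mat x).trace ^ 2 = 1) := by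
    rcases hM with h | h
    · exact ⟨h.2.2.1, h.2.2.2⟩
    · exact ⟨h.2.2.1, h.2.2.2.1⟩
  obtain ⟨⟨x, hx, hxn, hxt⟩, y, hy, hyn, hyt⟩ := this
  rcases ht with ht | ht
  · exact CI_of_sq hneg hx hxn hg (by rw [ht, hxt]) h4
  · exact CI_of_sq hneg hy hyn hg (by rw [ht, hyt]) h4

include C in
theorem CI_I {M : Subgroup (SL (ZMod p))} (hneg : -1 ∈ M) (hM : TypeI M)
    {g : SL (ZMod p)} (hg : NC g) (ht : (mat g).trace = 0 ∨ (mat g).trace ^ 2 = 1) : CI M g := by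
  have h4 := four_ne C (ht.imp_right Or.inl)
  obtain ⟨-, -, ⟨x, hx, hxn, hxt⟩, ⟨y, hy, hyn, hyt⟩, -⟩ := hM
  rcases ht with ht | ht
  · exact CI_of_sq hneg hx hxn hg (by rw [ht, hxt]) h4
  · exact CI_of_sq hneg hy hyn hg (by rw [ht, hyt]) h4

include C in
theorem nested_TO {M N : Subgroup (SL (ZMod p))} (hMn : -1 ∈ M) (hNn : -1 ∈ N)
    (hM : TypeT M ∨ TypeO M) (hN : TypeT N ∨ TypeO N) :
    (∀ g, CI M g → CI N g) ∨ ∀ g, CI N g → CI M g := by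
  have key : ∀ {M N : Subgroup (SL (ZMod p))}, -1 ∈ N → TypeT M → (TypeT N ∨ TypeO N) →
      ∀ g, CI M g → CI N g := by
    intro M N hn hM hN g hg
    by_cases hgn : NC g
    · obtain ⟨x, hx, hxt, hxn⟩ := CI_iff hg
      have := hM.2.1 x hx (hxn hgn)
      rw [hxt] at this
      exact CI_TO C hn hN hgn this
    · exact CI_scal hn hgn
  rcases hM with hM | hM
  · exact Or.inl (key hNn hM hN)
  rcases hN with hN | hN
  · exact Or.inr (key hMn hN (Or.inr hM))
  left
  intro g hg
  by_cases hgn : NC g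
  · obtain ⟨x, hx, hxt, hxn⟩ := CI_iff hg
    have := hM.2.1 x hx (hxn hgn)
    rw [hxt] at this
    rcases this with h | h | h
    · exact CI_TO C hNn (Or.inr hN) hgn (Or.inl h)
    · exact CI_TO C hNn (Or.inr hN) hgn (Or.inr h)
    · obtain ⟨-, -, -, -, y, hy, hyn, hyt⟩ := hN
      exact CI_of_sq hNn hy hyn hgn (by rw [h, hyt]) (four_ne C (Or.inr (Or.inr h)))
  · exact CI_scal hNn hgn

include C in
theorem nested_I {M N : Subgroup (SL (ZMod p))} (hNn : -1 ∈ N)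
    (hM : TypeI M) (hN : TypeI N) {g} (hg : CI M g) : CI N g := by
  by_cases hgn : NC g
  · obtain ⟨x, hx, hxt, hxn⟩ := CI_iff hg
    have := hM.2.1 x hx (hxn hgn)
    rw [hxt] at this
    rcases this with h | h | h
    · exact CI_I C hNn hN hgn (Or.inl h)
    · exact CI_I C hNn hN hgn (Or.inr h)
    · exact CI_golden C hNn hN hgn h
  · exact CI_scal hNn hgn

include C in
/-- Within one family, the sets of elements conjugate into a given member form a chain. -/
theorem Cl.nested {k : Fin 4} {M N : Subgroup (SL (ZMod p))} (hMn : -1 ∈ M) (hNn : -1 ∈ N)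
    (hM : Cl k M) (hN : Cl k N) : (∀ g, CI M g → CI N g) ∨ ∀ g, CI N g → CI M g := by
  fin_cases k
  · obtain ⟨X, hX0, hXt, rfl, hX⟩ := hM
    obtain ⟨Y, hY0, hYt, rfl, hY⟩ := hN
    exact nested_split C hX0 hXt hX hY0 hYt hY
  · obtain ⟨X, hX0, hXt, rfl, hX⟩ := hM
    obtain ⟨Y, hY0, hYt, rfl, hY⟩ := hN
    exact Or.inl fun g hg => nested_nonsplit hX0 hXt hX hY0 hYt hY hg
  · exact nested_TO C hMn hNn hM hN
  · exact Or.inl fun g hg => nested_I C hNn hM hN hg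

theorem exists_Cl {H : Subgroup (SL (ZMod p))} (hH : H ≠ ⊤) (hneg : -1 ∈ H) :
    ∃ M, H ≤ M ∧ M ≠ ⊤ ∧ ∃ k, Cl k M := by
  rcases dickson H hH hneg with ⟨X, hX0, hXt, hX⟩ | h | h | h
  · refine ⟨Stab X, hX, Stab_ne_top hX0 hXt, ?_⟩
    by_cases hs : ∃ s, s ^ 2 = -X.det
    · exact ⟨0, X, hX0, hXt, rfl, hs⟩
    · push Not at hs
      exact ⟨1, X, hX0, hXt, rfl, hs⟩
  · exact ⟨H, le_rfl, hH, 2, Or.inl h⟩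
  · exact ⟨H, le_rfl, hH, 2, Or.inr h⟩
  · exact ⟨H, le_rfl, hH, 3, h⟩

include C in
/-- By `Cl.nested` the four subgroups belong to different families; the element avoided by the
icosahedral group would be conjugate into stabilisers of both a split and a nonsplit line. -/
theorem no_inv_quad (x : Fin 4 → SL (ZMod p)) (M : Fin 4 → Subgroup (SL (ZMod p)))
    (hneg : ∀ i, -1 ∈ M i) (k : Fin 4 → Fin 4) (hk : ∀ i, Cl (k i) (M i))
    (hCI : ∀ i j, i ≠ j → CI (M i) (x j)) (hn : ∀ i, ¬ CI (M i) (x i)) : False := by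
  have hinj : Function.Injective k := by
    intro i j hij
    by_contra hne
    rcases Cl.nested C (hneg i) (hneg j) (hk i) (hij ▸ hk j) with h | h
    · exact hn j (h _ (hCI i j hne))
    · exact hn i (h _ (hCI j i (Ne.symm hne)))
  have hsurj := Finite.surjective_of_injective hinj
  obtain ⟨e, he⟩ := hsurj 0
  obtain ⟨d, hd⟩ := hsurj 1
  obtain ⟨a, ha⟩ := hsurj 3
  have h1 := hk e
  have h2 := hk d
  have h3 := hk a
  have hea : e ≠ a := by rintro rfl; rw [he] at ha; exact absurd ha (by decide)
  have hda : d ≠ a := by rintro rfl; rw [hd] at ha; exact absurd ha (by decide)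
  rw [he] at h1
  rw [hd] at h2
  rw [ha] at h3
  obtain ⟨X, hX0, hXt, hMX, s, hs⟩ := h1
  obtain ⟨Y, hY0, hYt, hMY, hY⟩ := h2
  have c1 := hCI e a hea
  have c2 := hCI d a hda
  rw [hMX] at c1
  rw [hMY] at c2
  obtain ⟨l, hl⟩ := split_of_stab C hX0 hXt hs c1
  apply hn a
  by_cases hg : NC (x a)
  · rcases stab_cases hY0 hYt c2 with h | h | ⟨b, hb, h⟩ | ⟨h, -⟩
    · exact CI_I C (hneg a) h3 hg (Or.inl h)
    · exact absurd h (by rw [not_or]; exact hg)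
    · exact absurd (by rw [h, ← hl]; ring) (hY (b * l))
    · exact absurd (by rw [h]; simp) (hY 0)
  · exact CI_scal (hneg a) hg

end InvUpper

/-! ### The upper bound for `m_I` -/

section InvUpper2
variable {p : ℕ} [hp : Fact p.Prime] [NeZero (2 : ZMod p)] (C : Consts (ZMod p))

theorem minInv_obstruction {S : Set (P (ZMod p))} (hS : MinInvGen S) {s : P (ZMod p)}
    (hs : s ∈ S) : ∃ K : Subgroup (P (ZMod p)), K ≠ ⊤ ∧ ∀ t ∈ S \ {s}, CI K t := by
  have h := hS.2 _ (sdiff_ssubset hs)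
  rw [invGen_iff] at h
  push Not at h
  exact h

theorem CI_lift {S : Set (P (ZMod p))} {s : P (ZMod p)} {K : Subgroup (P (ZMod p))}
    {M : Subgroup (SL (ZMod p))} (hM : K.comap (pj _) ≤ M) (hKS : ∀ t ∈ S \ {s}, CI K t)
    (t : SL (ZMod p)) (ht : pj _ t ∈ S) (hts : pj _ t ≠ s) : CI M t := by
  obtain ⟨c, hc⟩ := CI_comap.2 (hKS _ ⟨ht, hts⟩)
  exact ⟨c, hM hc⟩

theorem exists_Cl_comap {K : Subgroup (P (ZMod p))} (hK : K ≠ ⊤) :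
    ∃ M : Subgroup (SL (ZMod p)), K.comap (pj _) ≤ M ∧ -1 ∈ M ∧ M ≠ ⊤ ∧ ∃ k, Cl k M := by
  have hneg : -1 ∈ K.comap (pj (ZMod p)) := neg_one_mem_comap K
  have hne : K.comap (pj (ZMod p)) ≠ ⊤ := comap_ne_top hK
  generalize K.comap (pj (ZMod p)) = H at *
  obtain ⟨M, hM, hMt, hk⟩ := exists_Cl hne hneg
  exact ⟨M, hM, hM hneg, hMt, hk⟩

theorem minInv_data {S : Set (P (ZMod p))} (hS : MinInvGen S) {s : P (ZMod p)} (hs : s ∈ S) :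
    ∃ (M : Subgroup (SL (ZMod p))) (k : Fin 4), (-1 ∈ M ∧ M ≠ ⊤ ∧ Cl k M) ∧
      ∀ t : SL (ZMod p), pj _ t ∈ S → pj _ t ≠ s → CI M t := by
  obtain ⟨K, hK, hKS⟩ := minInv_obstruction hS hs
  obtain ⟨M, hM, hneg, hMt, k, hk⟩ := exists_Cl_comap hK
  exact ⟨M, k, ⟨hneg, hMt, hk⟩, CI_lift hM hKS⟩

theorem minInv_not {S : Set (P (ZMod p))} (hS : MinInvGen S) {x : SL (ZMod p)}
    {M : Subgroup (SL (ZMod p))} (hneg : -1 ∈ M) (hMt : M ≠ ⊤)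
    (h : ∀ t : SL (ZMod p), pj _ t ∈ S → pj _ t ≠ pj _ x → CI M t) : ¬ CI M x := by
  intro hi
  obtain ⟨t, ht, hn⟩ := invGen_iff.1 hS.1 _ (map_ne_top hneg hMt)
  obtain ⟨t, rfl⟩ := pj_surj t
  apply hn
  by_cases e : pj _ t = pj _ x
  · rw [e]
    exact CI_map hi
  · exact CI_map (h t ht e)

include C in
theorem minInv_le {S : Set (P (ZMod p))} (hS : MinInvGen S) : S.ncard ≤ 3 := by
  by_contra hc
  obtain ⟨s, hinj, hsS⟩ := exists_four (not_le.1 hc)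
  obtain ⟨x, hx⟩ : ∃ x : Fin 4 → SL (ZMod p), ∀ i, pj _ (x i) = s i :=
    ⟨_, fun i => Classical.choose_spec (pj_surj (s i))⟩
  have hd := fun i => minInv_data hS (hsS i)
  choose M k hd using hd
  refine no_inv_quad C x M (fun i => (hd i).1.1) k (fun i => (hd i).1.2.2) ?_ ?_
  · intro i j hij
    refine (hd i).2 _ ?_ ?_
    · rw [hx]; exact hsS j
    · rw [hx]; exact fun h => hij (hinj h).symm
  · intro i
    refine minInv_not hS (hd i).1.1 (hd i).1.2.1 fun t ht e => (hd i).2 t ht ?_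
    rwa [← hx i]

end InvUpper2

/-! ### Binary octahedral and icosahedral groups -/

section Quat
variable {F : Type*} [Field F] (C : Consts F)

/-- The pure quaternion `a I + b J + c K`, with `I = diag (i, -i)` and `J = !![0, 1; -1, 0]`. -/
def qv (a b c : F) : Mat F := !![C.i * a, b + C.i * c; -b + C.i * c, -(C.i * a)]

/-- The unit quaternion `(1 + I + J + K) / 2`, of order six. -/
def q3 : SL F := mk !![(1 + C.i) / 2, (1 + C.i) / 2; (-1 + C.i) / 2, (1 - C.i) / 2] (by
  have h2 := C.h2
  rw [det_fin_two]
  simp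
  field_simp
  linear_combination -2 * C.i2)

/-- The unit quaternion `(1 + I) / √2`, of order eight. -/
def q4 : SL F := mk !![C.r * (1 + C.i) / 2, 0; 0, C.r * (1 - C.i) / 2] (by
  have h2 := C.h2
  rw [det_fin_two]
  simp
  field_simp
  linear_combination (1 - C.i ^ 2) * C.r2 - 2 * C.i2)

/-- The unit quaternion `(f + (f - 1) J + K) / 2`, of order ten. -/
def q5 : SL F := mk !![C.f / 2, (C.f - 1 + C.i) / 2; (1 - C.f + C.i) / 2, C.f / 2] (by
  have h2 := C.h2
  rw [det_fin_two]
  simp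
  field_simp
  linear_combination 2 * C.f2 - C.i2)

theorem q3_trace : (mat (q3 C)).trace = 1 := by
  have h2 := C.h2
  rw [q3, mat_mk, trace_fin_two]; simp; field_simp; ring

theorem q4_trace : (mat (q4 C)).trace = C.r := by
  have h2 := C.h2
  rw [q4, mat_mk, trace_fin_two]; simp; field_simp; ring

theorem q5_trace : (mat (q5 C)).trace = C.f := by
  have h2 := C.h2
  rw [q5, mat_mk, trace_fin_two]; simp; field_simp; ring

theorem q3_qv (a b c : F) : mat (q3 C) * qv C a b c = qv C c a b * mat (q3 C) := by
  have h2 := C.h2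
  rw [q3, mat_mk]
  apply ext2 <;> simp [qv] <;> field_simp
  · linear_combination (a - b) * C.i2
  · linear_combination (b - a) * C.i2
  · linear_combination (a - b) * C.i2
  · linear_combination (a - b) * C.i2

theorem q4_qv (a b c : F) : mat (q4 C) * qv C a b c = qv C a (-c) b * mat (q4 C) := by
  have h2 := C.h2
  rw [q4, mat_mk]
  apply ext2 <;> simp [qv] <;> field_simp
  · linear_combination C.r * (b + c) * C.i2
  · linear_combination -C.r * (b + c) * C.i2

theorem q5_qv (a b c : F) : mat (q5 C) * qv C a b c =
    qv C (((C.f - 1) * a - C.f * b + c) / 2) ((C.f * a + b + (C.f - 1) * c) / 2)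
      ((-a + (C.f - 1) * b + C.f * c) / 2) * mat (q5 C) := by
  have h2 := C.h2
  rw [q5, mat_mk]
  apply ext2 <;> simp [qv] <;> field_simp
  · linear_combination (a + c - C.i * (a - 2 * b - c)) * C.f2 +
      ((1 - C.f) * b + (2 - C.f) * c + a) * C.i2
  · linear_combination -(C.i + 1) * (a + c) * C.f2 + (C.f * b - C.f * a - a - c) * C.i2
  · linear_combination (1 - C.i) * (a + c) * C.f2 + (C.f * a - C.f * b + a + c) * C.i2
  · linear_combination (a + c - C.i * (2 * b + c - a)) * C.f2 +
      ((1 - C.f) * b + (2 - C.f) * c + a) * C.i2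

end Quat

section InvLower
variable {p : ℕ} [hp : Fact p.Prime] [NeZero (2 : ZMod p)] (C : Consts (ZMod p))

/-- The group of elements of `SL₂(p)` that map the set `V` of matrices to itself by conjugation.
Closure under inverses comes from finiteness. -/
def StabSet (V : Set (Mat (ZMod p))) : Subgroup (SL (ZMod p)) :=
  let N : Submonoid (SL (ZMod p)) :=
    { carrier := {g | ∀ X ∈ V, ∃ Y ∈ V, mat g * X = Y * mat g}
      one_mem' := fun X hX => ⟨X, hX, by rw [mat_one, one_mul, mul_one]⟩
      mul_mem' := by
        intro g h hg hh X hX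
        obtain ⟨Y, hY, e⟩ := hh X hX
        obtain ⟨Z, hZ, e'⟩ := hg Y hY
        exact ⟨Z, hZ, by rw [mat_mul, Matrix.mul_assoc, e, ← Matrix.mul_assoc, e',
          Matrix.mul_assoc]⟩ }
  { N with
    inv_mem' := by
      intro g hg
      have h : g⁻¹ ∈ Submonoid.powers g :=
        (isOfFinOrder_of_finite g).mem_powers_iff_mem_zpowers.2 ⟨-1, zpow_neg_one g⟩
      exact (Submonoid.powers_le (P := N)).2 hg h }

theorem mem_StabSet {V : Set (Mat (ZMod p))} {g : SL (ZMod p)} :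
    g ∈ StabSet V ↔ ∀ X ∈ V, ∃ Y ∈ V, mat g * X = Y * mat g := Iff.rfl

theorem neg_one_mem_StabSet (V : Set (Mat (ZMod p))) : -1 ∈ StabSet V :=
  fun X hX => ⟨X, hX, by rw [mat_neg, mat_one]; simp⟩

/-- A transvection moves a matrix with zero corner entry to one with a prescribed corner entry. -/
theorem StabSet_ne_top {V : Set (Mat (ZMod p))} {X : Mat (ZMod p)} (hX : X ∈ V) (h00 : X 0 0 = 0)
    (h10 : X 1 0 ≠ 0) {a : ZMod p} (ha : ∀ Y ∈ V, Y 0 0 ≠ a) : StabSet V ≠ ⊤ := by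
  intro h
  have hm : mk !![1, a / X 1 0; 0, 1] (by simp) ∈ StabSet V := by rw [h]; trivial
  obtain ⟨Y, hY, e⟩ := mem_StabSet.1 hm X hX
  refine ha Y hY ?_
  have e0 := congrFun (congrFun e 0) 0
  rw [mat_mk] at e0
  simp [mul_apply, Fin.sum_univ_two, h00, h10] at e0
  exact e0.symm

theorem NC_of_trace {g : SL (ZMod p)} (h : (mat g).trace ^ 2 ≠ 4) : NC g := by
  constructor
  · rintro rfl
    apply h
    rw [mat_one]; simp; norm_num
  · rintro rfl
    apply h
    rw [mat_neg, mat_one]; simp; norm_num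

theorem q3_NC : NC (q3 C) :=
  NC_of_trace (four_ne C (Or.inr (Or.inl (by rw [q3_trace, one_pow]))))

theorem q4_NC : NC (q4 C) :=
  NC_of_trace (four_ne C (Or.inr (Or.inr (by rw [q4_trace, C.r2]))))

theorem q5_NC : NC (q5 C) :=
  NC_of_trace (golden_ne C (Or.inl (by rw [q5_trace, C.f2])))

/-- The six unit vectors along the axes of the quaternions `I`, `J`, `K`. -/
def octV : Set (Mat (ZMod p)) := {X | ∃ e : ZMod p, e ^ 2 = 1 ∧
  (X = qv C e 0 0 ∨ X = qv C 0 e 0 ∨ X = qv C 0 0 e)}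

/-- The twelve vertices of an icosahedron: the cyclic permutations of `(0, ±1, ±f)`. -/
def icoV : Set (Mat (ZMod p)) := {X | ∃ e d : ZMod p, e ^ 2 = 1 ∧ d ^ 2 = 1 ∧
  (X = qv C 0 e (d * C.f) ∨ X = qv C (d * C.f) 0 e ∨ X = qv C e (d * C.f) 0)}

theorem q3_oct : q3 C ∈ StabSet (octV C) := by
  rintro X ⟨e, he, rfl | rfl | rfl⟩ <;> refine ⟨_, ?_, q3_qv C _ _ _⟩
  · exact ⟨e, he, Or.inr (Or.inl rfl)⟩
  · exact ⟨e, he, Or.inr (Or.inr rfl)⟩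
  · exact ⟨e, he, Or.inl rfl⟩

theorem q4_oct : q4 C ∈ StabSet (octV C) := by
  rintro X ⟨e, he, rfl | rfl | rfl⟩ <;> refine ⟨_, ?_, q4_qv C _ _ _⟩
  · exact ⟨e, he, Or.inl (by rw [neg_zero])⟩
  · exact ⟨e, he, Or.inr (Or.inr (by rw [neg_zero]))⟩
  · exact ⟨-e, by rw [neg_sq, he], Or.inr (Or.inl rfl)⟩

theorem q3_ico : q3 C ∈ StabSet (icoV C) := by
  rintro X ⟨e, d, he, hd, rfl | rfl | rfl⟩ <;> refine ⟨_, ?_, q3_qv C _ _ _⟩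
  · exact ⟨e, d, he, hd, Or.inr (Or.inl rfl)⟩
  · exact ⟨e, d, he, hd, Or.inr (Or.inr rfl)⟩
  · exact ⟨e, d, he, hd, Or.inl rfl⟩

theorem qv_congr {a b c a' b' c' : ZMod p} (ha : a = a') (hb : b = b') (hc : c = c') :
    qv C a b c = qv C a' b' c' := by rw [ha, hb, hc]

theorem q5_ico : q5 C ∈ StabSet (icoV C) := by
  have h2 := C.h2
  have hf := C.f2
  rintro X ⟨e, d, he, hd, h⟩
  have hed : d = e ∨ d = -e := sq_eq_sq_iff_eq_or_eq_neg.1 (hd.trans he.symm)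
  have hn : (-e) ^ 2 = 1 := by rw [neg_sq, he]
  rcases h with rfl | rfl | rfl <;> rcases hed with rfl | rfl <;>
    refine ⟨_, ?_, q5_qv C _ _ _⟩
  · exact ⟨d, d, he, he, Or.inl (qv_congr C (by field_simp; ring)
      (by field_simp; linear_combination d * hf) (by field_simp; linear_combination d * hf))⟩
  · exact ⟨-e, -e, hn, hn, Or.inr (Or.inl (qv_congr C (by field_simp; ring)
      (by field_simp; linear_combination -e * hf) (by field_simp; linear_combination -e * hf)))⟩
  · exact ⟨d, d, he, he, Or.inr (Or.inr (qv_congr C (by field_simp; linear_combination d * hf)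
      (by field_simp; linear_combination d * hf) (by field_simp; ring)))⟩
  · exact ⟨-e, e, hn, he, Or.inl (qv_congr C (by field_simp; linear_combination -e * hf)
      (by field_simp; linear_combination -e * hf) (by field_simp; ring))⟩
  · exact ⟨-d, d, hn, he, Or.inr (Or.inr (qv_congr C (by field_simp; linear_combination -d * hf)
      (by field_simp; ring) (by field_simp; linear_combination d * hf)))⟩
  · exact ⟨-e, e, hn, he, Or.inr (Or.inl (qv_congr C (by field_simp; linear_combination e * hf)
      (by field_simp; ring) (by field_simp; linear_combination -e * hf)))⟩

theorem oct_ne_top : StabSet (octV C) ≠ ⊤ := by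
  have hi : C.i ≠ 0 := by
    intro h
    have := C.i2
    rw [h] at this
    simp at this
  refine StabSet_ne_top (X := qv C 0 1 0) (a := C.i * 2) ⟨1, one_pow 2, Or.inr (Or.inl rfl)⟩
    (by simp [qv]) (by simp [qv]) ?_
  rintro Y ⟨e, he, rfl | rfl | rfl⟩ h <;> simp [qv, hi, C.h2] at h
  rw [h] at he
  exact C.h3 (by linear_combination he)

theorem ico_ne_top : StabSet (icoV C) ≠ ⊤ := by
  have hi : C.i ≠ 0 := by
    intro h
    have := C.i2
    rw [h] at this
    simp at this
  have hf := golden_ne C (Or.inl C.f2)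
  refine StabSet_ne_top (X := qv C 0 1 (1 * C.f)) (a := C.i * 2)
    ⟨1, 1, one_pow 2, one_pow 2, Or.inl rfl⟩ (by simp [qv]) ?_ ?_
  · intro h
    simp [qv] at h
    have h1 : C.f = -2 := by linear_combination -(1 + C.i * C.f) * h + C.f ^ 2 * C.i2 - C.f2
    exact hf (by rw [h1]; norm_num)
  rintro Y ⟨e, d, he, hd, rfl | rfl | rfl⟩ h <;> simp [qv, hi, C.h2] at h
  · exact hf (by linear_combination (-C.f ^ 2) * hd + (d * C.f + 2) * h)
  · rw [h] at he
    exact C.h3 (by linear_combination he)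

end InvLower

/-! ### The lower bound for `m_I` -/

section InvLower2
variable {p : ℕ} [hp : Fact p.Prime] [NeZero (2 : ZMod p)] (C : Consts (ZMod p))

theorem r_ne : C.r ≠ 0 ∧ C.r ^ 2 ≠ 1 := by
  have h := C.r2
  constructor
  · intro h0
    rw [h0] at h
    exact C.h2 (by linear_combination -h)
  · intro h1
    exact one_ne_zero (α := ZMod p) (by linear_combination h1 - h)

/-- No line is fixed by conjugates of both `q3` and `q4`: elements of order three are nonsplit
since `-3` is not a square, elements of order four are split. -/
theorem not_CI_Stab {X : Mat (ZMod p)} (h0 : X ≠ 0) (ht : X.trace = 0)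
    (h3 : CI (Stab X) (q3 C)) (h4 : CI (Stab X) (q4 C)) : False := by
  obtain ⟨hr0, -⟩ := r_ne C
  have n3 := q3_NC C
  have n4 := q4_NC C
  have c3 := stab_cases h0 ht h3
  have c4 := stab_cases h0 ht h4
  rw [q3_trace] at c3
  rw [q4_trace] at c4
  rcases c3 with h | h | ⟨b, hb, h⟩ | ⟨-, k, hk⟩
  · exact one_ne_zero h
  · exact absurd h (by rw [not_or]; exact n3)
  · rcases c4 with h' | h' | ⟨b', hb', h'⟩ | ⟨hd, -⟩
    · exact hr0 h'
    · exact absurd h' (by rw [not_or]; exact n4)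
    · apply C.n3 (C.i * C.r * b' / b)
      rw [div_pow, div_eq_iff (pow_ne_zero 2 hb)]
      linear_combination C.r ^ 2 * b' ^ 2 * C.i2 - 2 * b' ^ 2 * C.r2 + h - h'
    · rw [hd] at h
      exact mul_ne_zero (pow_ne_zero 2 hb) C.h3 (by linear_combination h)
  · exact C.n3 k (by rw [hk]; ring)

/-- No proper subgroup containing `-1` meets the classes of `q3`, `q4` and `q5`. -/
theorem eq_top_of_CI {H : Subgroup (SL (ZMod p))} (hneg : -1 ∈ H) (h3 : CI H (q3 C))
    (h4 : CI H (q4 C)) (h5 : CI H (q5 C)) : H = ⊤ := by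
  by_contra hH
  obtain ⟨hr0, hr1⟩ := r_ne C
  have hr := C.r2
  have hf := C.f2
  have h1 : (1 : ZMod p) ≠ 0 := one_ne_zero
  obtain ⟨x, hx, hxt, hxn⟩ := CI_iff h4
  obtain ⟨y, hy, hyt, hyn⟩ := CI_iff h5
  rw [q4_trace] at hxt
  rw [q5_trace] at hyt
  replace hxn := hxn (q4_NC C)
  replace hyn := hyn (q5_NC C)
  rcases dickson H hH hneg with ⟨X, hX0, hXt, hX⟩ | h | h | h
  · obtain ⟨a, ha⟩ := h3
    obtain ⟨b, hb⟩ := h4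
    exact not_CI_Stab C hX0 hXt ⟨a, hX ha⟩ ⟨b, hX hb⟩
  · have := h.2.1 x hx hxn
    rw [hxt] at this
    exact this.elim hr0 hr1
  · have := h.2.1 y hy hyn
    rw [hyt] at this
    rcases this with h | h | h
    · rw [h] at hf
      exact h1 (by linear_combination -hf)
    · have : C.f = 0 := by linear_combination h - hf
      rw [this] at hf
      exact h1 (by linear_combination -hf)
    · have : C.f = 1 := by linear_combination h - hf
      rw [this] at hf
      exact h1 (by linear_combination -hf)
  · have := h.2.1 x hx hxn
    rw [hxt] at this
    rcases this with h | h | h | h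
    · exact hr0 h
    · exact hr1 h
    · have : C.r = 1 := by linear_combination hr - h
      exact hr1 (by rw [this, one_pow])
    · have : C.r = -1 := by linear_combination h - hr
      exact hr1 (by rw [this]; ring)

/-- The elements whose images in `PSL₂` form a minimal invariable generating set; they have orders
three, four and five there. -/
def triple : Fin 3 → SL (ZMod p) := ![q3 C, q4 C, q5 C]

/-- The `j`-th subgroup meets the classes of the two elements of `triple` other than the `j`-th:
a Borel subgroup, a binary icosahedral and a binary octahedral group. -/
def tripleM : Fin 3 → Subgroup (SL (ZMod p)) :=
  ![Stab (nilp 1 0), StabSet (icoV C), StabSet (octV C)]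

theorem tripleM_neg (j : Fin 3) : -1 ∈ tripleM C j := by
  fin_cases j
  · exact neg_one_mem_Stab _
  · exact neg_one_mem_StabSet _
  · exact neg_one_mem_StabSet _

theorem nilp_tr : (nilp (1 : ZMod p) 0).trace = 0 := by simp [nilp, trace_fin_two]

theorem tripleM_ne (j : Fin 3) : tripleM C j ≠ ⊤ := by
  fin_cases j
  · refine Stab_ne_top (fun h => ?_) nilp_tr
    have h01 := congrFun (congrFun h 0) 1
    simp [nilp] at h01
  · exact ico_ne_top C
  · exact oct_ne_top C

theorem triple_CI (j l : Fin 3) (h : j ≠ l) : CI (tripleM C j) (triple C l) := by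
  have hd : (nilp (1 : ZMod p) 0).det = 0 := by simp [nilp, det_fin_two]
  fin_cases j <;> fin_cases l <;> first | exact absurd rfl h | skip
  · refine CI_nil (k := C.i * C.r) nilp_tr hd ?_
    show _ = (mat (q4 C)).trace ^ 2 - 4
    rw [q4_trace]
    linear_combination C.r ^ 2 * C.i2 - 2 * C.r2
  · refine CI_nil (k := C.z) nilp_tr hd ?_
    show _ = (mat (q5 C)).trace ^ 2 - 4
    rw [q5_trace]
    exact C.z2
  · exact CI.of_mem (q3_ico C)
  · exact CI.of_mem (q5_ico C)
  · exact CI.of_mem (q3_oct C)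
  · exact CI.of_mem (q4_oct C)

include C in
theorem minInv_ge : ∃ S : Set (P (ZMod p)), MinInvGen S ∧ S.ncard = 3 := by
  have hM : ∀ j, (tripleM C j).map (pj (ZMod p)) ≠ ⊤ := fun j =>
    map_ne_top (tripleM_neg C j) (tripleM_ne C j)
  have hs : ∀ j l, j ≠ l → CI ((tripleM C j).map (pj (ZMod p))) (pj (ZMod p) (triple C l)) :=
    fun j l h => CI_map (triple_CI C j l h)
  refine ⟨_, minInvGen_of _ _ hM hs ?_⟩
  intro K hK
  apply eq_top_of_comap
  have hneg : -1 ∈ K.comap (pj (ZMod p)) := neg_one_mem_comap K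
  have h3 : CI (K.comap (pj (ZMod p))) (q3 C) := CI_comap.2 (hK 0)
  have h4 : CI (K.comap (pj (ZMod p))) (q4 C) := CI_comap.2 (hK 1)
  have h5 : CI (K.comap (pj (ZMod p))) (q5 C) := CI_comap.2 (hK 2)
  exact eq_top_of_CI C hneg h3 h4 h5

end InvLower2

end PSLGen

/-- If `p` is a prime with `p ≡ 1 (mod 40)` and `p ≡ 2 (mod 3)`,
then `m_I(PSL(2,p)) = m(PSL(2,p)) = 3`. -/
theorem stmt12 (p : ℕ) (hp : p.Prime) (h40 : p % 40 = 1) (h3 : p % 3 = 2) :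
    mInv (Matrix.SpecialLinearGroup (Fin 2) (ZMod p) ⧸
        Subgroup.center (Matrix.SpecialLinearGroup (Fin 2) (ZMod p))) = 3 ∧
      mGen (Matrix.SpecialLinearGroup (Fin 2) (ZMod p) ⧸
        Subgroup.center (Matrix.SpecialLinearGroup (Fin 2) (ZMod p))) = 3 := by
  have : Fact p.Prime := ⟨hp⟩
  obtain ⟨C⟩ := PSLGen.exists_consts p h40 h3
  have : NeZero (2 : ZMod p) := ⟨C.h2⟩
  have h41 : 41 ≤ p := by
    have := hp.two_le
    omega
  constructor
  · refine IsGreatest.csSup_eq ⟨PSLGen.minInv_ge C, ?_⟩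
    rintro _ ⟨S, hS, rfl⟩
    exact PSLGen.minInv_le C hS
  · refine IsGreatest.csSup_eq ⟨PSLGen.minGen_ge C.i C.i2, ?_⟩
    rintro _ ⟨S, hS, rfl⟩
    exact PSLGen.minGen_le C h41 hS
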